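/- For every real x with −1/4 < x < 1/4: (1/32)·∑_{n=0}^∞ 2^{−4(n+x)} · (1/2)_{n+x}³ (1/4)_{n+x} (3/4)_{n+x} / (1)_{n+x}⁵ · (120(n+x)² + 34(n+x) + 3) = (1/π²)·(8 cos⁴πx − 12 cos²πx + 5)/(2 cos⁴πx − cos²πx) − 16^{−x} · (1/2)_x³ (1/4)_x (3/4)_x / (1)_x⁵ · (256x⁵/(1−2x)⁴) · ∑_{n=0}^∞ (2n+1) · [ (1/2+x)_n / (3/2−x)_n ]⁴, where both series converge. -/

import Mathlib

/-- The Pochhammer symbol for real index: `(a)_t = Γ(a+t)/Γ(a)`. -/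
noncomputable def pochG (a t : ℝ) : ℝ := Real.Gamma (a + t) / Real.Gamma a

/-- The Pochhammer symbol (rising factorial) `(a)_n = a (a+1) ⋯ (a+n-1)` for real `a`. -/
def pochR (a : ℝ) (n : ℕ) : ℝ := ∏ j ∈ Finset.range n, (a + j)

section

open Complex Filter Topology

/-- `g` is `o(exp (c |Im y|))` as `|Im y| → ∞`, uniformly in `Re y`. -/
def SmallGrowth (c : ℝ) (g : ℂ → ℂ) : Prop :=
  ∀ ε > 0, ∃ T : ℝ, ∀ y : ℂ, T ≤ |y.im| → ‖g y‖ ≤ ε * Real.exp (c * |y.im|)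

theorem SmallGrowth.add {c : ℝ} {f g : ℂ → ℂ} (hf : SmallGrowth c f) (hg : SmallGrowth c g) :
    SmallGrowth c (fun y => f y + g y) := by
  intro ε hε
  obtain ⟨T₁, h₁⟩ := hf (ε / 2) (by positivity)
  obtain ⟨T₂, h₂⟩ := hg (ε / 2) (by positivity)
  refine ⟨max T₁ T₂, fun y hy => (norm_add_le _ _).trans ?_⟩
  linarith [h₁ y ((le_max_left _ _).trans hy), h₂ y ((le_max_right _ _).trans hy)]

theorem SmallGrowth.const_mul {c : ℝ} {f : ℂ → ℂ} (hf : SmallGrowth c f) (a : ℂ) :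
    SmallGrowth c (fun y => a * f y) := by
  intro ε hε
  obtain ⟨T, h⟩ := hf (ε / (‖a‖ + 1)) (by positivity)
  refine ⟨T, fun y hy => ?_⟩
  rw [norm_mul]
  calc ‖a‖ * ‖f y‖ ≤ (‖a‖ + 1) * (ε / (‖a‖ + 1) * Real.exp (c * |y.im|)) := by
        gcongr
        · linarith
        · exact h y hy
    _ = _ := by field_simp

theorem SmallGrowth.sub {c : ℝ} {f g : ℂ → ℂ} (hf : SmallGrowth c f) (hg : SmallGrowth c g) :
    SmallGrowth c (fun y => f y - g y) := by
  simpa [sub_eq_add_neg] using hf.add (hg.const_mul (-1))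

theorem SmallGrowth.comp_neg {c : ℝ} {f : ℂ → ℂ} (hf : SmallGrowth c f) :
    SmallGrowth c (fun y => f (-y)) := by
  intro ε hε
  obtain ⟨T, h⟩ := hf ε hε
  exact ⟨T, fun y hy => by simpa using h (-y) (by simpa using hy)⟩

theorem SmallGrowth.comp_add_real {c : ℝ} {f : ℂ → ℂ} (hf : SmallGrowth c f) (r : ℝ) :
    SmallGrowth c (fun y => f (y + r)) := by
  intro ε hε
  obtain ⟨T, h⟩ := hf ε hε
  exact ⟨T, fun y hy => by simpa using h (y + r) (by simpa using hy)⟩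

theorem SmallGrowth.of_const {c : ℝ} (hc : 0 < c) (a : ℂ) : SmallGrowth c (fun _ => a) := by
  intro ε hε
  refine ⟨‖a‖ / (ε * c), fun y hy => ?_⟩
  have h1 : ‖a‖ ≤ ε * (c * |y.im|) := by
    rw [div_le_iff₀ (by positivity)] at hy
    linarith
  have h2 := Real.add_one_le_exp (c * |y.im|)
  calc ‖a‖ ≤ ε * (c * |y.im|) := h1
    _ ≤ _ := by gcongr; linarith

theorem norm_add_intCast_of_norm_add_one {g : ℂ → ℂ} (hg : ∀ y, ‖g (y + 1)‖ = ‖g y‖) (y : ℂ) (m : ℤ) :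
    ‖g (y + m)‖ = ‖g y‖ := by
  have h : Function.Periodic (fun y => ‖g y‖) (1 : ℂ) := hg
  simpa using h.int_mul m y

theorem eq_zero_of_norm_periodic {g : ℂ → ℂ} (hd : Differentiable ℂ g)
    (hp : ∀ y, ‖g (y + 1)‖ = ‖g y‖) (hs : SmallGrowth 0 g) (y : ℂ) : g y = 0 := by
  obtain ⟨T, hT⟩ := hs 1 one_pos
  have hK : IsCompact (Set.Icc (0 : ℝ) 1 ×ℂ Set.Icc (-T) T) := isCompact_Icc.reProdIm isCompact_Icc
  obtain ⟨C, hC⟩ := hK.exists_bound_of_continuousOn hd.continuous.continuousOn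
  have hb : Bornology.IsBounded (Set.range g) := by
    rw [isBounded_iff_forall_norm_le]
    refine ⟨max C 1, ?_⟩
    rintro _ ⟨z, rfl⟩
    by_cases hz : T ≤ |z.im|
    · exact le_max_of_le_right (by simpa using hT z hz)
    · refine le_max_of_le_left ?_
      rw [← norm_add_intCast_of_norm_add_one hp z (-⌊z.re⌋)]
      refine hC _ ?_
      rw [mem_reProdIm]
      have := abs_lt.1 (not_le.1 hz)
      simp only [Set.mem_Icc, add_re, add_im, intCast_re, intCast_im]
      push_cast
      refine ⟨⟨?_, ?_⟩, ?_, ?_⟩ <;> linarith [Int.floor_le z.re, Int.lt_floor_add_one z.re]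
  by_contra hne
  obtain ⟨T', hT'⟩ := hs (‖g y‖ / 2) (by positivity)
  have h1 := hT' ((|T'| : ℝ) * I) (by simp [le_abs_self])
  rw [hd.apply_eq_apply_of_bounded hb _ y] at h1
  have : 0 < ‖g y‖ := norm_pos_iff.2 hne
  simp at h1
  linarith

/-- The quotient of `g` by `sin (π y)`, with removable singularities filled in. -/
noncomputable def sinDiv (g : ℂ → ℂ) (y : ℂ) : ℂ :=
  if sin (Real.pi * y) = 0 then deriv g y / (Real.pi * cos (Real.pi * y)) else g y / sin (Real.pi * y)

theorem sin_pi_mul_eq_zero_iff (y : ℂ) : sin (Real.pi * y) = 0 ↔ ∃ m : ℤ, y = m := by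
  rw [Complex.sin_eq_zero_iff]
  have hpi : (Real.pi : ℂ) ≠ 0 := by exact_mod_cast Real.pi_ne_zero
  constructor
  · rintro ⟨m, hm⟩
    exact ⟨m, mul_left_cancel₀ hpi (by rw [hm, mul_comm])⟩
  · rintro ⟨m, rfl⟩
    exact ⟨m, mul_comm _ _⟩

theorem hasDerivAt_sin_pi_mul (y : ℂ) :
    HasDerivAt (fun z : ℂ => sin (Real.pi * z)) (Real.pi * cos (Real.pi * y)) y := by
  have := ((hasDerivAt_id y).const_mul (Real.pi : ℂ)).csin
  simpa [mul_comm] using this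

theorem sin_mul_sinDiv {g : ℂ → ℂ} (hz : ∀ m : ℤ, g m = 0) (y : ℂ) :
    sin (Real.pi * y) * sinDiv g y = g y := by
  unfold sinDiv
  split_ifs with h
  · obtain ⟨m, rfl⟩ := (sin_pi_mul_eq_zero_iff y).1 h
    rw [h, zero_mul, hz]
  · field_simp

theorem cos_ne_zero_of_sin_eq_zero {z : ℂ} (h : sin z = 0) : cos z ≠ 0 := by
  intro h'
  have := sin_sq_add_cos_sq z
  simp [h, h'] at this

theorem differentiable_sinDiv {g : ℂ → ℂ} (hd : Differentiable ℂ g) (hz : ∀ m : ℤ, g m = 0) :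
    Differentiable ℂ (sinDiv g) := by
  have hpi : (Real.pi : ℂ) ≠ 0 := by exact_mod_cast Real.pi_ne_zero
  have hs : Differentiable ℂ (fun z : ℂ => sin (Real.pi * z)) := fun z =>
    (hasDerivAt_sin_pi_mul z).differentiableAt
  intro c
  by_cases hc : sin (Real.pi * c) = 0
  · have hder : deriv (fun z : ℂ => sin (Real.pi * z)) c ≠ 0 := by
      rw [(hasDerivAt_sin_pi_mul c).deriv]
      exact mul_ne_zero hpi (cos_ne_zero_of_sin_eq_zero hc)
    have hgc : g c = 0 := by rw [← sin_mul_sinDiv hz, hc, zero_mul]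
    have h1 : DifferentiableAt ℂ (dslope g c) c :=
      ((differentiableOn_dslope (s := Set.univ) univ_mem).2 hd.differentiableOn).differentiableAt
        univ_mem
    have h2 : DifferentiableAt ℂ (dslope (fun z : ℂ => sin (Real.pi * z)) c) c :=
      ((differentiableOn_dslope (s := Set.univ) univ_mem).2 hs.differentiableOn).differentiableAt
        univ_mem
    have h3 := h1.div h2 (by rwa [dslope_same])
    refine h3.congr_of_eventuallyEq ?_
    have h4 : ∀ᶠ z in 𝓝 c, dslope (fun z : ℂ => sin (Real.pi * z)) c z ≠ 0 :=
      h2.continuousAt.eventually_ne (by rwa [dslope_same])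
    filter_upwards [h4] with z hz4
    by_cases hzc : z = c
    · subst hzc
      simp only [Pi.div_apply, dslope_same, sinDiv, hc, if_true]
      rw [(hasDerivAt_sin_pi_mul z).deriv]
    · have e1 : g z = (z - c) * dslope g c z := by
        have := sub_smul_dslope g c z
        rw [hgc, sub_zero, smul_eq_mul] at this
        exact this.symm
      have e2 : sin (Real.pi * z) = (z - c) * dslope (fun z : ℂ => sin (Real.pi * z)) c z := by
        have := sub_smul_dslope (fun z : ℂ => sin (Real.pi * z)) c z
        rw [hc, sub_zero, smul_eq_mul] at this
        exact this.symm
      have hzc' : z - c ≠ 0 := sub_ne_zero.2 hzc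
      have e3 : sin (Real.pi * z) ≠ 0 := by rw [e2]; exact mul_ne_zero hzc' hz4
      simp only [sinDiv, e3, if_false, Pi.div_apply]
      rw [e1, e2]
      field_simp
  · have h1 := (hd c).div (hs c) hc
    refine h1.congr_of_eventuallyEq ?_
    filter_upwards [(hs c).continuousAt.eventually_ne hc] with z hz'
    simp [sinDiv, hz']

theorem sin_pi_mul_add_one (y : ℂ) : sin (Real.pi * (y + 1)) = -sin (Real.pi * y) := by
  rw [mul_add, mul_one, sin_add_pi]

theorem cos_pi_mul_add_one (y : ℂ) : cos (Real.pi * (y + 1)) = -cos (Real.pi * y) := by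
  rw [mul_add, mul_one, cos_add_pi]

theorem sinDiv_add_one {g : ℂ → ℂ} {ε : ℂ} (hp : ∀ y, g (y + 1) = ε * g y) (y : ℂ) :
    sinDiv g (y + 1) = -ε * sinDiv g y := by
  have hder : deriv g (y + 1) = ε * deriv g y := by
    have h1 : (fun z => g (z + 1)) = fun z => ε * g z := funext hp
    rw [← deriv_comp_add_const, h1, deriv_const_mul_field]
  unfold sinDiv
  rw [sin_pi_mul_add_one, cos_pi_mul_add_one, hder, hp]
  simp only [neg_eq_zero]
  split_ifs <;> simp [div_neg, neg_mul, mul_neg, mul_div_assoc]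

theorem sinh_le_norm_sin (z : ℂ) : Real.sinh |z.im| ≤ ‖sin z‖ := by
  have h1 : ‖sin z‖ ^ 2 = Real.sin z.re ^ 2 + Real.sinh z.im ^ 2 := by
    rw [← Complex.normSq_eq_norm_sq, Complex.normSq_apply]
    rw [show sin z = (Real.sin z.re * Real.cosh z.im : ℝ) + (Real.cos z.re * Real.sinh z.im : ℝ) * I by
      push_cast; exact Complex.sin_eq z]
    simp only [add_re, ofReal_re, mul_re, I_re, mul_zero, ofReal_im, I_im, mul_one, sub_self,
      add_zero, add_im, mul_im, zero_add]
    nlinarith [Real.cosh_sq z.im, Real.sin_sq_add_cos_sq z.re]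
  have h2 : Real.sinh |z.im| ^ 2 = Real.sinh z.im ^ 2 := by
    rcases abs_cases z.im with ⟨h, _⟩ | ⟨h, _⟩ <;> simp [h]
  refine (pow_le_pow_iff_left₀ (Real.sinh_nonneg_iff.2 (abs_nonneg _)) (norm_nonneg _) two_ne_zero).1 ?_
  rw [h1, h2]
  nlinarith [sq_nonneg (Real.sin z.re)]

theorem exp_div_four_le_sinh {t : ℝ} (ht : 1 ≤ t) : Real.exp t / 4 ≤ Real.sinh t := by
  rw [Real.sinh_eq]
  have h1 := Real.add_one_le_exp t
  have h2 : Real.exp (-t) ≤ 1 := Real.exp_le_one_iff.2 (by linarith)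
  linarith

theorem exp_div_four_le_norm_sin_pi_mul {y : ℂ} (hy : 1 ≤ |y.im|) :
    Real.exp (Real.pi * |y.im|) / 4 ≤ ‖sin (Real.pi * y)‖ := by
  have h := sinh_le_norm_sin (Real.pi * y)
  rw [im_ofReal_mul, abs_mul, abs_of_pos Real.pi_pos] at h
  refine (exp_div_four_le_sinh ?_).trans h
  nlinarith [Real.pi_gt_three]

theorem SmallGrowth.sinDiv {c : ℝ} {g : ℂ → ℂ} (hs : SmallGrowth c g) :
    SmallGrowth (c - Real.pi) (sinDiv g) := by
  intro ε hε
  obtain ⟨T, hT⟩ := hs (ε / 4) (by positivity)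
  refine ⟨max T 1, fun y hy => ?_⟩
  have h1 := hT y ((le_max_left _ _).trans hy)
  have h2 := exp_div_four_le_norm_sin_pi_mul ((le_max_right _ _).trans hy)
  have h3 : 0 < ‖sin (Real.pi * y)‖ := lt_of_lt_of_le (by positivity) h2
  have h4 : sin (Real.pi * y) ≠ 0 := norm_pos_iff.1 h3
  simp only [_root_.sinDiv, h4, if_false, norm_div]
  rw [div_le_iff₀ h3]
  calc ‖g y‖ ≤ ε / 4 * Real.exp (c * |y.im|) := h1
    _ = ε * Real.exp ((c - Real.pi) * |y.im|) * (Real.exp (Real.pi * |y.im|) / 4) := by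
        rw [sub_mul, Real.exp_sub]; field_simp
    _ ≤ _ := by gcongr

theorem apply_add_intCast {g : ℂ → ℂ} (hp : ∀ y, g (y + 1) = g y) (y : ℂ) (m : ℤ) :
    g (y + m) = g y := by
  have h : Function.Periodic g (1 : ℂ) := hp
  simpa using h.int_mul m y

theorem apply_intCast_eq_zero {g : ℂ → ℂ} (hp : ∀ y, ‖g (y + 1)‖ = ‖g y‖) (h0 : g 0 = 0) (m : ℤ) :
    g m = 0 := by
  have := norm_add_intCast_of_norm_add_one hp 0 m
  rw [zero_add, h0, norm_zero, norm_eq_zero] at this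
  exact this

/-- An odd entire function of period `1` is divisible by `sin (π y) cos (π y)`. -/
theorem exists_eq_sin_mul_cos_mul {c : ℝ} {g : ℂ → ℂ} (hd : Differentiable ℂ g)
    (hp : ∀ y, g (y + 1) = g y) (ho : ∀ y, g (-y) = -g y) (hs : SmallGrowth c g) :
    ∃ q : ℂ → ℂ, Differentiable ℂ q ∧ (∀ y, q (y + 1) = q y) ∧ SmallGrowth (c - 2 * Real.pi) q ∧
      ∀ y, g y = sin (Real.pi * y) * cos (Real.pi * y) * q y := by
  have hz : ∀ m : ℤ, g m = 0 := by
    refine apply_intCast_eq_zero (fun y => by rw [hp]) ?_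
    have := ho 0
    rw [neg_zero] at this
    exact self_eq_neg.1 this
  have hd1 := differentiable_sinDiv hd hz
  have hp1 : ∀ y, sinDiv g (y + 1) = -sinDiv g y := fun y => by
    simpa using sinDiv_add_one (ε := 1) (by simpa using hp) y
  set g₁ : ℂ → ℂ := fun y => sinDiv g (y + ((1 / 2 : ℝ) : ℂ)) with hg₁
  have hp₁ : ∀ y, g₁ (y + 1) = -1 * g₁ y := fun y => by
    simp only [hg₁]
    rw [add_right_comm, hp1, neg_one_mul]
  have hz₁ : ∀ m : ℤ, g₁ m = 0 := by
    refine apply_intCast_eq_zero (fun y => by rw [hp₁, neg_one_mul, norm_neg]) ?_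
    have h1 : g ((1 / 2 : ℝ) : ℂ) = 0 := by
      have := ho ((1 / 2 : ℝ) : ℂ)
      rw [← hp, show -(((1 / 2 : ℝ)) : ℂ) + 1 = ((1 / 2 : ℝ) : ℂ) by push_cast; ring] at this
      exact self_eq_neg.1 this
    have h2 := sin_mul_sinDiv hz ((1 / 2 : ℝ) : ℂ)
    rw [h1] at h2
    have h3 : sin (Real.pi * ((1 / 2 : ℝ) : ℂ)) = 1 := by
      rw [show (Real.pi : ℂ) * ((1 / 2 : ℝ) : ℂ) = Real.pi / 2 by push_cast; ring, sin_pi_div_two]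
    rw [h3, one_mul] at h2
    simp only [hg₁, zero_add]
    exact h2
  have hd₁ : Differentiable ℂ g₁ := hd1.comp (differentiable_id.add_const _)
  have hs₁ : SmallGrowth (c - Real.pi) g₁ := hs.sinDiv.comp_add_real (1 / 2)
  refine ⟨fun y => -1 * sinDiv g₁ (y + ((-1 / 2 : ℝ) : ℂ)), ?_, fun y => ?_, ?_, fun y => ?_⟩
  · exact ((differentiable_sinDiv hd₁ hz₁).comp (differentiable_id.add_const _)).const_mul _
  · simp only
    rw [add_right_comm, sinDiv_add_one hp₁]
    simp
  · have := (hs₁.sinDiv.comp_add_real (-1 / 2)).const_mul (-1)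
    rwa [show c - Real.pi - Real.pi = c - 2 * Real.pi by ring] at this
  · have h1 := sin_mul_sinDiv hz₁ (y + ((-1 / 2 : ℝ) : ℂ))
    rw [show Real.pi * (y + ((-1 / 2 : ℝ) : ℂ)) = Real.pi * y - Real.pi / 2 by push_cast; ring,
      sin_sub_pi_div_two] at h1
    have h2 : g₁ (y + ((-1 / 2 : ℝ) : ℂ)) = sinDiv g y := by
      simp only [hg₁]
      congr 1
      push_cast
      ring
    rw [h2] at h1
    rw [← sin_mul_sinDiv hz y, ← h1]
    ring

/-- An odd entire function of period `1` that is `o(exp (2 π |Im y|))` vanishes. -/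
theorem odd_periodic_eq_zero {g : ℂ → ℂ} (hd : Differentiable ℂ g) (hp : ∀ y, g (y + 1) = g y)
    (ho : ∀ y, g (-y) = -g y) (hs : SmallGrowth (2 * Real.pi) g) (y : ℂ) : g y = 0 := by
  obtain ⟨q, hq, hqp, hqs, hgq⟩ := exists_eq_sin_mul_cos_mul hd hp ho hs
  rw [hgq, eq_zero_of_norm_periodic hq (fun y => by rw [hqp]) (by simpa using hqs) y, mul_zero]

/-- An entire function of period `1` that is `o(exp (2 π |Im y|))` is constant. -/
theorem periodic_eq_const {g : ℂ → ℂ} (hd : Differentiable ℂ g) (hp : ∀ y, g (y + 1) = g y)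
    (hs : SmallGrowth (2 * Real.pi) g) (y : ℂ) : g y = g 0 := by
  have hpn : ∀ y, g (-(y + 1)) = g (-y) := fun y => by
    rw [← hp (-(y + 1))]; congr 1; ring
  have hdn : Differentiable ℂ (fun y => g (-y)) := hd.comp differentiable_neg
  have hodd : g y - g (-y) = 0 := by
    refine odd_periodic_eq_zero (g := fun y => g y - g (-y)) (hd.sub hdn) (fun y => ?_) (fun y => ?_)
      (hs.sub hs.comp_neg) y
    · simp only [hp, hpn]
    · simp
  set e : ℂ → ℂ := fun y => g y + g (-y) - 2 * g 0 with he
  have hde : Differentiable ℂ e := (hd.add hdn).sub_const _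
  have hpe : ∀ y, e (y + 1) = e y := fun y => by simp only [he, hp, hpn]
  have hze : ∀ m : ℤ, e m = 0 :=
    apply_intCast_eq_zero (fun y => by rw [hpe]) (by simp [he]; ring)
  have hse : SmallGrowth (2 * Real.pi) e :=
    (hs.add hs.comp_neg).sub (SmallGrowth.of_const Real.two_pi_pos _)
  have hp1 : ∀ y, sinDiv e (y + 1) = -1 * sinDiv e y := fun y =>
    sinDiv_add_one (ε := 1) (by simpa using hpe) y
  have hz1 : ∀ m : ℤ, sinDiv e m = 0 := by
    refine apply_intCast_eq_zero (fun y => by rw [hp1, neg_one_mul, norm_neg]) ?_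
    have h0 : deriv e 0 = 0 := by
      have h1 : HasDerivAt (fun y => g (-y)) (-deriv g 0) 0 := by
        have h := (hd (-0)).hasDerivAt.comp_of_eq (0 : ℂ) (hasDerivAt_neg (0 : ℂ)) rfl
        simpa [Function.comp_def] using h
      have := (((hd 0).hasDerivAt.add h1).sub_const (2 * g 0)).deriv
      simpa [he, Pi.add_def] using this
    simp [sinDiv, h0]
  have key : ∀ y, sinDiv (sinDiv e) y = 0 := by
    refine eq_zero_of_norm_periodic (differentiable_sinDiv (differentiable_sinDiv hde hze) hz1)
      (fun y => ?_) ?_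
    · rw [sinDiv_add_one hp1]; simp
    · have := hse.sinDiv.sinDiv
      rwa [show 2 * Real.pi - Real.pi - Real.pi = 0 by ring] at this
  have h1 : e y = 0 := by rw [← sin_mul_sinDiv hze, ← sin_mul_sinDiv hz1, key]; simp
  simp only [he] at h1
  linear_combination (h1 + hodd) / 2

/-- A bound on one period strip gives growth in the whole plane. -/
theorem SmallGrowth.of_strip {c : ℝ} {g : ℂ → ℂ} (σ : ℝ) (hp : ∀ y, ‖g (y + 1)‖ = ‖g y‖)
    (h : ∀ ε > 0, ∃ T : ℝ, ∀ y : ℂ, σ ≤ y.re → y.re ≤ σ + 1 → T ≤ |y.im| →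
      ‖g y‖ ≤ ε * Real.exp (c * |y.im|)) : SmallGrowth c g := by
  intro ε hε
  obtain ⟨T, hT⟩ := h ε hε
  refine ⟨T, fun y hy => ?_⟩
  rw [← norm_add_intCast_of_norm_add_one hp y (-⌊y.re - σ⌋)]
  have := hT (y + ((-⌊y.re - σ⌋ : ℤ) : ℂ))
  simp only [add_re, add_im, intCast_re, intCast_im, add_zero] at this
  push_cast at this ⊢
  refine this ?_ ?_ hy <;> linarith [Int.floor_le (y.re - σ), Int.lt_floor_add_one (y.re - σ)]

/-- A function holomorphic on a vertical strip of width two and (anti)periodic there extends to an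
entire (anti)periodic function. -/
theorem exists_entire_extension {g : ℂ → ℂ} {σ : ℝ} {ε : ℂ} (hε : ε * ε = 1)
    (hd : DifferentiableOn ℂ g {y | σ < y.re ∧ y.re < σ + 2})
    (hp : ∀ y : ℂ, σ < y.re → y.re < σ + 1 → g (y + 1) = ε * g y) :
    ∃ f : ℂ → ℂ, Differentiable ℂ f ∧ (∀ y, f (y + 1) = ε * f y) ∧
      ∀ y : ℂ, σ < y.re → y.re < σ + 2 → f y = g y := by
  have hε0 : ε ≠ 0 := by rintro rfl; simp at hε
  have hεi : ε⁻¹ = ε := by rw [inv_eq_iff_eq_inv]; exact eq_inv_of_mul_eq_one_left hε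
  obtain ⟨N, hN⟩ : ∃ N : ℂ → ℤ, ∀ y : ℂ, σ < (y + N y).re ∧ (y + N y).re < σ + 2 := by
    refine ⟨fun y => ⌊σ - y.re⌋ + 1, fun y => ?_⟩
    simp only [add_re, intCast_re]
    push_cast
    constructor <;> linarith [Int.floor_le (σ - y.re), Int.lt_floor_add_one (σ - y.re)]
  have aux : ∀ (y : ℂ) (n m : ℤ), n ≤ m → σ < (y + n).re → (y + m).re < σ + 2 →
      ε ^ n * g (y + n) = ε ^ m * g (y + m) := by
    intro y n m hnm hn hm
    simp only [add_re, intCast_re] at hn hm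
    have h1 : m < n + 2 := by
      have : (m : ℝ) < ((n + 2 : ℤ) : ℝ) := by push_cast; linarith
      exact_mod_cast this
    obtain rfl | rfl : m = n ∨ m = n + 1 := by omega
    · rfl
    · push_cast at hm
      rw [Int.cast_add, Int.cast_one, ← add_assoc, hp (y + n) (by simpa using hn)
        (by simp only [add_re, intCast_re]; linarith), zpow_add_one₀ hε0]
      linear_combination (-(ε ^ n * g (y + n))) * hε
  have hf : ∀ (y : ℂ) (n : ℤ), σ < (y + n).re → (y + n).re < σ + 2 →
      ε ^ N y * g (y + N y) = ε ^ n * g (y + n) := by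
    intro y n hn hn'
    rcases le_total n (N y) with h | h
    · exact (aux y n _ h hn (hN y).2).symm
    · exact aux y _ n h (hN y).1 hn'
  refine ⟨fun y => ε ^ N y * g (y + N y), fun c => ?_, fun y => ?_, fun y hy hy' => ?_⟩
  · have hopen : IsOpen {y : ℂ | σ < y.re ∧ y.re < σ + 2} :=
      (isOpen_lt continuous_const continuous_re).inter (isOpen_lt continuous_re continuous_const)
    have h1 : DifferentiableAt ℂ (fun y => ε ^ N c * g (y + N c)) c := by
      have h := (hd.differentiableAt (hopen.mem_nhds (hN c)))
      exact (h.comp c (differentiableAt_id.add_const _)).const_mul _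
    refine h1.congr_of_eventuallyEq ?_
    have h2 : ∀ᶠ y : ℂ in 𝓝 c, y + N c ∈ {y : ℂ | σ < y.re ∧ y.re < σ + 2} := by
      refine ContinuousAt.eventually_mem (f := fun y : ℂ => y + N c) ?_ (hopen.mem_nhds (hN c))
      fun_prop
    filter_upwards [h2] with y hy
    exact hf y _ hy.1 hy.2
  · have h1 := hN (y + 1)
    have h2 : y + 1 + N (y + 1) = y + (N (y + 1) + 1 : ℤ) := by push_cast; ring
    rw [h2] at h1
    simp only
    rw [h2, hf y _ h1.1 h1.2, zpow_add_one₀ hε0]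
    linear_combination (-(ε ^ N (y + 1) * g (y + (N (y + 1) + 1 : ℤ)))) * hε
  · simpa using hf y 0 (by simpa using hy) (by simpa using hy')

theorem prod_one_add_sq_div_sq_le_exp {z : ℝ} (hz : 0 ≤ z) (n : ℕ) :
    ∏ i ∈ Finset.range n, (1 + z ^ 2 / ((i : ℝ) + 1) ^ 2) ≤ Real.exp (Real.pi * z) := by
  rcases hz.eq_or_lt with rfl | hz
  · simp
  have hmono : Monotone fun n : ℕ => ∏ i ∈ Finset.range n, (1 + z ^ 2 / ((i : ℝ) + 1) ^ 2) := by
    refine monotone_nat_of_le_succ fun n => ?_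
    rw [Finset.prod_range_succ]
    refine le_mul_of_one_le_right (Finset.prod_nonneg fun i _ => by positivity) ?_
    have : 0 ≤ z ^ 2 / ((n : ℝ) + 1) ^ 2 := by positivity
    linarith
  have hlim := (Complex.tendsto_euler_sin_prod (z * I)).norm
  have hsinh : ‖sin (Real.pi * (z * I))‖ = Real.sinh (Real.pi * z) := by
    rw [← mul_assoc, sin_mul_I, norm_mul, norm_I, mul_one, ← ofReal_mul, ← ofReal_sinh, norm_real,
      Real.norm_of_nonneg (Real.sinh_nonneg_iff.2 (by positivity))]
  have hterm : ∀ n : ℕ, ‖(Real.pi : ℂ) * (z * I) *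
      ∏ j ∈ Finset.range n, (1 - (z * I : ℂ) ^ 2 / ((j : ℂ) + 1) ^ 2)‖ =
      Real.pi * z * ∏ i ∈ Finset.range n, (1 + z ^ 2 / ((i : ℝ) + 1) ^ 2) := by
    intro n
    have : ∏ j ∈ Finset.range n, (1 - (z * I : ℂ) ^ 2 / ((j : ℂ) + 1) ^ 2) =
        ((∏ i ∈ Finset.range n, (1 + z ^ 2 / ((i : ℝ) + 1) ^ 2) : ℝ) : ℂ) := by
      push_cast
      refine Finset.prod_congr rfl fun i _ => ?_
      rw [mul_pow, I_sq]
      ring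
    rw [this, norm_mul, norm_mul, norm_mul, norm_I, mul_one, norm_real, norm_real, norm_real,
      Real.norm_of_nonneg Real.pi_pos.le, Real.norm_of_nonneg hz.le,
      Real.norm_of_nonneg (Finset.prod_nonneg fun i _ => by positivity)]
  simp only [hterm, hsinh] at hlim
  have hle := (hmono.const_mul (a := Real.pi * z) (by positivity)).ge_of_tendsto hlim n
  have hw : 0 < Real.pi * z := by positivity
  have h1 : Real.sinh (Real.pi * z) ≤ Real.pi * z * Real.exp (Real.pi * z) := by
    rw [Real.sinh_eq]
    have h2 := Real.add_one_le_exp (-(2 * (Real.pi * z)))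
    have h3 : Real.exp (-(Real.pi * z)) = Real.exp (Real.pi * z) * Real.exp (-(2 * (Real.pi * z))) := by
      rw [← Real.exp_add]; congr 1; ring
    rw [h3]
    nlinarith [Real.exp_pos (Real.pi * z)]
  exact le_of_mul_le_mul_left (hle.trans h1) hw

/-- A Beta integral bound for a quotient of Gamma values. -/
theorem norm_Gamma_div_Gamma_add_le {w : ℂ} {s : ℝ} (hw : 0 < w.re) (hs : 1 ≤ s) :
    ‖Complex.Gamma w / Complex.Gamma (w + s)‖ ≤ 1 / (Real.Gamma s * w.re) := by
  have hΓs : 0 < Real.Gamma s := Real.Gamma_pos_of_pos (by linarith)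
  have hΓ : Complex.Gamma (w + s) ≠ 0 :=
    Complex.Gamma_ne_zero_of_re_pos (by simp; linarith)
  have h1 := Complex.Gamma_mul_Gamma_eq_betaIntegral hw (t := (s : ℂ)) (by simp; linarith)
  have h2 : ‖Complex.betaIntegral w s‖ ≤ 1 / w.re := by
    have h3 : ∫ t in (0 : ℝ)..1, t ^ (w.re - 1) = 1 / w.re := by
      rw [integral_rpow (Or.inl (by linarith))]
      simp [hw.ne']
    rw [← h3]
    unfold Complex.betaIntegral
    refine intervalIntegral.norm_integral_le_of_norm_le zero_le_one ?_
      (intervalIntegral.intervalIntegrable_rpow' (by linarith))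
    refine Eventually.of_forall fun t ht => ?_
    rw [norm_mul, Complex.norm_cpow_eq_rpow_re_of_pos ht.1]
    have h4 : ‖(1 - (t : ℂ)) ^ ((s : ℂ) - 1)‖ ≤ 1 := by
      have h5 : (1 - (t : ℂ)) ^ ((s : ℂ) - 1) = (((1 - t) ^ (s - 1) : ℝ) : ℂ) := by
        rw [ofReal_cpow (by linarith [ht.2])]
        push_cast
        rfl
      rw [h5, norm_real, Real.norm_of_nonneg (Real.rpow_nonneg (by linarith [ht.2]) _)]
      exact Real.rpow_le_one (by linarith [ht.2]) (by linarith [ht.1]) (by linarith)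
    calc _ ≤ t ^ (w - 1).re * 1 := by
          gcongr
          exact Real.rpow_nonneg ht.1.le _
      _ = _ := by simp
  rw [Complex.Gamma_ofReal] at h1
  have h6 : Complex.Gamma w / Complex.Gamma (w + s) =
      Complex.betaIntegral w s / (Real.Gamma s : ℂ) := by
    have : (Real.Gamma s : ℂ) ≠ 0 := by exact_mod_cast hΓs.ne'
    field_simp
    linear_combination h1
  rw [h6, norm_div, norm_real, Real.norm_of_nonneg hΓs.le, one_div, mul_inv, div_eq_inv_mul]
  gcongr
  simpa using h2

theorem exists_one_add_pow_le_exp (k : ℕ) {ε : ℝ} (hε : 0 < ε) :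
    ∃ C > 0, ∀ s : ℝ, 0 ≤ s → (1 + s) ^ k ≤ C * Real.exp (ε * s) := by
  set δ := ε / (k + 1) with hδ
  have hδ0 : 0 < δ := by positivity
  refine ⟨(1 + 1 / δ) ^ k, by positivity, fun s hs => ?_⟩
  have h1 : 1 + s ≤ (1 + 1 / δ) * Real.exp (δ * s) := by
    have := Real.add_one_le_exp (δ * s)
    calc 1 + s ≤ (1 + 1 / δ) * (δ * s + 1) := by
          have : (1 + 1 / δ) * (δ * s + 1) = 1 + s + δ * s + 1 / δ := by field_simp; ring
          rw [this]
          have : 0 ≤ δ * s + 1 / δ := by positivity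
          linarith
      _ ≤ _ := by gcongr
  calc (1 + s) ^ k ≤ ((1 + 1 / δ) * Real.exp (δ * s)) ^ k := by gcongr
    _ = (1 + 1 / δ) ^ k * Real.exp (k * (δ * s)) := by rw [mul_pow, ← Real.exp_nat_mul]
    _ ≤ _ := by
      have h2 : (k : ℝ) * δ ≤ ε := by
        rw [hδ, mul_div_assoc', div_le_iff₀ (by positivity)]
        nlinarith
      rw [← mul_assoc]
      gcongr

theorem norm_sin_le_exp (z : ℂ) : ‖sin z‖ ≤ Real.exp |z.im| := by
  have h : ‖sin z‖ ≤ (Real.exp (z.im) + Real.exp (-z.im)) / 2 := by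
    rw [Complex.sin, norm_div, norm_mul, norm_I, mul_one]
    have : ‖(2 : ℂ)‖ = 2 := by simp
    rw [this]
    gcongr
    refine (norm_sub_le _ _).trans ?_
    simp [Complex.norm_exp]
  refine h.trans ?_
  have h1 : Real.exp z.im ≤ Real.exp |z.im| := Real.exp_le_exp.2 (le_abs_self _)
  have h2 : Real.exp (-z.im) ≤ Real.exp |z.im| := Real.exp_le_exp.2 (neg_le_abs _)
  linarith

theorem exists_le_mul_pow {u : ℕ → ℝ} (hu : ∀ n, 0 ≤ u n) {q : ℝ} (hq : 0 < q)
    (h : ∀ᶠ n in atTop, u (n + 1) ≤ q * u n) : ∃ C > 0, ∀ n, u n ≤ C * q ^ n := by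
  obtain ⟨N, hN⟩ := eventually_atTop.1 h
  have hS : 0 ≤ ∑ i ∈ Finset.range (N + 1), u i / q ^ i :=
    Finset.sum_nonneg fun i _ => div_nonneg (hu i) (by positivity)
  refine ⟨∑ i ∈ Finset.range (N + 1), u i / q ^ i + 1, by linarith, fun n => ?_⟩
  have hsmall : ∀ n ≤ N, u n ≤ (∑ i ∈ Finset.range (N + 1), u i / q ^ i + 1) * q ^ n := by
    intro n hn
    have h1 : u n / q ^ n ≤ ∑ i ∈ Finset.range (N + 1), u i / q ^ i :=
      Finset.single_le_sum (f := fun i => u i / q ^ i)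
        (fun i _ => div_nonneg (hu i) (by positivity)) (Finset.mem_range.2 (by omega))
    rw [← div_le_iff₀ (by positivity)]
    linarith
  rcases le_total n N with hn | hn
  · exact hsmall n hn
  · induction n, hn using Nat.le_induction with
    | base => exact hsmall N le_rfl
    | succ n hn ih =>
      calc u (n + 1) ≤ q * u n := hN n hn
        _ ≤ q * ((∑ i ∈ Finset.range (N + 1), u i / q ^ i + 1) * q ^ n) := by gcongr
        _ = _ := by ring

/-- The reciprocal `1 / (Γ(1 - x - u) Γ(1 - x + u))`. -/
noncomputable def recipGammaPair (x : ℝ) (u : ℂ) : ℂ :=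
  (Complex.Gamma (1 - x - u))⁻¹ * (Complex.Gamma (1 - x + u))⁻¹

/-- The quotient `Γ(x + u) / Γ(1 - x + u)`. -/
noncomputable def gammaQuot (x : ℝ) (u : ℂ) : ℂ :=
  Complex.Gamma (x + u) / Complex.Gamma (1 - x + u)

/-- The series `∑ 2 (v + k) w(v + k)⁴`. -/
noncomputable def quarticSum (w : ℂ → ℂ) (v : ℂ) : ℂ := ∑' k : ℕ, 2 * (v + k) * w (v + k) ^ 4

theorem recipGammaPair_neg (x : ℝ) (u : ℂ) : recipGammaPair x (-u) = recipGammaPair x u := by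
  unfold recipGammaPair
  rw [sub_neg_eq_add, ← sub_eq_add_neg, mul_comm]

theorem differentiable_recipGammaPair (x : ℝ) : Differentiable ℂ (recipGammaPair x) :=
  (Complex.differentiable_one_div_Gamma.comp (differentiable_id.const_sub _)).mul
    (Complex.differentiable_one_div_Gamma.comp (differentiable_id.const_add _))

theorem recipGammaPair_add_one (x : ℝ) (u : ℂ) :
    recipGammaPair x (u + 1) * (1 - x + u) = -(recipGammaPair x u * (x + u)) := by
  have h1 := Complex.one_div_Gamma_eq_self_mul_one_div_Gamma_add_one (-x - u)
  have h2 := Complex.one_div_Gamma_eq_self_mul_one_div_Gamma_add_one (1 - x + u)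
  unfold recipGammaPair
  rw [show (1 : ℂ) - x - (u + 1) = -x - u by ring, show (1 : ℂ) - x + (u + 1) = 1 - x + u + 1 by ring,
    h1, h2, show -(x : ℂ) - u + 1 = 1 - x - u by ring]
  ring

theorem recipGammaPair_eq_sin_mul {x : ℝ} {u : ℂ} (h : Complex.Gamma (x + u) ≠ 0) :
    recipGammaPair x u = sin (Real.pi * (x + u)) / Real.pi * gammaQuot x u := by
  have hpi : (Real.pi : ℂ) ≠ 0 := by exact_mod_cast Real.pi_ne_zero
  have h1 := Complex.Gamma_mul_Gamma_one_sub (x + u)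
  rw [← sub_sub] at h1
  have h2 : Complex.Gamma (1 - x - u) = (Real.pi / sin (Real.pi * (x + u))) / Complex.Gamma (x + u) := by
    rw [← h1]; field_simp
  unfold recipGammaPair gammaQuot
  rw [h2, inv_div, div_div_eq_mul_div]
  ring

theorem gammaQuot_add_one {x : ℝ} {u : ℂ} (h₁ : (x : ℂ) + u ≠ 0) (h₂ : 1 - (x : ℂ) + u ≠ 0) :
    gammaQuot x (u + 1) * (1 - x + u) = gammaQuot x u * (x + u) := by
  unfold gammaQuot
  rw [← add_assoc, ← add_assoc, Complex.Gamma_add_one _ h₁, Complex.Gamma_add_one _ h₂]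
  by_cases h : Complex.Gamma (1 - x + u) = 0
  · simp [h]
  · field_simp

theorem norm_gammaQuot_le {x : ℝ} (hx : x ≤ 0) {u : ℂ} (hu : 0 < x + u.re) :
    ‖gammaQuot x u‖ ≤ 1 / Real.Gamma (1 - 2 * x) / (x + u.re) := by
  have h := norm_Gamma_div_Gamma_add_le (w := x + u) (s := 1 - 2 * x) (by simpa using hu) (by linarith)
  rw [show (x : ℂ) + u + ((1 - 2 * x : ℝ) : ℂ) = 1 - x + u by push_cast; ring] at h
  refine h.trans (le_of_eq ?_)
  rw [div_div, add_re, ofReal_re]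

theorem norm_gammaQuot_le_div_im {x : ℝ} (hx : x ≤ -1 / 2) {u : ℂ} (hu : 0 < x + 1 + u.re)
    (him : u.im ≠ 0) :
    ‖gammaQuot x u‖ ≤ 1 / Real.Gamma (-2 * x) / (x + 1 + u.re) / |u.im| := by
  have h := norm_Gamma_div_Gamma_add_le (w := x + u + 1) (s := -2 * x) (by simp; linarith)
    (by linarith)
  rw [show (x : ℂ) + u + 1 + ((-2 * x : ℝ) : ℂ) = 1 - x + u by push_cast; ring] at h
  have h0 : (x : ℂ) + u ≠ 0 := fun h => him (by simpa using congrArg Complex.im h)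
  have h1 : gammaQuot x u = Complex.Gamma (x + u + 1) / Complex.Gamma (1 - x + u) / (x + u) := by
    rw [gammaQuot, Complex.Gamma_add_one _ h0]
    field_simp
  have h2 : |u.im| ≤ ‖(x : ℂ) + u‖ := by simpa using Complex.abs_im_le_norm ((x : ℂ) + u)
  have h3 : 0 < |u.im| := abs_pos.2 him
  rw [h1, norm_div]
  have h4 : 0 < Real.Gamma (-2 * x) := Real.Gamma_pos_of_pos (by linarith)
  calc _ ≤ 1 / (Real.Gamma (-2 * x) * ((x : ℂ) + u + 1).re) / |u.im| :=
        div_le_div₀ ((norm_nonneg _).trans h) h h3 h2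
    _ = _ := by
      rw [add_re, add_re, ofReal_re, one_re, div_div _ _ |u.im|, div_div, div_div]
      congr 1
      ring

theorem norm_recipGammaPair_le {x : ℝ} {u : ℂ} (h : Complex.Gamma (x + u) ≠ 0) :
    ‖recipGammaPair x u‖ ≤ Real.exp (Real.pi * |u.im|) * ‖gammaQuot x u‖ := by
  rw [recipGammaPair_eq_sin_mul h, norm_mul, norm_div, norm_real, Real.norm_of_nonneg Real.pi_pos.le]
  gcongr
  have h1 := norm_sin_le_exp (Real.pi * (x + u))
  rw [im_ofReal_mul] at h1
  simp only [add_im, ofReal_im, zero_add, abs_mul, abs_of_pos Real.pi_pos] at h1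
  refine (div_le_self (norm_nonneg _) ?_).trans h1
  linarith [Real.pi_gt_three]

theorem summable_one_div_succ_cube (C : ℝ) : Summable fun k : ℕ => C / ((k : ℝ) + 1) ^ 3 := by
  have h := (summable_nat_add_iff 1).2 (Real.summable_one_div_nat_pow.2 (by norm_num : 1 < 3))
  simpa [div_eq_mul_inv] using h.mul_left C

theorem norm_two_mul_pow_four_le {R C : ℝ} (hR : 1 ≤ R) {u w : ℂ} {k : ℕ}
    (hu : ‖u‖ ≤ R * (k + 1)) (hw : ‖w‖ ≤ C / (k + 1)) :
    ‖2 * u * w ^ 4‖ ≤ 2 * R * C ^ 4 / ((k : ℝ) + 1) ^ 3 := by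
  rw [norm_mul, norm_mul, norm_pow]
  calc _ ≤ 2 * (R * (k + 1)) * (C / (k + 1)) ^ 4 := by
        gcongr
        simp
    _ = _ := by field_simp

theorem exists_summable_quarticSum_bound {w : ℂ → ℂ}
    (hw : ∀ R : ℝ, ∃ C : ℝ, ∀ (u : ℂ) (k : ℕ), k + 3 / 2 < u.re → |u.im| ≤ R → ‖w u‖ ≤ C / (k + 1)) (R : ℝ) :
    ∃ b : ℕ → ℝ, Summable b ∧ ∀ v : ℂ, 3 / 2 < v.re → ‖v‖ < R → ∀ k : ℕ,
      ‖2 * (v + k) * w (v + k) ^ 4‖ ≤ b k := by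
  obtain ⟨C, hC⟩ := hw R
  refine ⟨_, summable_one_div_succ_cube (2 * (R + 1) * C ^ 4), fun v hv hvR k => ?_⟩
  have hR : 0 ≤ R := (norm_nonneg v).trans hvR.le
  refine norm_two_mul_pow_four_le (by linarith) ?_ (hC _ k (by simp; linarith) ?_)
  · refine (norm_add_le _ _).trans ?_
    simp only [norm_natCast]
    nlinarith [k.cast_nonneg (α := ℝ)]
  · simpa using (Complex.abs_im_le_norm v).trans hvR.le

theorem summable_quarticSum {w : ℂ → ℂ}
    (hw : ∀ R : ℝ, ∃ C : ℝ, ∀ (u : ℂ) (k : ℕ), k + 3 / 2 < u.re → |u.im| ≤ R → ‖w u‖ ≤ C / (k + 1))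
    {v : ℂ} (hv : 3 / 2 < v.re) :
    Summable fun k : ℕ => 2 * (v + k) * w (v + k) ^ 4 := by
  obtain ⟨b, hb, h⟩ := exists_summable_quarticSum_bound hw (‖v‖ + 1)
  exact Summable.of_norm_bounded hb (h v hv (by linarith))

theorem differentiableOn_quarticSum {w : ℂ → ℂ}
    (hw : ∀ R : ℝ, ∃ C : ℝ, ∀ (u : ℂ) (k : ℕ), k + 3 / 2 < u.re → |u.im| ≤ R → ‖w u‖ ≤ C / (k + 1))
    (hd : DifferentiableOn ℂ w {u | 3 / 2 < u.re}) :
    DifferentiableOn ℂ (quarticSum w) {u | 3 / 2 < u.re} := by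
  intro v hv
  obtain ⟨b, hb, h⟩ := exists_summable_quarticSum_bound hw (‖v‖ + 1)
  have hopen : IsOpen {u : ℂ | 3 / 2 < u.re} := isOpen_lt continuous_const continuous_re
  have hopen' : IsOpen ({u : ℂ | 3 / 2 < u.re} ∩ Metric.ball 0 (‖v‖ + 1)) :=
    hopen.inter Metric.isOpen_ball
  have h1 : DifferentiableOn ℂ (quarticSum w) ({u : ℂ | 3 / 2 < u.re} ∩ Metric.ball 0 (‖v‖ + 1)) := by
    refine differentiableOn_tsum_of_summable_norm hb (fun k => ?_) hopen'
      (fun k u hu => h u hu.1 (by simpa using hu.2) k)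
    refine DifferentiableOn.mul (by fun_prop) (DifferentiableOn.pow ?_ 4)
    refine hd.comp (by fun_prop) fun u hu => ?_
    have := hu.1
    simp only [Set.mem_ofPred_eq, add_re, natCast_re] at this ⊢
    linarith [k.cast_nonneg (α := ℝ)]
  exact (h1.differentiableAt (hopen'.mem_nhds ⟨hv, by simp⟩)).differentiableWithinAt

theorem quarticSum_eq_add {w : ℂ → ℂ} {v : ℂ}
    (h : Summable fun k : ℕ => 2 * (v + k) * w (v + k) ^ 4) :
    quarticSum w v = 2 * v * w v ^ 4 + quarticSum w (v + 1) := by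
  unfold quarticSum
  rw [h.tsum_eq_zero_add]
  congr 1
  · simp
  · refine tsum_congr fun k => ?_
    push_cast
    rw [add_assoc, add_comm (1 : ℂ) k]

theorem gammaQuot_bound {x : ℝ} (hx : -5 / 4 < x) (hx' : x < -3 / 4) (_R : ℝ) :
    ∃ C : ℝ, ∀ (u : ℂ) (k : ℕ), k + 3 / 2 < u.re → |u.im| ≤ _R → ‖gammaQuot x u‖ ≤ C / (k + 1) := by
  have hG : 0 < Real.Gamma (1 - 2 * x) := Real.Gamma_pos_of_pos (by linarith)
  refine ⟨4 / Real.Gamma (1 - 2 * x), fun u k hk _ => ?_⟩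
  have hk0 := k.cast_nonneg (α := ℝ)
  refine (norm_gammaQuot_le (by linarith) (by linarith)).trans ?_
  rw [div_le_div_iff₀ (by linarith) (by positivity), div_mul_eq_mul_div, div_mul_eq_mul_div]
  refine div_le_div_of_nonneg_right ?_ hG.le
  linarith

theorem Gamma_add_ne_zero_of_re {x : ℝ} {u : ℂ} (hu : 0 < x + u.re) : Complex.Gamma (x + u) ≠ 0 :=
  Complex.Gamma_ne_zero_of_re_pos (by simpa using hu)

theorem Gamma_add_ne_zero_of_im {x : ℝ} {u : ℂ} (hu : u.im ≠ 0) : Complex.Gamma (x + u) ≠ 0 :=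
  Complex.Gamma_ne_zero fun m h => hu (by simpa using congrArg Complex.im h)

theorem recipGammaPair_bound {x : ℝ} (hx : -5 / 4 < x) (hx' : x < -3 / 4) (R : ℝ) :
    ∃ C : ℝ, ∀ (u : ℂ) (k : ℕ), k + 3 / 2 < u.re → |u.im| ≤ R →
      ‖recipGammaPair x u‖ ≤ C / (k + 1) := by
  obtain ⟨C, hC⟩ := gammaQuot_bound hx hx' R
  refine ⟨Real.exp (Real.pi * R) * C, fun u k hk hu => ?_⟩
  have hk0 := k.cast_nonneg (α := ℝ)
  refine (norm_recipGammaPair_le (Gamma_add_ne_zero_of_re (by linarith))).trans ?_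
  rw [mul_div_assoc]
  gcongr
  exact hC u k hk hu

theorem differentiableOn_gammaQuot {x : ℝ} (hx : -5 / 4 < x) :
    DifferentiableOn ℂ (gammaQuot x) {u | 3 / 2 < u.re} := by
  intro u hu
  simp only [Set.mem_ofPred_eq] at hu
  have h1 : DifferentiableAt ℂ (fun u : ℂ => Complex.Gamma (x + u)) u := by
    refine (Complex.differentiableAt_Gamma _ fun m h => ?_).comp u (by fun_prop)
    have := congrArg Complex.re h
    simp at this
    linarith [m.cast_nonneg (α := ℝ)]
  have h2 : DifferentiableAt ℂ (fun u : ℂ => (Complex.Gamma (1 - x + u))⁻¹) u :=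
    (Complex.differentiable_one_div_Gamma _).comp u (by fun_prop)
  have h3 : DifferentiableAt ℂ (gammaQuot x) u := by
    refine (h1.mul h2).congr_of_eventuallyEq (Eventually.of_forall fun z => ?_)
    simp [gammaQuot, div_eq_mul_inv]
  exact h3.differentiableWithinAt

theorem summable_quarticSum_recipGammaPair {x : ℝ} (hx : -5 / 4 < x) (hx' : x < -3 / 4) (v : ℂ) :
    Summable fun k : ℕ => 2 * (v + k) * recipGammaPair x (v + k) ^ 4 := by
  obtain ⟨m, hm⟩ := exists_nat_gt (3 / 2 - v.re)
  have h := summable_quarticSum (recipGammaPair_bound hx hx') (v := v + m)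
    (by simp; linarith)
  rw [← summable_nat_add_iff m]
  refine h.congr fun k => ?_
  push_cast
  rw [add_assoc, add_comm (m : ℂ)]

theorem differentiable_quarticSum_recipGammaPair {x : ℝ} (hx : -5 / 4 < x) (hx' : x < -3 / 4) :
    Differentiable ℂ (quarticSum (recipGammaPair x)) := by
  have key : ∀ (m : ℕ) (v : ℂ), 3 / 2 < v.re + m →
      DifferentiableAt ℂ (quarticSum (recipGammaPair x)) v := by
    intro m
    induction m with
    | zero =>
      intro v hv
      have hopen : IsOpen {u : ℂ | 3 / 2 < u.re} := isOpen_lt continuous_const continuous_re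
      exact (differentiableOn_quarticSum (recipGammaPair_bound hx hx')
        (differentiable_recipGammaPair x).differentiableOn).differentiableAt
        (hopen.mem_nhds (by simpa using hv))
    | succ m ih =>
      intro v hv
      have h1 := ih (v + 1) (by push_cast at hv; simp; linarith)
      have h2 : DifferentiableAt ℂ (fun v => quarticSum (recipGammaPair x) (v + 1)) v :=
        h1.comp v (differentiableAt_id.add_const _)
      have h3 : quarticSum (recipGammaPair x) = fun v =>
          2 * v * recipGammaPair x v ^ 4 + quarticSum (recipGammaPair x) (v + 1) :=
        funext fun v => quarticSum_eq_add (summable_quarticSum_recipGammaPair hx hx' v)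
      rw [h3]
      have := differentiable_recipGammaPair x v
      fun_prop
  intro v
  obtain ⟨m, hm⟩ := exists_nat_gt (3 / 2 - v.re)
  exact key m v (by linarith)

theorem exists_norm_recipGammaPair_le {x : ℝ} (hx : -5 / 4 < x) (hx' : x < -3 / 4) :
    ∃ M > 0, (∀ (u : ℂ) (k : ℕ), 1 / 2 + k ≤ u.re → 1 ≤ |u.im| →
      ‖recipGammaPair x u‖ ≤ M * Real.exp (Real.pi * |u.im|) / |u.im| / (k + 1)) ∧
      ∀ u : ℂ, -1 / 2 ≤ u.re → 1 ≤ |u.im| →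
        ‖recipGammaPair x u‖ ≤ 5 * M * Real.exp (Real.pi * |u.im|) / |u.im| := by
  have hG : 0 < Real.Gamma (-2 * x) := Real.Gamma_pos_of_pos (by linarith)
  set M := 4 / Real.Gamma (-2 * x) with hM
  have hM0 : 0 < M := by positivity
  have h1 : ∀ (u : ℂ) (k : ℕ), 1 / 2 + k ≤ u.re → 1 ≤ |u.im| →
      ‖recipGammaPair x u‖ ≤ M * Real.exp (Real.pi * |u.im|) / |u.im| / (k + 1) := by
    intro u k hk hu
    have hk0 := k.cast_nonneg (α := ℝ)
    have him : u.im ≠ 0 := fun h => by rw [h] at hu; norm_num at hu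
    refine (norm_recipGammaPair_le (Gamma_add_ne_zero_of_im him)).trans ?_
    have h2 := norm_gammaQuot_le_div_im (x := x) (u := u) (by linarith) (by linarith) him
    have h3 : 1 / Real.Gamma (-2 * x) / (x + 1 + u.re) ≤ M / (k + 1) := by
      rw [hM, div_le_div_iff₀ (by linarith) (by positivity), div_mul_eq_mul_div, div_mul_eq_mul_div]
      refine div_le_div_of_nonneg_right ?_ hG.le
      linarith
    calc _ ≤ Real.exp (Real.pi * |u.im|) * (M / (k + 1) / |u.im|) := by
          gcongr
          exact h2.trans (by gcongr)
      _ = _ := by ring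
  refine ⟨M, hM0, h1, fun u hu him => ?_⟩
  have h2 := h1 (u + 1) 0 (by simp; linarith) (by simpa using him)
  simp only [add_im, one_im, add_zero, Nat.cast_zero, zero_add, div_one] at h2
  have h3 := recipGammaPair_add_one x u
  have h4 : 1 ≤ ‖(x : ℂ) + u‖ := him.trans (by simpa using Complex.abs_im_le_norm ((x : ℂ) + u))
  have h5 : ‖1 - (x : ℂ) + u‖ ≤ 5 * ‖(x : ℂ) + u‖ := by
    have e : 1 - (x : ℂ) + u = ((1 - 2 * x : ℝ) : ℂ) + (x + u) := by push_cast; ring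
    rw [e]
    refine (norm_add_le _ _).trans ?_
    rw [norm_real, Real.norm_of_nonneg (by linarith)]
    linarith
  have h6 : ‖recipGammaPair x u‖ * ‖(x : ℂ) + u‖ ≤
      5 * (M * Real.exp (Real.pi * |u.im|) / |u.im|) * ‖(x : ℂ) + u‖ := by
    rw [← norm_mul, ← norm_neg, ← h3, norm_mul]
    calc _ ≤ (M * Real.exp (Real.pi * |u.im|) / |u.im|) * (5 * ‖(x : ℂ) + u‖) := by gcongr
      _ = _ := by ring
  refine (le_of_mul_le_mul_right h6 (by linarith)).trans (le_of_eq ?_)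
  ring

theorem exists_norm_quarticSum_le {x : ℝ} (hx : -5 / 4 < x) (hx' : x < -3 / 4) :
    ∃ M > 0, ∀ v : ℂ, -1 / 2 ≤ v.re → v.re ≤ 3 / 2 → 1 ≤ |v.im| →
      ‖quarticSum (recipGammaPair x) v‖ ≤ M * Real.exp (4 * Real.pi * |v.im|) / |v.im| := by
  obtain ⟨M, hM, h1, h2⟩ := exists_norm_recipGammaPair_le hx hx'
  set S := ∑' k : ℕ, 1 / ((k : ℝ) + 1) ^ 3 with hS
  have hSs := summable_one_div_succ_cube 1
  have hS0 : 0 ≤ S := tsum_nonneg fun k => by positivity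
  have hpow : ∀ v : ℂ, 1 ≤ |v.im| → ∀ B : ℝ,
      |v.im| * (B * Real.exp (Real.pi * |v.im|) / |v.im|) ^ 4 ≤
        B ^ 4 * Real.exp (4 * Real.pi * |v.im|) / |v.im| := by
    intro v hv B
    have e : Real.exp (4 * Real.pi * |v.im|) = Real.exp (Real.pi * |v.im|) ^ 4 := by
      rw [← Real.exp_nat_mul]; congr 1; push_cast; ring
    have h0 : 0 < |v.im| := by linarith
    rw [e]
    have : |v.im| * (B * Real.exp (Real.pi * |v.im|) / |v.im|) ^ 4 =
        B ^ 4 * Real.exp (Real.pi * |v.im|) ^ 4 / |v.im| ^ 3 := by field_simp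
    rw [this]
    gcongr
    exact le_self_pow₀ hv (by norm_num)
  have hA : ∀ v : ℂ, 1 / 2 ≤ v.re → v.re ≤ 3 / 2 → 1 ≤ |v.im| →
      ‖quarticSum (recipGammaPair x) v‖ ≤
        6 * S * M ^ 4 * Real.exp (4 * Real.pi * |v.im|) / |v.im| := by
    intro v hv hv' him
    have hb : ∀ k : ℕ, ‖2 * (v + k) * recipGammaPair x (v + k) ^ 4‖ ≤
        2 * (3 * |v.im|) * (M * Real.exp (Real.pi * |v.im|) / |v.im|) ^ 4 / ((k : ℝ) + 1) ^ 3 := by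
      intro k
      have hk0 := k.cast_nonneg (α := ℝ)
      refine norm_two_mul_pow_four_le (by linarith) ?_ ?_
      · refine (Complex.norm_le_abs_re_add_abs_im _).trans ?_
        simp only [add_re, natCast_re, add_im, natCast_im, add_zero]
        rw [abs_of_nonneg (by linarith)]
        nlinarith
      · have := h1 (v + k) k (by simp; linarith) (by simpa using him)
        simpa using this
    have hs := (summable_one_div_succ_cube
      (2 * (3 * |v.im|) * (M * Real.exp (Real.pi * |v.im|) / |v.im|) ^ 4))
    refine (tsum_of_norm_bounded hs.hasSum hb).trans ?_
    have e : ∑' k : ℕ, 2 * (3 * |v.im|) * (M * Real.exp (Real.pi * |v.im|) / |v.im|) ^ 4 /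
        ((k : ℝ) + 1) ^ 3 = 6 * (|v.im| * (M * Real.exp (Real.pi * |v.im|) / |v.im|) ^ 4) * S := by
      rw [hS, ← tsum_mul_left]
      refine tsum_congr fun k => ?_
      ring
    rw [e]
    calc _ ≤ 6 * (M ^ 4 * Real.exp (4 * Real.pi * |v.im|) / |v.im|) * S := by
          gcongr
          exact hpow v him M
      _ = _ := by ring
  refine ⟨6 * S * M ^ 4 + 4 * (5 * M) ^ 4, by positivity, fun v hv hv' him => ?_⟩
  have hE : 0 < Real.exp (4 * Real.pi * |v.im|) / |v.im| := by positivity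
  rcases le_total (1 / 2) v.re with h | h
  · refine (hA v h hv' him).trans ?_
    rw [mul_div_assoc, mul_div_assoc]
    gcongr
    have : 0 < 4 * (5 * M) ^ 4 := by positivity
    linarith
  · rw [quarticSum_eq_add (summable_quarticSum_recipGammaPair hx hx' v)]
    have h3 := hA (v + 1) (by simp; linarith) (by simp; linarith) (by simpa using him)
    simp only [add_im, one_im, add_zero] at h3
    have h4 : ‖2 * v * recipGammaPair x v ^ 4‖ ≤
        4 * (5 * M) ^ 4 * Real.exp (4 * Real.pi * |v.im|) / |v.im| := by
      rw [norm_mul, norm_mul, norm_pow]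
      have h5 : ‖v‖ ≤ 2 * |v.im| := by
        refine (Complex.norm_le_abs_re_add_abs_im _).trans ?_
        have : |v.re| ≤ 1 := abs_le.2 ⟨by linarith, by linarith⟩
        linarith
      calc _ ≤ 2 * (2 * |v.im|) * (5 * M * Real.exp (Real.pi * |v.im|) / |v.im|) ^ 4 := by
            gcongr
            · simp
            · exact h2 v hv him
        _ = 4 * (|v.im| * (5 * M * Real.exp (Real.pi * |v.im|) / |v.im|) ^ 4) := by ring
        _ ≤ 4 * ((5 * M) ^ 4 * Real.exp (4 * Real.pi * |v.im|) / |v.im|) := by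
            gcongr
            exact hpow v him _
        _ = _ := by ring
    refine (norm_add_le _ _).trans ((add_le_add h4 h3).trans (le_of_eq ?_))
    ring

/-- The ratio of consecutive weights in the accelerated series. -/
noncomputable def wzRatio (N : ℝ) : ℝ :=
  (N + 1 / 4) * (N + 3 / 4) / (16 * N ^ 5 * (N + 1 / 2) ^ 5)

/-- The weights `∏_{j < n} wzRatio (x + j)`. -/
noncomputable def wzWeight (x : ℝ) (n : ℕ) : ℝ := ∏ j ∈ Finset.range n, wzRatio (x + j)

/-- The certificate polynomial in `y`. -/
noncomputable def wzCert (N : ℝ) (y : ℂ) : ℂ :=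
  (-(120 * N ^ 2 + 34 * N + 3) + (88 * N ^ 2 + 58 * N + 7) * y ^ 2 / (N + 1 / 2) ^ 2 -
    (40 * N ^ 2 + 30 * N + 5) * y ^ 4 / (N + 1 / 2) ^ 4 +
    (8 * N + 2) * y ^ 6 / (N + 1 / 2) ^ 5) / (512 * N ^ 5)

noncomputable def wzTerm (x : ℝ) (n : ℕ) (y : ℂ) : ℂ :=
  wzWeight x n * wzCert (x + n) y *
    ∏ j ∈ Finset.range n, (((1 / 2 + x + j : ℝ) : ℂ) ^ 2 - y ^ 2) ^ 4

noncomputable def wzSum (x : ℝ) (y : ℂ) : ℂ := ∑' n : ℕ, wzTerm x n y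

theorem wzCert_add_one {N : ℝ} (h₁ : N ≠ 0) (h₂ : N + 1 / 2 ≠ 0) (y : ℂ) :
    wzCert N (y + 1) * (N + (y + 1 / 2)) ^ 4 - wzCert N y * (N - (y + 1 / 2)) ^ 4 =
      2 * (y + 1 / 2) * (wzRatio N * ((N : ℂ) ^ 2 - (y + 1 / 2) ^ 2) ^ 4 - 1) := by
  have h₁' : (N : ℂ) ≠ 0 := by exact_mod_cast h₁
  have h₂' : (N : ℂ) + 1 / 2 ≠ 0 := by
    intro h
    apply h₂
    have : ((N + 1 / 2 : ℝ) : ℂ) = 0 := by push_cast; exact h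
    exact_mod_cast this
  have h₃' : (N : ℂ) * 2 + 1 ≠ 0 := by
    intro h
    apply h₂'
    linear_combination h / 2
  unfold wzCert wzRatio
  push_cast
  field_simp
  ring

theorem wzTerm_neg (x : ℝ) (n : ℕ) (y : ℂ) : wzTerm x n (-y) = wzTerm x n y := by
  have h2 : (-y) ^ 2 = y ^ 2 := by ring
  have h4 : (-y) ^ 4 = y ^ 4 := by ring
  have h6 : (-y) ^ 6 = y ^ 6 := by ring
  simp only [wzTerm, wzCert, h2, h4, h6]

theorem wzSum_neg (x : ℝ) (y : ℂ) : wzSum x (-y) = wzSum x y := by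
  simp only [wzSum, wzTerm_neg]

theorem differentiable_wzTerm (x : ℝ) (n : ℕ) : Differentiable ℂ (wzTerm x n) := by
  unfold wzTerm wzCert
  fun_prop

theorem wzCert_eq_inv (N : ℝ) (y : ℂ) (h : N ≠ 0) : wzCert N y =
    ((-(120 * N⁻¹ ^ 3 + 34 * N⁻¹ ^ 4 + 3 * N⁻¹ ^ 5) / 512 : ℝ) : ℂ) +
    (((88 * N⁻¹ ^ 3 + 58 * N⁻¹ ^ 4 + 7 * N⁻¹ ^ 5) * (N + 1 / 2)⁻¹ ^ 2 / 512 : ℝ) : ℂ) * y ^ 2 +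
    ((-(40 * N⁻¹ ^ 3 + 30 * N⁻¹ ^ 4 + 5 * N⁻¹ ^ 5) * (N + 1 / 2)⁻¹ ^ 4 / 512 : ℝ) : ℂ) * y ^ 4 +
    (((8 * N⁻¹ ^ 4 + 2 * N⁻¹ ^ 5) * (N + 1 / 2)⁻¹ ^ 5 / 512 : ℝ) : ℂ) * y ^ 6 := by
  have h' : (N : ℂ) ≠ 0 := by exact_mod_cast h
  unfold wzCert
  push_cast
  field_simp
  ring

theorem norm_wzCert_le {N L : ℝ} (hN : N ≠ 0) (hL : 1 ≤ L) (h₁ : |N⁻¹| ≤ L)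
    (h₂ : |(N + 1 / 2)⁻¹| ≤ L) (y : ℂ) : ‖wzCert N y‖ ≤ 4 * L ^ 10 * (1 + ‖y‖) ^ 6 := by
  rw [wzCert_eq_inv N y hN]
  set i := N⁻¹
  set e := (N + 1 / 2)⁻¹
  have hy := norm_nonneg y
  have hi : ∀ k ≤ 5, |i ^ k| ≤ L ^ 5 := fun k hk => by
    rw [abs_pow]
    exact (pow_le_pow_left₀ (abs_nonneg _) h₁ k).trans (pow_le_pow_right₀ hL hk)
  have he : ∀ k ≤ 5, |e ^ k| ≤ L ^ 5 := fun k hk => by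
    rw [abs_pow]
    exact (pow_le_pow_left₀ (abs_nonneg _) h₂ k).trans (pow_le_pow_right₀ hL hk)
  have hs : ∀ k ≤ 6, ‖y ^ k‖ ≤ (1 + ‖y‖) ^ 6 := fun k hk => by
    rw [norm_pow]
    exact (pow_le_pow_left₀ hy (by linarith) k).trans (pow_le_pow_right₀ (by linarith) hk)
  have hL5 : 1 ≤ L ^ 5 := one_le_pow₀ hL
  have hLL : L ^ 10 = L ^ 5 * L ^ 5 := by ring
  have h3 := abs_le.1 (hi 3 (by norm_num))
  have h4 := abs_le.1 (hi 4 (by norm_num))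
  have h5 := abs_le.1 (hi 5 (by norm_num))
  have hcoef : ∀ a : ℝ, |a| ≤ 512 * L ^ 5 → ∀ k ≤ 5, |a * e ^ k / 512| ≤ L ^ 10 := by
    intro a ha k hk
    rw [abs_div, abs_mul, hLL, abs_of_pos (by norm_num : (0 : ℝ) < 512), div_le_iff₀ (by norm_num)]
    calc |a| * |e ^ k| ≤ (512 * L ^ 5) * L ^ 5 := by
          gcongr
          exact he k hk
      _ = _ := by ring
  have hterm : ∀ a : ℝ, |a| ≤ L ^ 10 → ∀ k ≤ 6, ‖(a : ℂ) * y ^ k‖ ≤ L ^ 10 * (1 + ‖y‖) ^ 6 := by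
    intro a ha k hk
    rw [norm_mul, norm_real, Real.norm_eq_abs]
    gcongr
    exact hs k hk
  have t0 := hterm _ (hcoef (-(120 * i ^ 3 + 34 * i ^ 4 + 3 * i ^ 5))
    (abs_le.2 ⟨by linarith, by linarith⟩) 0 (by norm_num)) 0 (by norm_num)
  have t1 := hterm _ (hcoef (88 * i ^ 3 + 58 * i ^ 4 + 7 * i ^ 5)
    (abs_le.2 ⟨by linarith, by linarith⟩) 2 (by norm_num)) 2 (by norm_num)
  have t2 := hterm _ (hcoef (-(40 * i ^ 3 + 30 * i ^ 4 + 5 * i ^ 5))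
    (abs_le.2 ⟨by linarith, by linarith⟩) 4 (by norm_num)) 4 (by norm_num)
  have t3 := hterm _ (hcoef (8 * i ^ 4 + 2 * i ^ 5)
    (abs_le.2 ⟨by linarith, by linarith⟩) 5 (by norm_num)) 6 (by norm_num)
  rw [pow_zero, mul_one, pow_zero, mul_one] at t0
  refine (norm_add_le _ _).trans ?_
  refine (add_le_add ((norm_add_le _ _).trans (add_le_add (norm_add_le _ _) le_rfl)) le_rfl).trans ?_
  linarith

section
variable {x : ℝ}

theorem add_natCast_ne_zero (hx : -5 / 4 < x) (hx' : x < -3 / 4) (hx1 : x ≠ -1) (n : ℕ) :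
    x + n ≠ 0 := by
  rcases n with _ | _ | n
  · simp; linarith
  · intro h; push_cast at h; apply hx1; linarith
  · push_cast
    linarith [n.cast_nonneg (α := ℝ)]

theorem one_div_four_le_abs (hx : -5 / 4 < x) (hx' : x < -3 / 4) (n : ℕ) :
    1 / 4 ≤ |x + n + 1 / 2| := by
  rcases n with _ | n
  · rw [abs_of_neg] <;> push_cast <;> linarith
  · have := n.cast_nonneg (α := ℝ)
    rw [abs_of_pos] <;> push_cast <;> linarith

theorem exists_norm_wzCert_le (hx : -5 / 4 < x) (hx' : x < -3 / 4) (hx1 : x ≠ -1) :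
    ∃ C > 0, ∀ (n : ℕ) (y : ℂ), ‖wzCert (x + n) y‖ ≤ C * (1 + ‖y‖) ^ 6 := by
  set L := |(x + 1)⁻¹| + 4 with hL
  have hL4 : 4 ≤ L := by linarith [abs_nonneg (x + 1)⁻¹]
  refine ⟨4 * L ^ 10, by positivity, fun n y => ?_⟩
  refine norm_wzCert_le (add_natCast_ne_zero hx hx' hx1 n) (by linarith) ?_ ?_ y
  · rcases eq_or_ne n 1 with rfl | hn
    · rw [Nat.cast_one]; linarith
    · refine le_trans ?_ hL4
      have : 1 / 4 ≤ |x + n| := by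
        rcases n with _ | _ | n
        · rw [abs_of_neg] <;> push_cast <;> linarith
        · exact absurd rfl hn
        · have := n.cast_nonneg (α := ℝ)
          rw [abs_of_pos] <;> push_cast <;> linarith
      rw [abs_inv]
      exact inv_le_of_inv_le₀ (by norm_num) (by linarith)
  · refine le_trans ?_ hL4
    rw [abs_inv]
    exact inv_le_of_inv_le₀ (by norm_num) (by linarith [one_div_four_le_abs hx hx' n])

theorem exists_abs_wzWeight_mul_le (hx : -5 / 4 < x) :
    ∃ C > 0, ∀ n : ℕ, |wzWeight x n| * ∏ j ∈ Finset.range n, (1 / 2 + x + j) ^ 8 ≤ C * (3 / 32) ^ n := by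
  refine exists_le_mul_pow (fun n => ?_) (by norm_num) ?_
  · exact mul_nonneg (abs_nonneg _) (Finset.prod_nonneg fun j _ => by positivity)
  · filter_upwards [eventually_ge_atTop 12] with n hn
    have hn' : (12 : ℝ) ≤ n := by exact_mod_cast hn
    have hN : 10 ≤ x + n := by linarith
    have h1 : wzRatio (x + n) * (1 / 2 + x + n) ^ 8 ≤ 3 / 32 := by
      set N := x + n
      have e : 1 / 2 + x + n = N + 1 / 2 := by simp only [N]; ring
      have e2 : wzRatio N * (N + 1 / 2) ^ 8 =
          (N + 1 / 4) * (N + 3 / 4) * (N + 1 / 2) ^ 3 / (16 * N ^ 5) := by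
        unfold wzRatio
        field_simp
      rw [e, e2, div_le_iff₀ (by positivity)]
      calc (N + 1 / 4) * (N + 3 / 4) * (N + 1 / 2) ^ 3
          ≤ (43 / 40 * N) * (43 / 40 * N) * (43 / 40 * N) ^ 3 := by
            gcongr <;> linarith
        _ = (43 / 40) ^ 5 * N ^ 5 := by ring
        _ ≤ 3 / 2 * N ^ 5 := by gcongr; norm_num
        _ = _ := by ring
    have h0 : 0 ≤ wzRatio (x + n) := by unfold wzRatio; positivity
    rw [wzWeight, Finset.prod_range_succ, Finset.prod_range_succ, abs_mul, abs_of_nonneg h0]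
    have h2 : 0 ≤ |wzWeight x n| * ∏ j ∈ Finset.range n, (1 / 2 + x + j) ^ 8 :=
      mul_nonneg (abs_nonneg _) (Finset.prod_nonneg fun j _ => by positivity)
    have h3 := mul_le_mul_of_nonneg_right h1 h2
    rw [wzWeight] at h3 ⊢
    linarith

theorem prod_one_add_sq_div_le (hx : -5 / 4 < x) (hx' : x < -3 / 4) {z : ℝ} (hz : 0 ≤ z) (n : ℕ) :
    ∏ j ∈ Finset.range n, (1 + z ^ 2 / (1 / 2 + x + j) ^ 2) ≤
      (1 + 16 * z ^ 2) ^ 2 * Real.exp (Real.pi * z) := by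
  have h1 : ∏ j ∈ Finset.range n, (1 + z ^ 2 / (1 / 2 + x + j) ^ 2) ≤
      ∏ j ∈ Finset.range (n + 2), (1 + z ^ 2 / (1 / 2 + x + j) ^ 2) := by
    have hone : ∀ j : ℕ, 1 ≤ 1 + z ^ 2 / (1 / 2 + x + j) ^ 2 := fun j => by
      have : 0 ≤ z ^ 2 / (1 / 2 + x + j) ^ 2 := by positivity
      linarith
    rw [Finset.prod_range_succ, Finset.prod_range_succ, mul_assoc]
    exact le_mul_of_one_le_right (Finset.prod_nonneg fun j _ => by positivity)
      (one_le_mul_of_one_le_of_one_le (hone _) (hone _))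
  have h16 : ∀ j : ℕ, 1 + z ^ 2 / (1 / 2 + x + j) ^ 2 ≤ 1 + 16 * z ^ 2 := by
    intro j
    have h2 := one_div_four_le_abs hx hx' j
    have h3 : (1 / 4) ^ 2 ≤ (1 / 2 + x + j) ^ 2 := by
      rw [show 1 / 2 + x + j = x + j + 1 / 2 by ring, ← sq_abs (x + j + 1 / 2)]
      gcongr
    have h4 : z ^ 2 / (1 / 2 + x + j) ^ 2 ≤ z ^ 2 / (1 / 4) ^ 2 := by gcongr
    have h5 : z ^ 2 / (1 / 4 : ℝ) ^ 2 = 16 * z ^ 2 := by ring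
    linarith
  refine h1.trans ?_
  rw [Finset.prod_range_succ', Finset.prod_range_succ', mul_assoc, mul_comm]
  have h2 : ∏ j ∈ Finset.range n, (1 + z ^ 2 / (1 / 2 + x + ((j + 1 + 1 : ℕ) : ℝ)) ^ 2) ≤
      Real.exp (Real.pi * z) := by
    refine le_trans (Finset.prod_le_prod (fun j _ => by positivity) fun j _ => ?_)
      (prod_one_add_sq_div_sq_le_exp hz n)
    have := j.cast_nonneg (α := ℝ)
    have h5 : (j : ℝ) + 1 ≤ 1 / 2 + x + ((j + 1 + 1 : ℕ) : ℝ) := by push_cast; linarith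
    gcongr
  rw [sq (1 + 16 * z ^ 2)]
  exact mul_le_mul (mul_le_mul (h16 _) (h16 _) (by positivity) (by positivity)) h2
    (Finset.prod_nonneg fun j _ => by positivity) (by positivity)

theorem exists_norm_wzTerm_le (hx : -5 / 4 < x) (hx' : x < -3 / 4) (hx1 : x ≠ -1) :
    ∃ C > 0, ∀ (n : ℕ) (y : ℂ),
      ‖wzTerm x n y‖ ≤ C * Real.exp (7 / 2 * Real.pi * ‖y‖) * (1 / 2) ^ n := by
  obtain ⟨C₁, hC₁, h₁⟩ := exists_norm_wzCert_le hx hx' hx1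
  obtain ⟨C₂, hC₂, h₂⟩ := exists_abs_wzWeight_mul_le hx
  obtain ⟨C₃, hC₃, h₃⟩ := exists_one_add_pow_le_exp 22 (ε := 11 / 50 * Real.pi) (by positivity)
  refine ⟨C₁ * C₂ * (16 ^ 8 * C₃), by positivity, fun n y => ?_⟩
  set s := ‖y‖ with hs
  have hs0 : 0 ≤ s := norm_nonneg y
  set z := 41 / 50 * s with hz
  have hz0 : 0 ≤ z := by positivity
  have hb : ∀ j : ℕ, 0 < (1 / 2 + x + j) ^ 2 := fun j => by
    have h := one_div_four_le_abs hx hx' j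
    have : 1 / 2 + x + (j : ℝ) ≠ 0 := by
      rw [show 1 / 2 + x + (j : ℝ) = x + j + 1 / 2 by ring]
      exact abs_pos.1 (by linarith)
    positivity
  have hprod : ‖∏ j ∈ Finset.range n, (((1 / 2 + x + j : ℝ) : ℂ) ^ 2 - y ^ 2) ^ 4‖ ≤
      (∏ j ∈ Finset.range n, (1 / 2 + x + j) ^ 8) * (81 / 16) ^ n *
        ((1 + 16 * z ^ 2) ^ 2 * Real.exp (Real.pi * z)) ^ 4 := by
    have h5 : ∀ j : ℕ, ‖(((1 / 2 + x + j : ℝ) : ℂ) ^ 2 - y ^ 2) ^ 4‖ ≤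
        (1 / 2 + x + j) ^ 8 * (81 / 16) * (1 + z ^ 2 / (1 / 2 + x + j) ^ 2) ^ 4 := by
      intro j
      have h6 : ‖((1 / 2 + x + j : ℝ) : ℂ) ^ 2 - y ^ 2‖ ≤
          (1 / 2 + x + j) ^ 2 * (3 / 2) * (1 + z ^ 2 / (1 / 2 + x + j) ^ 2) := by
        refine (norm_sub_le _ _).trans ?_
        rw [norm_pow, norm_pow, norm_real, Real.norm_eq_abs, sq_abs, ← hs]
        have e : (1 / 2 + x + j) ^ 2 * (3 / 2) * (1 + z ^ 2 / (1 / 2 + x + j) ^ 2) =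
            3 / 2 * (1 / 2 + x + j) ^ 2 + 3 / 2 * z ^ 2 := by
          have hb' := (hb j).ne'
          generalize (1 / 2 + x + (j : ℝ)) ^ 2 = B at hb'
          field_simp
        rw [e, hz]
        nlinarith [hb j, sq_nonneg s]
      rw [norm_pow]
      calc _ ≤ ((1 / 2 + x + j) ^ 2 * (3 / 2) * (1 + z ^ 2 / (1 / 2 + x + j) ^ 2)) ^ 4 := by gcongr
        _ = _ := by ring
    rw [norm_prod]
    refine (Finset.prod_le_prod (fun j _ => norm_nonneg _) fun j _ => h5 j).trans ?_
    rw [Finset.prod_mul_distrib, Finset.prod_mul_distrib, Finset.prod_const, Finset.card_range]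
    have h9 : ∏ j ∈ Finset.range n, (1 + z ^ 2 / (1 / 2 + x + j) ^ 2) ^ 4 =
        (∏ j ∈ Finset.range n, (1 + z ^ 2 / (1 / 2 + x + j) ^ 2)) ^ 4 := Finset.prod_pow _ _ _
    rw [h9]
    have h6 := prod_one_add_sq_div_le hx hx' hz0 n
    have h7 : 0 ≤ ∏ j ∈ Finset.range n, (1 + z ^ 2 / (1 / 2 + x + j) ^ 2) :=
      Finset.prod_nonneg fun j _ => by positivity
    have h8 : 0 ≤ ∏ j ∈ Finset.range n, (1 / 2 + x + j) ^ 8 :=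
      Finset.prod_nonneg fun j _ => by positivity
    gcongr
  have hpoly : (1 + 16 * z ^ 2) ^ 8 * (1 + s) ^ 6 ≤ 16 ^ 8 * (1 + s) ^ 22 := by
    have h5 : 1 + 16 * z ^ 2 ≤ 16 * (1 + s) ^ 2 := by rw [hz]; nlinarith
    calc _ ≤ (16 * (1 + s) ^ 2) ^ 8 * (1 + s) ^ 6 := by gcongr
      _ = _ := by ring
  have hE : Real.exp (Real.pi * z) ^ 4 * Real.exp (11 / 50 * Real.pi * s) =
      Real.exp (7 / 2 * Real.pi * s) := by
    rw [← Real.exp_nat_mul, ← Real.exp_add, hz]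
    congr 1
    push_cast
    ring
  have hgeo : (3 / 32 : ℝ) ^ n * (81 / 16) ^ n ≤ (1 / 2) ^ n := by
    rw [← mul_pow]
    gcongr
    norm_num
  rw [wzTerm, norm_mul, norm_mul, norm_real, Real.norm_eq_abs]
  calc |wzWeight x n| * ‖wzCert (x + n) y‖ * _
      ≤ |wzWeight x n| * (C₁ * (1 + s) ^ 6) *
        ((∏ j ∈ Finset.range n, (1 / 2 + x + j) ^ 8) * (81 / 16) ^ n *
        ((1 + 16 * z ^ 2) ^ 2 * Real.exp (Real.pi * z)) ^ 4) := by
        gcongr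
        exact h₁ n y
    _ = C₁ * (|wzWeight x n| * ∏ j ∈ Finset.range n, (1 / 2 + x + j) ^ 8) * (81 / 16) ^ n *
        ((1 + 16 * z ^ 2) ^ 8 * (1 + s) ^ 6) * Real.exp (Real.pi * z) ^ 4 := by ring
    _ ≤ C₁ * (C₂ * (3 / 32) ^ n) * (81 / 16) ^ n *
        (16 ^ 8 * (C₃ * Real.exp (11 / 50 * Real.pi * s))) * Real.exp (Real.pi * z) ^ 4 := by
        have h5 := h₂ n
        have h6 := hpoly.trans (mul_le_mul_of_nonneg_left (h₃ s hs0) (by norm_num))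
        gcongr
    _ = C₁ * C₂ * (16 ^ 8 * C₃) * Real.exp (7 / 2 * Real.pi * s) *
        ((3 / 32 : ℝ) ^ n * (81 / 16) ^ n) := by rw [← hE]; ring
    _ ≤ _ := by gcongr

theorem summable_wzTerm (hx : -5 / 4 < x) (hx' : x < -3 / 4) (hx1 : x ≠ -1) (y : ℂ) :
    Summable fun n => wzTerm x n y := by
  obtain ⟨C, _, h⟩ := exists_norm_wzTerm_le hx hx' hx1
  exact Summable.of_norm_bounded (summable_geometric_two.mul_left _) fun n => h n y

theorem exists_norm_wzSum_le (hx : -5 / 4 < x) (hx' : x < -3 / 4) (hx1 : x ≠ -1) :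
    ∃ C > 0, ∀ y : ℂ, ‖wzSum x y‖ ≤ C * Real.exp (7 / 2 * Real.pi * ‖y‖) := by
  obtain ⟨C, hC, h⟩ := exists_norm_wzTerm_le hx hx' hx1
  refine ⟨C * 2, by positivity, fun y => ?_⟩
  refine (tsum_of_norm_bounded (hasSum_geometric_two.mul_left _) fun n => h n y).trans (le_of_eq ?_)
  ring

theorem differentiable_wzSum (hx : -5 / 4 < x) (hx' : x < -3 / 4) (hx1 : x ≠ -1) :
    Differentiable ℂ (wzSum x) := by
  obtain ⟨C, hC, h⟩ := exists_norm_wzTerm_le hx hx' hx1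
  intro y
  have h1 : DifferentiableOn ℂ (wzSum x) (Metric.ball 0 (‖y‖ + 1)) := by
    refine differentiableOn_tsum_of_summable_norm
      (summable_geometric_two.mul_left (C * Real.exp (7 / 2 * Real.pi * (‖y‖ + 1))))
      (fun n => (differentiable_wzTerm x n).differentiableOn) Metric.isOpen_ball fun n u hu => ?_
    refine (h n u).trans ?_
    have hu' : ‖u‖ ≤ ‖y‖ + 1 := by simpa using (Metric.mem_ball.1 hu).le
    gcongr
  exact h1.differentiableAt (Metric.isOpen_ball.mem_nhds (by simp))

/-- The partner of `wzTerm` in the WZ pair, up to the common weight. -/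
noncomputable def wzPartner (x : ℝ) (n : ℕ) (v : ℂ) : ℂ :=
  wzWeight x n * (2 * v) * ∏ j ∈ Finset.range n, (((x + j : ℝ) : ℂ) ^ 2 - v ^ 2) ^ 4

theorem prod_shift_left (x : ℝ) (v : ℂ) (n : ℕ) :
    (x + v) * ∏ j ∈ Finset.range n, (((1 / 2 + x + j : ℝ) : ℂ) ^ 2 - (v + 1 / 2) ^ 2) =
      (∏ j ∈ Finset.range n, (((x + j : ℝ) : ℂ) ^ 2 - v ^ 2)) * (((x + n : ℝ) : ℂ) + v) := by
  induction n with
  | zero => simp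
  | succ n ih =>
    rw [Finset.prod_range_succ, ← mul_assoc, ih, Finset.prod_range_succ]
    push_cast
    ring

theorem prod_shift_right (x : ℝ) (v : ℂ) (n : ℕ) :
    (x - v) * ∏ j ∈ Finset.range n, (((1 / 2 + x + j : ℝ) : ℂ) ^ 2 - (v - 1 / 2) ^ 2) =
      (∏ j ∈ Finset.range n, (((x + j : ℝ) : ℂ) ^ 2 - v ^ 2)) * (((x + n : ℝ) : ℂ) - v) := by
  have h := prod_shift_left x (-v) n
  have e : (-v + 1 / 2) ^ 2 = (v - 1 / 2) ^ 2 := by ring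
  simpa only [e, ← sub_eq_add_neg, neg_sq] using h

theorem wzTerm_add_one_sub (hx : -5 / 4 < x) (hx' : x < -3 / 4) (hx1 : x ≠ -1) (n : ℕ) (y : ℂ) :
    (x + (y + 1 / 2)) ^ 4 * wzTerm x n (y + 1) - (x - (y + 1 / 2)) ^ 4 * wzTerm x n y =
      wzPartner x (n + 1) (y + 1 / 2) - wzPartner x n (y + 1 / 2) := by
  have h1 := prod_shift_left x (y + 1 / 2) n
  have h2 := prod_shift_right x (y + 1 / 2) n
  rw [add_assoc, show (1 / 2 : ℂ) + 1 / 2 = 1 by norm_num] at h1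
  rw [add_sub_cancel_right] at h2
  have hN2 : x + n + 1 / 2 ≠ 0 := abs_pos.1 (by linarith [one_div_four_le_abs hx hx' n])
  have h3 := wzCert_add_one (add_natCast_ne_zero hx hx' hx1 n) hN2 y
  have e1 : (x + (y + 1 / 2)) ^ 4 * wzTerm x n (y + 1) = wzWeight x n * wzCert (x + n) (y + 1) *
      ((x + (y + 1 / 2)) * ∏ j ∈ Finset.range n, (((1 / 2 + x + j : ℝ) : ℂ) ^ 2 - (y + 1) ^ 2)) ^ 4 := by
    rw [wzTerm, Finset.prod_pow]; ring
  have e2 : (x - (y + 1 / 2)) ^ 4 * wzTerm x n y = wzWeight x n * wzCert (x + n) y *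
      ((x - (y + 1 / 2)) * ∏ j ∈ Finset.range n, (((1 / 2 + x + j : ℝ) : ℂ) ^ 2 - y ^ 2)) ^ 4 := by
    rw [wzTerm, Finset.prod_pow]; ring
  rw [e1, e2, h1, h2, wzPartner, wzPartner, Finset.prod_pow, Finset.prod_pow, wzWeight, wzWeight,
    Finset.prod_range_succ, Finset.prod_range_succ]
  rw [ofReal_mul]
  linear_combination ((∏ j ∈ Finset.range n, wzRatio (x + j) : ℝ) : ℂ) *
    (∏ j ∈ Finset.range n, (((x + j : ℝ) : ℂ) ^ 2 - (y + 1 / 2) ^ 2)) ^ 4 * h3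

theorem tendsto_wzPartner (x : ℝ) (v : ℂ) : Tendsto (fun n => wzPartner x n v) atTop (𝓝 0) := by
  obtain ⟨C, _, h⟩ := exists_le_mul_pow (u := fun n => ‖wzPartner x n v‖) (fun n => norm_nonneg _)
    (q := 1 / 2) (by norm_num) (by
      filter_upwards [tendsto_natCast_atTop_atTop.eventually_ge_atTop (10 + 4 * ‖v‖ - x)] with n hn
      have hv := norm_nonneg v
      have hN : 10 + 4 * ‖v‖ ≤ x + n := by linarith
      set N := x + n with hNdef
      have hN0 : 0 < N := by linarith
      have h1 : ‖(N : ℂ) ^ 2 - v ^ 2‖ ≤ 17 / 16 * N ^ 2 := by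
        refine (norm_sub_le _ _).trans ?_
        rw [norm_pow, norm_pow, norm_real, Real.norm_eq_abs, sq_abs]
        nlinarith
      have h2 : wzRatio N ≤ 2 / (16 * N ^ 8) := by
        unfold wzRatio
        rw [div_le_div_iff₀ (by positivity) (by positivity)]
        have h3 : (N + 1 / 4) * (N + 3 / 4) ≤ 2 * N ^ 2 := by nlinarith
        calc (N + 1 / 4) * (N + 3 / 4) * (16 * N ^ 8) ≤ 2 * N ^ 2 * (16 * N ^ 8) := by gcongr
          _ = 2 * (16 * N ^ 5 * N ^ 5) := by ring
          _ ≤ _ := by gcongr; linarith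
      have h0 : 0 ≤ wzRatio N := by unfold wzRatio; positivity
      have e : wzPartner x (n + 1) v = wzPartner x n v * (wzRatio N * ((N : ℂ) ^ 2 - v ^ 2) ^ 4) := by
        rw [wzPartner, wzPartner, wzWeight, wzWeight, Finset.prod_range_succ, Finset.prod_range_succ,
          ofReal_mul, hNdef]
        ring
      rw [e, norm_mul, norm_mul, norm_pow, norm_real, Real.norm_of_nonneg h0, mul_comm]
      gcongr
      calc wzRatio N * ‖(N : ℂ) ^ 2 - v ^ 2‖ ^ 4 ≤ 2 / (16 * N ^ 8) * (17 / 16 * N ^ 2) ^ 4 := by gcongr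
        _ = 2 / 16 * (17 / 16) ^ 4 := by field_simp
        _ ≤ _ := by norm_num)
  refine squeeze_zero_norm h ?_
  have := (tendsto_pow_atTop_nhds_zero_of_lt_one (r := (1 / 2 : ℝ)) (by norm_num) (by norm_num)).const_mul C
  simpa using this

theorem wzSum_add_one (hx : -5 / 4 < x) (hx' : x < -3 / 4) (hx1 : x ≠ -1) (y : ℂ) :
    (x + (y + 1 / 2)) ^ 4 * wzSum x (y + 1) - (x - (y + 1 / 2)) ^ 4 * wzSum x y =
      -(2 * (y + 1 / 2)) := by
  have h1 := (((summable_wzTerm hx hx' hx1 (y + 1)).hasSum.mul_left ((x + (y + 1 / 2)) ^ 4)).sub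
    ((summable_wzTerm hx hx' hx1 y).hasSum.mul_left ((x - (y + 1 / 2)) ^ 4))).tendsto_sum_nat
  have e : ∀ n, ∑ i ∈ Finset.range n,
      (wzPartner x (i + 1) (y + 1 / 2) - wzPartner x i (y + 1 / 2)) =
      wzPartner x n (y + 1 / 2) - wzPartner x 0 (y + 1 / 2) :=
    Finset.sum_range_sub fun i => wzPartner x i (y + 1 / 2)
  simp only [wzTerm_add_one_sub hx hx' hx1, e] at h1
  have h2 := (tendsto_wzPartner x (y + 1 / 2)).sub_const (wzPartner x 0 (y + 1 / 2))
  have h3 := tendsto_nhds_unique h1 h2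
  simpa [wzSum, wzPartner, wzWeight] using h3

end

/-- The quotient `(a)_k / k!`. -/
noncomputable def risingQuot (a : ℂ) (k : ℕ) : ℂ := ∏ j ∈ Finset.range k, (a + j) / (j + 1)

/-- The very-well-poised series `∑ (a + 2k) ((a)_k / k!)⁴`. -/
noncomputable def wellPoisedSum (a : ℂ) : ℂ := ∑' k : ℕ, (a + 2 * k) * risingQuot a k ^ 4

theorem risingQuot_succ (a : ℂ) (k : ℕ) :
    risingQuot a (k + 1) = risingQuot a k * ((a + k) / (k + 1)) :=
  Finset.prod_range_succ _ _

theorem differentiable_risingQuot (k : ℕ) : Differentiable ℂ (fun a => risingQuot a k) := by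
  unfold risingQuot
  fun_prop

theorem norm_risingQuot_sq_le {a : ℂ} (h₁ : -3 ≤ a.re) (h₂ : a.re ≤ -1) (k : ℕ) :
    ‖risingQuot a (k + 2)‖ ^ 2 ≤ (‖a‖ * ‖a + 1‖ / ((k + 1) * (k + 2))) ^ 2 *
      ∏ i ∈ Finset.range k, (1 + |a.im| ^ 2 / ((i : ℝ) + 1) ^ 2) := by
  induction k with
  | zero =>
    simp only [risingQuot, Finset.prod_range_succ, Finset.prod_range_zero]
    apply le_of_eq
    norm_num
    ring
  | succ k ih =>
    rw [show k + 1 + 2 = k + 2 + 1 by ring, risingQuot_succ, norm_mul, mul_pow,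
      Finset.prod_range_succ]
    have hk := k.cast_nonneg (α := ℝ)
    have h3 : ‖(a + (k + 2 : ℕ)) / ((k + 2 : ℕ) + 1)‖ ^ 2 ≤
        ((k + 1) / (k + 3)) ^ 2 * (1 + |a.im| ^ 2 / ((k : ℝ) + 1) ^ 2) := by
      have e : ‖((k + 2 : ℕ) : ℂ) + 1‖ = k + 3 := by
        rw [← Nat.cast_succ, Complex.norm_natCast]; push_cast; ring
      rw [norm_div, e, div_pow, div_pow, Complex.sq_norm, Complex.normSq_apply]
      have e2 : ((k : ℝ) + 1) ^ 2 / (k + 3) ^ 2 * (1 + |a.im| ^ 2 / ((k : ℝ) + 1) ^ 2) =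
          ((k + 1) ^ 2 + a.im ^ 2) / (k + 3) ^ 2 := by
        rw [sq_abs]; field_simp
      rw [e2]
      refine div_le_div_of_nonneg_right ?_ (by positivity)
      simp only [add_re, add_im, natCast_re, natCast_im]
      push_cast
      nlinarith
    calc _ ≤ _ := mul_le_mul ih h3 (by positivity) (by positivity)
      _ = _ := by push_cast; field_simp; ring

theorem norm_risingQuot_pow_four_le {a : ℂ} (h₁ : -3 ≤ a.re) (h₂ : a.re ≤ -1) (k : ℕ) :
    ‖risingQuot a (k + 2)‖ ^ 4 ≤
      (1 + ‖a‖) ^ 8 * Real.exp (2 * Real.pi * |a.im|) / ((k + 1) * (k + 2)) ^ 4 := by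
  have h := norm_risingQuot_sq_le h₁ h₂ k
  have h3 := prod_one_add_sq_div_sq_le_exp (abs_nonneg a.im) k
  have h4 : ‖a + 1‖ ≤ 1 + ‖a‖ := by
    refine (norm_add_le _ _).trans ?_
    rw [norm_one, add_comm]
  have h5 : ‖risingQuot a (k + 2)‖ ^ 2 ≤
      ((1 + ‖a‖) * (1 + ‖a‖) / ((k + 1) * (k + 2))) ^ 2 * Real.exp (Real.pi * |a.im|) := by
    refine h.trans ?_
    gcongr
    linarith
  calc ‖risingQuot a (k + 2)‖ ^ 4 = (‖risingQuot a (k + 2)‖ ^ 2) ^ 2 := by ring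
    _ ≤ _ := pow_le_pow_left₀ (by positivity) h5 2
    _ = _ := by
      rw [show 2 * Real.pi * |a.im| = Real.pi * |a.im| + Real.pi * |a.im| by ring, Real.exp_add]
      field_simp

theorem norm_wellPoised_term_le {a : ℂ} (h₁ : -3 ≤ a.re) (h₂ : a.re ≤ -1) (k : ℕ) :
    ‖(a + 2 * k) * risingQuot a k ^ 4‖ ≤
      108 * (1 + ‖a‖) ^ 9 * Real.exp (2 * Real.pi * |a.im|) / ((k : ℝ) + 1) ^ 3 := by
  have hE : 1 ≤ Real.exp (2 * Real.pi * |a.im|) := Real.one_le_exp (by positivity)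
  have hn := norm_nonneg a
  match k with
  | 0 =>
    have h3 : (1 + ‖a‖) ≤ (1 + ‖a‖) ^ 9 := le_self_pow₀ (by linarith) (by norm_num)
    simp [risingQuot]
    nlinarith
  | 1 =>
    have h3 : (1 + ‖a‖) ^ 5 ≤ (1 + ‖a‖) ^ 9 := pow_le_pow_right₀ (by linarith) (by norm_num)
    have h4 : ‖a + 2‖ ≤ 2 * (1 + ‖a‖) := by
      refine (norm_add_le _ _).trans ?_
      rw [Complex.norm_two]; linarith
    simp [risingQuot]
    calc ‖a + 2‖ * ‖a‖ ^ 4 ≤ 2 * (1 + ‖a‖) * (1 + ‖a‖) ^ 4 := by gcongr; linarith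
      _ = 2 * (1 + ‖a‖) ^ 5 * 1 := by ring
      _ ≤ 2 * (1 + ‖a‖) ^ 9 * Real.exp (2 * Real.pi * |a.im|) := by gcongr
      _ ≤ _ := by
        rw [le_div_iff₀ (by norm_num)]
        have : 0 ≤ (1 + ‖a‖) ^ 9 * Real.exp (2 * Real.pi * |a.im|) := by positivity
        norm_num
        linarith
  | k + 2 =>
    have hk := k.cast_nonneg (α := ℝ)
    have h3 := norm_risingQuot_pow_four_le h₁ h₂ k
    have h4 : ‖a + 2 * ((k + 2 : ℕ) : ℂ)‖ ≤ 4 * (1 + ‖a‖) * (k + 1) := by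
      refine (norm_add_le _ _).trans ?_
      rw [norm_mul, Complex.norm_natCast, Complex.norm_two]
      push_cast
      nlinarith
    rw [norm_mul, norm_pow]
    calc _ ≤ 4 * (1 + ‖a‖) * (k + 1) *
        ((1 + ‖a‖) ^ 8 * Real.exp (2 * Real.pi * |a.im|) / ((k + 1) * (k + 2)) ^ 4) := by gcongr
      _ = 4 * (1 + ‖a‖) ^ 9 * Real.exp (2 * Real.pi * |a.im|) / ((k + 1) ^ 3 * (k + 2) ^ 4) := by
        field_simp
      _ ≤ _ := by
        rw [div_le_div_iff₀ (by positivity) (by positivity)]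
        have h5 : (((k + 2 : ℕ) : ℝ) + 1) ^ 3 ≤ 27 * ((k + 1) ^ 3 * (k + 2) ^ 4) := by
          have h6 : ((k + 2 : ℕ) : ℝ) + 1 ≤ 3 * (k + 1) := by push_cast; linarith
          calc _ ≤ (3 * ((k : ℝ) + 1)) ^ 3 * 1 := by rw [mul_one]; gcongr
            _ ≤ (3 * ((k : ℝ) + 1)) ^ 3 * (k + 2) ^ 4 := by
              gcongr
              exact one_le_pow₀ (by linarith)
            _ = _ := by ring
        calc _ ≤ 4 * (1 + ‖a‖) ^ 9 * Real.exp (2 * Real.pi * |a.im|) *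
              (27 * ((k + 1) ^ 3 * (k + 2) ^ 4)) := by gcongr
          _ = _ := by ring

theorem summable_wellPoised {a : ℂ} (h₁ : -3 ≤ a.re) (h₂ : a.re ≤ -1) :
    Summable fun k : ℕ => (a + 2 * k) * risingQuot a k ^ 4 :=
  Summable.of_norm_bounded (summable_one_div_succ_cube _) (norm_wellPoised_term_le h₁ h₂)

theorem exists_norm_wellPoisedSum_le : ∃ M > 0, ∀ a : ℂ, -3 ≤ a.re → a.re ≤ -1 →
    ‖wellPoisedSum a‖ ≤ M * (1 + ‖a‖) ^ 9 * Real.exp (2 * Real.pi * |a.im|) := by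
  have hs := summable_one_div_succ_cube 1
  refine ⟨108 * (∑' k : ℕ, 1 / ((k : ℝ) + 1) ^ 3), ?_, fun a h₁ h₂ => ?_⟩
  · have := hs.tsum_pos (fun k => by positivity) 0 (by norm_num)
    positivity
  · refine (tsum_of_norm_bounded (hs.hasSum.mul_left
      (108 * (1 + ‖a‖) ^ 9 * Real.exp (2 * Real.pi * |a.im|))) fun k => ?_).trans (le_of_eq (by ring))
    rw [mul_one_div]
    exact norm_wellPoised_term_le h₁ h₂ k

theorem risingQuot_add_one (b : ℂ) (k : ℕ) :
    b * risingQuot (b + 1) k = (b + k) * risingQuot b k := by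
  induction k with
  | zero => simp [risingQuot]
  | succ k ih =>
    rw [risingQuot_succ, ← mul_assoc, ih, risingQuot_succ]
    push_cast
    ring

/-- The boundary term of the contiguous relation. -/
noncomputable def wellPoisedCert (b : ℂ) (k : ℕ) : ℂ :=
  -(k ^ 2 + 3 * b * k + 5 / 2 * b ^ 2) * k ^ 4 * risingQuot b k ^ 4

theorem wellPoisedCert_succ_sub (b : ℂ) (k : ℕ) :
    wellPoisedCert b (k + 1) - wellPoisedCert b k =
      -(1 / 2 * b ^ 5) * ((b + 2 * k) * risingQuot b k ^ 4) -
        (1 + 2 * b) * b ^ 4 * ((b + 1 + 2 * k) * risingQuot (b + 1) k ^ 4) := by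
  have h := risingQuot_add_one b k
  have h1 : ((k : ℂ) + 1) ^ 4 * risingQuot b (k + 1) ^ 4 = (b + k) ^ 4 * risingQuot b k ^ 4 := by
    have hk : (k : ℂ) + 1 ≠ 0 := by exact_mod_cast k.succ_ne_zero
    rw [risingQuot_succ]
    field_simp
  have h2 : b ^ 4 * risingQuot (b + 1) k ^ 4 = (b + k) ^ 4 * risingQuot b k ^ 4 := by
    rw [← mul_pow, h, mul_pow]
  unfold wellPoisedCert
  push_cast
  linear_combination (-((k + 1) ^ 2 + 3 * b * (k + 1) + 5 / 2 * b ^ 2)) * h1 +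
    (1 + 2 * b) * (b + 1 + 2 * k) * h2

theorem tendsto_wellPoisedCert {b : ℂ} (h₁ : -3 ≤ b.re) (h₂ : b.re ≤ -1) :
    Tendsto (wellPoisedCert b) atTop (𝓝 0) := by
  rw [← tendsto_add_atTop_iff_nat 2]
  set K := (1 + ‖b‖) ^ 8 * Real.exp (2 * Real.pi * |b.im|) with hK
  have hb := norm_nonneg b
  refine squeeze_zero_norm (a := fun k : ℕ => 4 * (1 + ‖b‖) ^ 2 * 3 * K * (1 / ((k : ℝ) + 1))) (fun k => ?_) ?_
  · have hk := k.cast_nonneg (α := ℝ)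
    have h := norm_risingQuot_pow_four_le h₁ h₂ k
    have h3 : ‖((k + 2 : ℕ) : ℂ) ^ 2 + 3 * b * (k + 2 : ℕ) + 5 / 2 * b ^ 2‖ ≤
        3 * (1 + ‖b‖) ^ 2 * (k + 2) ^ 2 := by
      refine (norm_add_le _ _).trans ?_
      refine (add_le_add_left (norm_add_le _ _) _).trans ?_
      simp only [norm_mul, norm_pow, Complex.norm_natCast, norm_div, Complex.norm_ofNat]
      push_cast
      nlinarith [mul_nonneg hb hk, mul_nonneg hb hb, mul_nonneg (mul_nonneg hb hb) hk, sq_nonneg (‖b‖ * k)]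
    rw [wellPoisedCert, norm_mul, norm_mul, norm_neg, norm_pow, norm_pow, Complex.norm_natCast]
    calc _ ≤ 3 * (1 + ‖b‖) ^ 2 * (k + 2) ^ 2 * (k + 2) ^ 4 * (K / ((k + 1) * (k + 2)) ^ 4) := by
          push_cast at h3 ⊢
          gcongr
      _ = 3 * (1 + ‖b‖) ^ 2 * K * ((k + 2) ^ 2 / (k + 1) ^ 4) := by field_simp
      _ ≤ 3 * (1 + ‖b‖) ^ 2 * K * (4 / (k + 1)) := by
          have h5 : ((k : ℝ) + 2) ^ 2 / (k + 1) ^ 4 ≤ 4 / (k + 1) := by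
            rw [div_le_div_iff₀ (by positivity) (by positivity)]
            have : ((k : ℝ) + 2) ^ 2 ≤ 4 * (k + 1) ^ 2 := by nlinarith
            calc ((k : ℝ) + 2) ^ 2 * (k + 1) ≤ 4 * (k + 1) ^ 2 * (k + 1) := by gcongr
              _ = 4 * ((k : ℝ) + 1) ^ 3 := by ring
              _ ≤ _ := by gcongr <;> linarith
          gcongr
      _ = _ := by ring
  · have := (tendsto_one_div_add_atTop_nhds_zero_nat (𝕜 := ℝ)).const_mul (4 * (1 + ‖b‖) ^ 2 * 3 * K)
    simpa using this

theorem wellPoisedSum_contiguous {b : ℂ} (h₁ : -3 ≤ b.re) (h₂ : b.re ≤ -2) :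
    b * wellPoisedSum b = -2 * (1 + 2 * b) * wellPoisedSum (b + 1) := by
  have hs := (((summable_wellPoised (a := b) h₁ (by linarith)).hasSum.mul_left (-(1 / 2 * b ^ 5))).sub
    ((summable_wellPoised (a := b + 1) (by simp; linarith) (by simp; linarith)).hasSum.mul_left
      ((1 + 2 * b) * b ^ 4))).tendsto_sum_nat
  have e : ∀ n, ∑ k ∈ Finset.range n, (wellPoisedCert b (k + 1) - wellPoisedCert b k) =
      wellPoisedCert b n - wellPoisedCert b 0 := Finset.sum_range_sub _
  simp only [← wellPoisedCert_succ_sub, e] at hs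
  have h := tendsto_nhds_unique hs ((tendsto_wellPoisedCert h₁ (by linarith)).sub_const _)
  have h0 : wellPoisedCert b 0 = 0 := by simp [wellPoisedCert]
  rw [h0, sub_zero] at h
  have hb : b ≠ 0 := by rintro rfl; simp at h₂; linarith
  have h3 : b ^ 4 * (b * wellPoisedSum b + 2 * (1 + 2 * b) * wellPoisedSum (b + 1)) = 0 := by
    unfold wellPoisedSum
    linear_combination (-2) * h
  have := (mul_eq_zero.1 h3).resolve_left (pow_ne_zero 4 hb)
  linear_combination this

theorem differentiableOn_wellPoisedSum :
    DifferentiableOn ℂ wellPoisedSum {a | -3 < a.re ∧ a.re < -3 + 2} := by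
  intro a ha
  have hopen : IsOpen {a : ℂ | -3 < a.re ∧ a.re < -3 + 2} :=
    (isOpen_lt continuous_const continuous_re).inter (isOpen_lt continuous_re continuous_const)
  have hopen' := hopen.inter (Metric.isOpen_ball (x := (0 : ℂ)) (ε := ‖a‖ + 1))
  have h1 : DifferentiableOn ℂ wellPoisedSum
      ({a : ℂ | -3 < a.re ∧ a.re < -3 + 2} ∩ Metric.ball 0 (‖a‖ + 1)) := by
    refine differentiableOn_tsum_of_summable_norm
      (summable_one_div_succ_cube
        (108 * (1 + (‖a‖ + 1)) ^ 9 * Real.exp (2 * Real.pi * (‖a‖ + 1))))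
      (fun k => ?_) hopen' (fun k u hu => ?_)
    · have := differentiable_risingQuot k
      fun_prop
    · refine (norm_wellPoised_term_le hu.1.1.le (by linarith [hu.1.2]) k).trans ?_
      have hu' : ‖u‖ ≤ ‖a‖ + 1 := by simpa using (Metric.mem_ball.1 hu.2).le
      have hi := (Complex.abs_im_le_norm u).trans hu'
      gcongr
  exact (h1.differentiableAt (hopen'.mem_nhds ⟨ha, by simp⟩)).differentiableWithinAt

theorem wellPoisedSum_neg_two : wellPoisedSum (-2) = 0 := by
  unfold wellPoisedSum
  have h3 : ∀ k : ℕ, risingQuot (-2) (k + 3) = 0 := fun k => by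
    refine Finset.prod_eq_zero (i := 2) (by simp) (by simp)
  rw [tsum_eq_sum (s := Finset.range 3)]
  · simp [Finset.sum_range_succ, risingQuot, Finset.prod_range_succ]
    norm_num
  · intro k hk
    obtain ⟨j, rfl⟩ := Nat.exists_eq_add_of_le' (not_lt.1 (mt Finset.mem_range.2 hk))
    rw [h3]
    simp

theorem deriv_wellPoisedSum_neg_two : deriv wellPoisedSum (-2) = 6 := by
  have hopen : IsOpen {a : ℂ | -3 < a.re ∧ a.re < -3 + 2} :=
    (isOpen_lt continuous_const continuous_re).inter (isOpen_lt continuous_re continuous_const)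
  have hopen' := hopen.inter (Metric.isOpen_ball (x := (0 : ℂ)) (ε := 3))
  have hs := Complex.hasSum_deriv_of_summable_norm (z := -2)
    (F := fun (k : ℕ) (a : ℂ) => (a + 2 * k) * risingQuot a k ^ 4)
    (summable_one_div_succ_cube (108 * (1 + 3) ^ 9 * Real.exp (2 * Real.pi * 3)))
    (fun k => by
      have := differentiable_risingQuot k
      fun_prop) hopen' (fun k u hu => by
      refine (norm_wellPoised_term_le hu.1.1.le (by linarith [hu.1.2]) k).trans ?_
      have hu' : ‖u‖ ≤ 3 := by simpa using (Metric.mem_ball.1 hu.2).le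
      have hi := (Complex.abs_im_le_norm u).trans hu'
      gcongr) ⟨by norm_num, by norm_num⟩
  have hd : ∀ k : ℕ, HasDerivAt (fun a : ℂ => (a + 2 * k) * risingQuot a k ^ 4)
      (1 * risingQuot (-2) k ^ 4 + (-2 + 2 * k) *
        ((4 : ℕ) * risingQuot (-2) k ^ 3 * deriv (fun a => risingQuot a k) (-2))) (-2) := fun k => by
    have h1 := ((hasDerivAt_id (-2 : ℂ)).add_const (2 * (k : ℂ))).mul
      ((differentiable_risingQuot k (-2)).hasDerivAt.pow 4)
    exact h1
  simp only [fun k => (hd k).deriv] at hs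
  have h3 : ∀ k : ℕ, risingQuot (-2) (k + 3) = 0 := fun k => by
    refine Finset.prod_eq_zero (i := 2) (by simp) (by simp)
  have e2 : deriv (fun a => risingQuot a 2) (-2) = -3 / 2 := by
    have : HasDerivAt (fun a : ℂ => risingQuot a 2) (-3 / 2) (-2) := by
      have h1 := ((hasDerivAt_id (-2 : ℂ)).mul ((hasDerivAt_id (-2 : ℂ)).add_const 1)).div_const 2
      refine (h1.congr_deriv (by norm_num)).congr_of_eventuallyEq (Eventually.of_forall fun a => ?_)
      simp [risingQuot, Finset.prod_range_succ]
      ring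
    exact this.deriv
  have e1 : deriv (fun a => risingQuot a 1) (-2) = 1 := by
    have : (fun a => risingQuot a 1) = fun a => a := by
      funext a; simp [risingQuot]
    rw [this]; simp
  have e0 : deriv (fun a => risingQuot a 0) (-2) = 0 := by
    simp [risingQuot]
  have hs2 := hasSum_sum_of_ne_finset_zero (L := SummationFilter.unconditional ℕ) (s := Finset.range 3)
    (f := fun k : ℕ => 1 * risingQuot (-2) k ^ 4 + (-2 + 2 * (k : ℂ)) *
        ((4 : ℕ) * risingQuot (-2) k ^ 3 * deriv (fun a => risingQuot a k) (-2))) fun k hk => by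
      obtain ⟨j, rfl⟩ := Nat.exists_eq_add_of_le' (not_lt.1 (mt Finset.mem_range.2 hk))
      rw [h3]
      simp
  have h := hs.unique hs2
  change deriv wellPoisedSum (-2) = _ at h
  rw [h]
  simp only [Finset.sum_range_succ, Finset.sum_range_zero, e0, e1, e2]
  simp [risingQuot, Finset.prod_range_succ]
  norm_num

theorem norm_Gamma_quot_le {a : ℂ} (h : a.re ≤ -1) :
    ‖Complex.Gamma (1 - a) / Complex.Gamma (1 / 2 - a)‖ ≤ 4 / Real.Gamma (3 / 2) * (1 + ‖a‖) ^ 2 := by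
  have hG : 0 < Real.Gamma (3 / 2) := Real.Gamma_pos_of_pos (by norm_num)
  have h0 : (1 / 2 : ℂ) - a ≠ 0 := fun h0 => by
    have := congrArg re h0
    norm_num at this
    linarith
  have h1 : (3 / 2 : ℂ) - a ≠ 0 := fun h0 => by
    have := congrArg re h0
    norm_num at this
    linarith
  have h2 := norm_Gamma_div_Gamma_add_le (w := 1 - a) (s := 3 / 2) (by simp; linarith) (by norm_num)
  have e : Complex.Gamma (1 - a + (3 / 2 : ℝ)) =
      (3 / 2 - a) * ((1 / 2 - a) * Complex.Gamma (1 / 2 - a)) := by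
    rw [← Complex.Gamma_add_one _ h0, show (1 / 2 : ℂ) - a + 1 = 3 / 2 - a by ring,
      ← Complex.Gamma_add_one _ h1]
    congr 1
    push_cast
    ring
  rw [e] at h2
  have e2 : Complex.Gamma (1 - a) / Complex.Gamma (1 / 2 - a) = (3 / 2 - a) * (1 / 2 - a) *
      (Complex.Gamma (1 - a) / ((3 / 2 - a) * ((1 / 2 - a) * Complex.Gamma (1 / 2 - a)))) := by
    generalize Complex.Gamma (1 / 2 - a) = G
    generalize (1 / 2 : ℂ) - a = B at h0
    generalize (3 / 2 : ℂ) - a = B' at h1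
    field_simp
  have hn := norm_nonneg a
  have h3 : ‖(3 / 2 : ℂ) - a‖ ≤ 2 * (1 + ‖a‖) := by
    refine (norm_sub_le _ _).trans ?_
    norm_num
    linarith
  have h4 : ‖(1 / 2 : ℂ) - a‖ ≤ 2 * (1 + ‖a‖) := by
    refine (norm_sub_le _ _).trans ?_
    norm_num
    linarith
  have h5 : 1 / (Real.Gamma (3 / 2) * (1 - a).re) ≤ 1 / Real.Gamma (3 / 2) := by
    apply one_div_le_one_div_of_le hG
    simp only [sub_re, one_re]
    nlinarith
  rw [e2, norm_mul, norm_mul]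
  calc _ ≤ 2 * (1 + ‖a‖) * (2 * (1 + ‖a‖)) * (1 / Real.Gamma (3 / 2)) := by
        gcongr
        exact h2.trans h5
    _ = _ := by ring

/-- The normalised series, which turns out to be a multiple of `sin (π a)`. -/
noncomputable def wellPoisedAux (a : ℂ) : ℂ :=
  wellPoisedSum a * (4 : ℂ) ^ a * (Complex.Gamma (1 - a) / Complex.Gamma (1 / 2 - a))

theorem wellPoisedAux_add_one {a : ℂ} (h₁ : -3 < a.re) (h₂ : a.re < -3 + 1) :
    wellPoisedAux (a + 1) = -1 * wellPoisedAux a := by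
  have h := wellPoisedSum_contiguous (b := a) h₁.le (by linarith)
  have hG : Complex.Gamma (-1 / 2 - a) ≠ 0 :=
    Complex.Gamma_ne_zero_of_re_pos (by norm_num; linarith)
  have ha : -a ≠ 0 := fun h => by
    have := congrArg re h
    simp at this
    linarith
  have ha2 : -1 / 2 - a ≠ 0 := fun h => by
    have := congrArg re h
    norm_num at this
    linarith
  have ha3 : -1 - 2 * a ≠ 0 := fun h => ha2 (by linear_combination h / 2)
  have e1 := Complex.Gamma_add_one _ ha
  have e2 := Complex.Gamma_add_one _ ha2
  unfold wellPoisedAux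
  rw [show (1 : ℂ) - (a + 1) = -a by ring, show (1 / 2 : ℂ) - (a + 1) = -1 / 2 - a by ring,
    show (1 : ℂ) - a = -a + 1 by ring, show (1 / 2 : ℂ) - a = -1 / 2 - a + 1 by ring, e1, e2,
    Complex.cpow_add _ _ (by norm_num), Complex.cpow_one]
  generalize Complex.Gamma (-1 / 2 - a) = G at hG
  have e3 : wellPoisedSum (a + 1) * (-1 / 2 - a) * 4 = a * wellPoisedSum a := by
    rw [h]; ring
  generalize (-1 / 2 : ℂ) - a = B at ha2 e3
  field_simp
  linear_combination Complex.Gamma (-a) * e3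

theorem exists_wellPoisedAux_eq : ∃ β : ℂ, ∀ a : ℂ, -3 < a.re → a.re < -1 →
    wellPoisedAux a = β * sin (Real.pi * a) := by
  have hdG : ∀ a : ℂ, a.re < -1 → DifferentiableAt ℂ
      (fun a => Complex.Gamma (1 - a) / Complex.Gamma (1 / 2 - a)) a := fun a ha => by
    have d1 : DifferentiableAt ℂ Complex.Gamma (1 - a) :=
      Complex.differentiableAt_Gamma _ fun m h => by
        have := congrArg re h
        simp at this
        linarith [m.cast_nonneg (α := ℝ)]
    have d2 : DifferentiableAt ℂ Complex.Gamma (1 / 2 - a) :=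
      Complex.differentiableAt_Gamma _ fun m h => by
        have := congrArg re h
        norm_num at this
        linarith [m.cast_nonneg (α := ℝ)]
    exact (d1.comp a (by fun_prop)).div (d2.comp a (by fun_prop))
      (Complex.Gamma_ne_zero_of_re_pos (by norm_num; linarith))
  have hd : DifferentiableOn ℂ wellPoisedAux {a | -3 < a.re ∧ a.re < -3 + 2} := by
    refine (differentiableOn_wellPoisedSum.mul ?_).mul fun a ha =>
      (hdG a (by linarith [ha.2])).differentiableWithinAt
    exact (differentiable_id.const_cpow (Or.inl (by norm_num))).differentiableOn
  obtain ⟨f, hf, hfp, hfe⟩ := exists_entire_extension (ε := -1) (by norm_num) hd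
    fun a h₁ h₂ => wellPoisedAux_add_one h₁ h₂
  have hpn : ∀ y, ‖f (y + 1)‖ = ‖f y‖ := fun y => by rw [hfp]; simp
  have h0 : f 0 = 0 := by
    have h1 := hfe (-2) (by norm_num) (by norm_num)
    rw [wellPoisedAux, wellPoisedSum_neg_two, zero_mul, zero_mul] at h1
    have h2 := hfp (-2)
    have h3 := hfp (-2 + 1)
    rw [h2, h1, show (-2 : ℂ) + 1 + 1 = 0 by norm_num] at h3
    simpa using h3
  have hz := apply_intCast_eq_zero hpn h0
  have hg : SmallGrowth (3 * Real.pi) f := by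
    obtain ⟨M, hM, hb⟩ := exists_norm_wellPoisedSum_le
    have hG : 0 < Real.Gamma (3 / 2) := Real.Gamma_pos_of_pos (by norm_num)
    obtain ⟨K, hK, hKb⟩ := exists_one_add_pow_le_exp 11 (ε := Real.pi / 2) (by positivity)
    refine SmallGrowth.of_strip (-5 / 2) hpn fun ε hε => ?_
    set L := M * (4 / Real.Gamma (3 / 2)) * (4 ^ 11 * K) with hL
    have hL0 : 0 < L := by positivity
    obtain ⟨T, hT⟩ := eventually_atTop.1 ((Real.tendsto_exp_atBot.comp
      (tendsto_id.const_mul_atTop_of_neg (r := -(Real.pi / 2)) (by linarith [Real.pi_pos]))).eventually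
        (gt_mem_nhds (show (0 : ℝ) < ε / L by positivity)))
    refine ⟨T, fun y h₁ h₂ hy => ?_⟩
    have hT' := hT _ hy
    simp only [Function.comp, id] at hT'
    rw [hfe y (by linarith) (by linarith), wellPoisedAux, norm_mul, norm_mul]
    have hn := norm_nonneg y
    have h4 : ‖(4 : ℂ) ^ y‖ ≤ 1 := by
      rw [show (4 : ℂ) = ((4 : ℝ) : ℂ) by norm_num, Complex.norm_cpow_eq_rpow_re_of_pos (by norm_num)]
      exact Real.rpow_le_one_of_one_le_of_nonpos (by norm_num) (by linarith)
    have h5 : 1 + ‖y‖ ≤ 4 * (1 + |y.im|) := by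
      have := Complex.norm_le_abs_re_add_abs_im y
      have h6 : |y.re| ≤ 3 := abs_le.2 ⟨by linarith, by linarith⟩
      linarith [abs_nonneg y.im]
    calc _ ≤ M * (1 + ‖y‖) ^ 9 * Real.exp (2 * Real.pi * |y.im|) * 1 *
          (4 / Real.Gamma (3 / 2) * (1 + ‖y‖) ^ 2) := by
          gcongr
          · exact hb y (by linarith) (by linarith)
          · exact norm_Gamma_quot_le (by linarith)
      _ = M * (4 / Real.Gamma (3 / 2)) * Real.exp (2 * Real.pi * |y.im|) * (1 + ‖y‖) ^ 11 := by ring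
      _ ≤ M * (4 / Real.Gamma (3 / 2)) * Real.exp (2 * Real.pi * |y.im|) *
          (4 * (1 + |y.im|)) ^ 11 := by gcongr
      _ = M * (4 / Real.Gamma (3 / 2)) * Real.exp (2 * Real.pi * |y.im|) *
          (4 ^ 11 * (1 + |y.im|) ^ 11) := by rw [mul_pow]
      _ ≤ M * (4 / Real.Gamma (3 / 2)) * Real.exp (2 * Real.pi * |y.im|) *
          (4 ^ 11 * (K * Real.exp (Real.pi / 2 * |y.im|))) := by
          gcongr
          exact hKb _ (abs_nonneg _)
      _ = L * Real.exp (-(Real.pi / 2) * |y.im|) * Real.exp (3 * Real.pi * |y.im|) := by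
          rw [show 3 * Real.pi * |y.im| = 2 * Real.pi * |y.im| + Real.pi / 2 * |y.im| +
            Real.pi / 2 * |y.im| by ring, Real.exp_add, Real.exp_add, neg_mul, Real.exp_neg, hL]
          field_simp
      _ ≤ L * (ε / L) * Real.exp (3 * Real.pi * |y.im|) := by gcongr
      _ = _ := by field_simp
  refine ⟨sinDiv f 0, fun a h₁ h₂ => ?_⟩
  have hc := periodic_eq_const (differentiable_sinDiv hf hz)
    (fun y => by rw [sinDiv_add_one hfp]; ring)
    (by have := hg.sinDiv; rwa [show 3 * Real.pi - Real.pi = 2 * Real.pi by ring] at this) a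
  rw [← hfe a h₁ (by linarith), ← sin_mul_sinDiv hz, hc, mul_comm]

theorem wellPoisedSum_eq {a : ℂ} (h₁ : -3 < a.re) (h₂ : a.re < -1) :
    wellPoisedSum a * (4 : ℂ) ^ a * Complex.Gamma (1 - a) * (Real.pi * Complex.Gamma (1 / 2)) =
      sin (Real.pi * a) * Complex.Gamma (1 / 2 - a) := by
  obtain ⟨β, hβ⟩ := exists_wellPoisedAux_eq
  have hopen : IsOpen {a : ℂ | -3 < a.re ∧ a.re < -3 + 2} :=
    (isOpen_lt continuous_const continuous_re).inter (isOpen_lt continuous_re continuous_const)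
  have hmem : (-2 : ℂ) ∈ {a : ℂ | -3 < a.re ∧ a.re < -3 + 2} := ⟨by norm_num, by norm_num⟩
  have hnhds := hopen.mem_nhds hmem
  have hlim : β * Real.pi = 6 * ((4 : ℂ) ^ (-2 : ℂ) *
      (Complex.Gamma (1 - (-2)) / Complex.Gamma (1 / 2 - (-2)))) := by
    have hd1 : HasDerivAt wellPoisedSum 6 (-2) := by
      rw [← deriv_wellPoisedSum_neg_two]
      exact (differentiableOn_wellPoisedSum.differentiableAt hnhds).hasDerivAt
    have hd2 : DifferentiableAt ℂ (fun a => (4 : ℂ) ^ a *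
        (Complex.Gamma (1 - a) / Complex.Gamma (1 / 2 - a))) (-2) := by
      have d1 : DifferentiableAt ℂ Complex.Gamma (1 - (-2)) :=
        Complex.differentiableAt_Gamma _ fun m h => by
          have := congrArg re h
          norm_num at this
          linarith [m.cast_nonneg (α := ℝ)]
      have d2 : DifferentiableAt ℂ Complex.Gamma (1 / 2 - (-2)) :=
        Complex.differentiableAt_Gamma _ fun m h => by
          have := congrArg re h
          norm_num at this
          linarith [m.cast_nonneg (α := ℝ)]
      exact ((differentiable_id.const_cpow (Or.inl (by norm_num))) (-2)).mul
        ((d1.comp (-2) (by fun_prop)).div (d2.comp (-2) (by fun_prop))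
        (Complex.Gamma_ne_zero_of_re_pos (by norm_num)))
    have hd3 := hd1.mul hd2.hasDerivAt
    rw [wellPoisedSum_neg_two, zero_mul, add_zero] at hd3
    have hd4 := (hasDerivAt_sin_pi_mul (-2)).const_mul β
    have hd5 := hd4.congr_of_eventuallyEq (f₁ := wellPoisedSum * fun a => (4 : ℂ) ^ a *
        (Complex.Gamma (1 - a) / Complex.Gamma (1 / 2 - a))) (by
      filter_upwards [hnhds] with a ha
      rw [← hβ a ha.1 (by linarith [ha.2]), wellPoisedAux, Pi.mul_apply, mul_assoc])
    have h := hd5.unique hd3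
    rw [← h, show (Real.pi : ℂ) * -2 = -(2 * Real.pi) by ring, Complex.cos_neg, Complex.cos_two_pi]
    ring
  have hG3 : Complex.Gamma (1 - (-2)) = 2 := by
    have := Complex.Gamma_nat_eq_factorial 2
    norm_num at this ⊢
  have hG52 : Complex.Gamma (1 / 2 - (-2)) = 3 / 4 * Complex.Gamma (1 / 2) := by
    rw [show (1 / 2 : ℂ) - (-2) = 1 / 2 + 1 + 1 by norm_num, Complex.Gamma_add_one _ (by norm_num),
      Complex.Gamma_add_one _ (by norm_num)]
    ring
  have h4 : (4 : ℂ) ^ (-2 : ℂ) = 1 / 16 := by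
    rw [Complex.cpow_neg, show (2 : ℂ) = ((2 : ℕ) : ℂ) by norm_num, Complex.cpow_natCast]
    norm_num
  have hGh : Complex.Gamma (1 / 2) ≠ 0 := Complex.Gamma_ne_zero_of_re_pos (by norm_num)
  have hGa : Complex.Gamma (1 / 2 - a) ≠ 0 :=
    Complex.Gamma_ne_zero_of_re_pos (by norm_num; linarith)
  rw [hG3, hG52, h4] at hlim
  have h5 : β * Real.pi * Complex.Gamma (1 / 2) = 1 := by
    rw [hlim]
    field_simp
    norm_num
  have h6 := hβ a h₁ h₂
  rw [wellPoisedAux, ← mul_div_assoc, div_eq_iff hGa] at h6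
  rw [h6]
  linear_combination (sin (Real.pi * a) * Complex.Gamma (1 / 2 - a)) * h5

/-- The sum over a quarter-plane contour of the WZ pair: an entire function of period `1`. -/
noncomputable def wzPeriodic (x : ℝ) (y : ℂ) : ℂ :=
  quarticSum (recipGammaPair x) (y + 1 / 2) -
    recipGammaPair x (y + 1 / 2) ^ 4 * (y + 1 / 2 - x) ^ 4 * wzSum x y

section

variable {x : ℝ}

theorem differentiable_wzPeriodic (hx : -5 / 4 < x) (hx' : x < -3 / 4) (hx1 : x ≠ -1) :
    Differentiable ℂ (wzPeriodic x) := by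
  have h1 := differentiable_quarticSum_recipGammaPair hx hx'
  have h2 := differentiable_recipGammaPair x
  have h3 := differentiable_wzSum hx hx' hx1
  unfold wzPeriodic
  fun_prop

theorem wzPeriodic_add_one (hx : -5 / 4 < x) (hx' : x < -3 / 4) (hx1 : x ≠ -1) (y : ℂ) :
    wzPeriodic x (y + 1) = wzPeriodic x y := by
  have h1 := quarticSum_eq_add (summable_quarticSum_recipGammaPair hx hx' (y + 1 / 2))
  have h2 := congrArg (· ^ 4) (recipGammaPair_add_one x (y + 1 / 2))
  have h3 := wzSum_add_one hx hx' hx1 y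
  unfold wzPeriodic
  rw [show y + 1 + 1 / 2 = y + 1 / 2 + 1 by ring, h1]
  linear_combination (-wzSum x (y + 1)) * h2 - recipGammaPair x (y + 1 / 2) ^ 4 * h3

theorem recipGammaPair_mul_sub_neg (x : ℝ) (y : ℂ) :
    recipGammaPair x (-y + 1 / 2) * (-y + 1 / 2 - x) =
      recipGammaPair x (y + 1 / 2) * (y + 1 / 2 - x) := by
  have h := recipGammaPair_add_one x (y - 1 / 2)
  have h2 := recipGammaPair_neg x (y - 1 / 2)
  rw [show y - 1 / 2 + 1 = y + 1 / 2 by ring] at h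
  rw [show -(y - 1 / 2) = -y + 1 / 2 by ring] at h2
  rw [h2]
  linear_combination -h

theorem wzPeriodic_sub_neg (x : ℝ) (y : ℂ) :
    wzPeriodic x y - wzPeriodic x (-y) = quarticSum (recipGammaPair x) (y + 1 / 2) -
      quarticSum (recipGammaPair x) (-y + 1 / 2) := by
  have h := congrArg (· ^ 4) (recipGammaPair_mul_sub_neg x y)
  unfold wzPeriodic
  rw [wzSum_neg]
  linear_combination wzSum x y * h

theorem recipGammaPair_add_natCast (x : ℝ) (k : ℕ) :
    recipGammaPair x (x + k) = (-1) ^ k * risingQuot (2 * x) k / Complex.Gamma (1 - 2 * x) := by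
  induction k with
  | zero =>
    simp [recipGammaPair, risingQuot]
    ring_nf
  | succ k ih =>
    have hk : (k : ℂ) + 1 ≠ 0 := by exact_mod_cast k.succ_ne_zero
    have h := recipGammaPair_add_one x (x + k)
    rw [show (1 : ℂ) - x + (x + k) = k + 1 by ring, ih] at h
    rw [risingQuot_succ, pow_succ]
    push_cast
    rw [← add_assoc, eq_div_of_mul_eq hk h]
    field_simp
    ring

theorem quarticSum_recipGammaPair_self (x : ℝ) :
    quarticSum (recipGammaPair x) x = wellPoisedSum (2 * x) / Complex.Gamma (1 - 2 * x) ^ 4 := by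
  unfold quarticSum wellPoisedSum
  rw [← tsum_div_const]
  refine tsum_congr fun k => ?_
  rw [recipGammaPair_add_natCast, div_pow, mul_pow, ← pow_mul, mul_comm k 4, pow_mul]
  norm_num
  ring

theorem quarticSum_recipGammaPair_one_sub (x : ℝ) :
    quarticSum (recipGammaPair x) (1 - x) = 0 := by
  unfold quarticSum
  have : ∀ k : ℕ, recipGammaPair x (1 - x + k) = 0 := fun k => by
    rw [recipGammaPair, show (1 : ℂ) - x - (1 - x + k) = -k by ring, Complex.Gamma_neg_nat_eq_zero]
    simp
  simp [this]

theorem smallGrowth_wzPeriodic_sub_neg (hx : -5 / 4 < x) (hx' : x < -3 / 4) (hx1 : x ≠ -1) :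
    SmallGrowth (4 * Real.pi) fun y => wzPeriodic x y - wzPeriodic x (-y) := by
  have hp := wzPeriodic_add_one hx hx' hx1
  have hpn : ∀ y, wzPeriodic x (-(y + 1)) = wzPeriodic x (-y) := fun y => by
    rw [← hp (-(y + 1))]; congr 1; ring
  refine SmallGrowth.of_strip (-1 / 2) (fun y => by simp only [hp, hpn]) fun ε hε => ?_
  obtain ⟨M, hM, h⟩ := exists_norm_quarticSum_le hx hx'
  refine ⟨max 1 (2 * M / ε), fun y h₁ h₂ hy => ?_⟩
  have hy1 := (le_max_left _ _).trans hy
  have hy2 := (le_max_right _ _).trans hy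
  have hy0 : 0 < |y.im| := by linarith
  rw [wzPeriodic_sub_neg]
  have b1 := h (y + 1 / 2) (by norm_num; linarith) (by norm_num; linarith) (by norm_num; exact hy1)
  have b2 := h (-y + 1 / 2) (by norm_num; linarith) (by norm_num; linarith) (by norm_num; exact hy1)
  have e1 : (y + 1 / 2).im = y.im := by norm_num
  have e2 : |(-y + 1 / 2).im| = |y.im| := by norm_num
  rw [e1] at b1
  rw [e2] at b2
  calc _ ≤ _ := norm_sub_le _ _
    _ ≤ _ := add_le_add b1 b2
    _ = 2 * M / |y.im| * Real.exp (4 * Real.pi * |y.im|) := by ring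
    _ ≤ _ := by
      gcongr
      rw [div_le_iff₀ hy0]
      rw [div_le_iff₀ hε] at hy2
      linarith

theorem sin_two_pi_mul_ne_zero (hx : -5 / 4 < x) (hx' : x < -3 / 4) (hx1 : x ≠ -1) :
    sin (2 * Real.pi * x) ≠ 0 := by
  intro h
  rw [show (2 : ℂ) * Real.pi * x = Real.pi * (2 * x) by ring, sin_pi_mul_eq_zero_iff] at h
  obtain ⟨m, hm⟩ := h
  have hm' : 2 * x = m := by exact_mod_cast hm
  have h1 : (-3 : ℝ) < m := by linarith
  have h2 : (m : ℝ) < -1 := by linarith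
  have h1' : (-3 : ℤ) < m := by exact_mod_cast h1
  have h2' : m < (-1 : ℤ) := by exact_mod_cast h2
  have : m = -2 := by omega
  subst this
  apply hx1
  push_cast at hm'
  linarith

/-- The value of the amplitude of the odd part of `wzPeriodic`. -/
noncomputable def wzAmplitude (x : ℝ) : ℂ :=
  -Complex.Gamma (1 / 2 - 2 * x) /
    ((4 : ℂ) ^ (2 * x : ℂ) * Complex.Gamma (1 - 2 * x) ^ 5 * (Real.pi * Complex.Gamma (1 / 2)))

theorem wzPeriodic_sub_neg_eq (hx : -5 / 4 < x) (hx' : x < -3 / 4) (hx1 : x ≠ -1) (y : ℂ) :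
    wzPeriodic x y - wzPeriodic x (-y) = wzAmplitude x * sin (2 * Real.pi * y) := by
  have hp := wzPeriodic_add_one hx hx' hx1
  have hd := differentiable_wzPeriodic hx hx' hx1
  have hpn : ∀ y, wzPeriodic x (-(y + 1)) = wzPeriodic x (-y) := fun y => by
    rw [← hp (-(y + 1))]; congr 1; ring
  obtain ⟨q, hq, hqp, hqs, hqe⟩ := exists_eq_sin_mul_cos_mul
    (g := fun y => wzPeriodic x y - wzPeriodic x (-y)) (hd.sub (hd.comp differentiable_neg))
    (fun y => by simp only [hp, hpn]) (fun y => by simp)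
    (smallGrowth_wzPeriodic_sub_neg hx hx' hx1)
  have hqc := periodic_eq_const hq hqp
    (by rwa [show 4 * Real.pi - 2 * Real.pi = 2 * Real.pi by ring] at hqs)
  have hs : ∀ y, wzPeriodic x y - wzPeriodic x (-y) = q 0 / 2 * sin (2 * Real.pi * y) := fun y => by
    have := hqe y
    rw [this, hqc, show (2 : ℂ) * Real.pi * y = 2 * (Real.pi * y) by ring, Complex.sin_two_mul]
    ring
  have hv := hs (x - 1 / 2)
  rw [wzPeriodic_sub_neg, sub_add_cancel, show -((x : ℂ) - 1 / 2) + 1 / 2 = 1 - x by ring,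
    quarticSum_recipGammaPair_one_sub, quarticSum_recipGammaPair_self,
    show (2 : ℂ) * Real.pi * (x - 1 / 2) = 2 * Real.pi * x - Real.pi by ring, Complex.sin_sub_pi,
    sub_zero] at hv
  have h2x : ((2 : ℂ) * x).re = 2 * x := by simp
  have hf := wellPoisedSum_eq (a := 2 * x) (by rw [h2x]; linarith) (by rw [h2x]; linarith)
  rw [show (Real.pi : ℂ) * (2 * x) = 2 * Real.pi * x by ring] at hf
  have hsin := sin_two_pi_mul_ne_zero hx hx' hx1
  have hpi : (Real.pi : ℂ) ≠ 0 := by exact_mod_cast Real.pi_ne_zero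
  have hG1 : Complex.Gamma (1 - 2 * x) ≠ 0 :=
    Complex.Gamma_ne_zero_of_re_pos (by simp; linarith)
  have hG2 : Complex.Gamma (1 / 2) ≠ 0 := Complex.Gamma_ne_zero_of_re_pos (by norm_num)
  have h4 : (4 : ℂ) ^ (2 * x : ℂ) ≠ 0 := by simp [Complex.cpow_eq_zero_iff]
  have : q 0 / 2 = wzAmplitude x := by
    rw [wzAmplitude, eq_div_iff (mul_ne_zero (mul_ne_zero h4 (pow_ne_zero 5 hG1)) (mul_ne_zero hpi hG2))]
    rw [div_eq_iff (pow_ne_zero 4 hG1)] at hv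
    apply mul_left_cancel₀ hsin
    rw [hv] at hf
    linear_combination -hf
  rw [hs, this]

end

theorem exists_mul_exp_le {d c : ℝ} (hdc : d < c) (C : ℝ) {ε : ℝ} (hε : 0 < ε) :
    ∃ T : ℝ, ∀ t, T ≤ t → C * Real.exp (d * t) ≤ ε * Real.exp (c * t) := by
  have h := (Real.tendsto_exp_atTop.comp
    (tendsto_id.const_mul_atTop (sub_pos.2 hdc))).eventually_ge_atTop (C / ε)
  obtain ⟨T, hT⟩ := eventually_atTop.1 h
  refine ⟨T, fun t ht => ?_⟩
  have h1 := hT t ht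
  simp only [Function.comp, id] at h1
  rw [div_le_iff₀ hε] at h1
  calc C * Real.exp (d * t) ≤ Real.exp ((c - d) * t) * ε * Real.exp (d * t) := by gcongr
    _ = ε * Real.exp (c * t) := by
      rw [show c * t = (c - d) * t + d * t by ring, Real.exp_add]; ring

theorem SmallGrowth.of_norm_le {c d C : ℝ} (hdc : d < c) {g : ℂ → ℂ}
    (h : ∀ y : ℂ, ‖g y‖ ≤ C * Real.exp (d * |y.im|)) : SmallGrowth c g := fun ε hε => by
  obtain ⟨T, hT⟩ := exists_mul_exp_le hdc C hε
  exact ⟨T, fun y hy => (h y).trans (hT _ hy)⟩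

theorem SmallGrowth.div_pow_four {c : ℝ} {g f : ℂ → ℂ} (hg : SmallGrowth c g)
    (hf : ∀ y : ℂ, 1 ≤ |y.im| → Real.exp (Real.pi * |y.im|) / 4 ≤ ‖f y‖) :
    SmallGrowth (c - 4 * Real.pi) fun y => g y / f y ^ 4 := fun ε hε => by
  obtain ⟨T, hT⟩ := hg (ε / 256) (by positivity)
  refine ⟨max 1 T, fun y hy => ?_⟩
  have h1 := hf y ((le_max_left _ _).trans hy)
  have h2 := hT y ((le_max_right _ _).trans hy)
  have hpos : 0 < ‖f y‖ := lt_of_lt_of_le (by positivity) h1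
  rw [norm_div, norm_pow, div_le_iff₀ (by positivity)]
  calc ‖g y‖ ≤ ε / 256 * Real.exp (c * |y.im|) := h2
    _ = ε * Real.exp ((c - 4 * Real.pi) * |y.im|) * (Real.exp (Real.pi * |y.im|) / 4) ^ 4 := by
      rw [div_pow, ← Real.exp_nat_mul, show c * |y.im| = (c - 4 * Real.pi) * |y.im| +
        (4 : ℕ) * (Real.pi * |y.im|) by push_cast; ring, Real.exp_add]
      ring
    _ ≤ _ := by gcongr

theorem cos_pi_mul_eq_sin (z : ℂ) : cos (Real.pi * z) = sin (Real.pi * (z + 1 / 2)) := by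
  rw [mul_add, mul_one_div, Complex.sin_add_pi_div_two]

theorem exp_div_four_le_norm_cos_pi_mul {y : ℂ} (hy : 1 ≤ |y.im|) :
    Real.exp (Real.pi * |y.im|) / 4 ≤ ‖cos (Real.pi * y)‖ := by
  have e : (y + 1 / 2).im = y.im := by norm_num
  have h := exp_div_four_le_norm_sin_pi_mul (y := y + 1 / 2) (by rwa [e])
  rwa [e, ← cos_pi_mul_eq_sin] at h

theorem norm_cos_le_exp (z : ℂ) : ‖cos z‖ ≤ Real.exp |z.im| := by
  rw [← Complex.sin_add_pi_div_two]
  have e : (z + Real.pi / 2).im = z.im := by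
    rw [show (Real.pi : ℂ) / 2 = ((Real.pi / 2 : ℝ) : ℂ) by push_cast; rfl]
    rw [add_im, ofReal_im, add_zero]
  have h := norm_sin_le_exp (z + Real.pi / 2)
  rwa [e] at h

section

variable {x : ℝ}

theorem smallGrowth_wzPeriodic (hx : -5 / 4 < x) (hx' : x < -3 / 4) (hx1 : x ≠ -1) :
    SmallGrowth (8 * Real.pi) (wzPeriodic x) := by
  refine SmallGrowth.of_strip (-1 / 2)
    (fun y => by rw [wzPeriodic_add_one hx hx' hx1]) fun ε hε => ?_
  obtain ⟨M₁, hM₁, h₁⟩ := exists_norm_quarticSum_le hx hx'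
  obtain ⟨M₂, hM₂, -, h₂⟩ := exists_norm_recipGammaPair_le hx hx'
  obtain ⟨M₃, hM₃, h₃⟩ := exists_norm_wzSum_le hx hx' hx1
  obtain ⟨T, hT⟩ := exists_mul_exp_le (d := 15 / 2 * Real.pi) (c := 8 * Real.pi)
    (by linarith [Real.pi_pos])
    (M₁ + (20 * M₂) ^ 4 * (M₃ * Real.exp (7 / 2 * Real.pi))) hε
  refine ⟨max 1 T, fun y hy₁ hy₂ hy => (?_ : _ ≤ _).trans (hT _ ((le_max_right _ _).trans hy))⟩
  have hy1 := (le_max_left _ _).trans hy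
  set t := |y.im| with ht
  have ht0 : 0 < t := by linarith
  have e : |(y + 1 / 2).im| = t := by norm_num [ht]
  have b1 := h₁ (y + 1 / 2) (by norm_num; linarith) (by norm_num; linarith) (by rwa [e])
  have b2 := h₂ (y + 1 / 2) (by norm_num; linarith) (by rwa [e])
  rw [e] at b1 b2
  have hre : |y.re| ≤ 1 := abs_le.2 ⟨by linarith, by linarith⟩
  have b4 : ‖y + 1 / 2 - x‖ ≤ 4 * t := by
    refine (Complex.norm_le_abs_re_add_abs_im _).trans ?_
    have e1 : |(y + 1 / 2 - x).im| = t := by norm_num [ht]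
    have e2 : |(y + 1 / 2 - x).re| ≤ 3 := by
      norm_num
      exact abs_le.2 ⟨by linarith, by linarith⟩
    linarith
  have b3 : ‖wzSum x y‖ ≤ M₃ * Real.exp (7 / 2 * Real.pi) * Real.exp (7 / 2 * Real.pi * t) := by
    refine (h₃ y).trans ?_
    rw [mul_assoc M₃, ← Real.exp_add]
    have := Complex.norm_le_abs_re_add_abs_im y
    gcongr
    nlinarith [Real.pi_pos]
  have b5 : ‖recipGammaPair x (y + 1 / 2)‖ * ‖y + 1 / 2 - x‖ ≤ 20 * M₂ * Real.exp (Real.pi * t) := by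
    calc _ ≤ 5 * M₂ * Real.exp (Real.pi * t) / t * (4 * t) := by gcongr
      _ = _ := by field_simp; ring
  have b6 : ‖quarticSum (recipGammaPair x) (y + 1 / 2)‖ ≤ M₁ * Real.exp (15 / 2 * Real.pi * t) := by
    refine b1.trans ?_
    rw [mul_div_assoc]
    gcongr
    refine (div_le_self (by positivity) hy1).trans ?_
    gcongr
    linarith [Real.pi_pos]
  rw [wzPeriodic]
  refine (norm_sub_le _ _).trans ?_
  rw [norm_mul, norm_mul, norm_pow, norm_pow, ← mul_pow, add_mul]
  refine add_le_add b6 ?_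
  calc _ ≤ (20 * M₂ * Real.exp (Real.pi * t)) ^ 4 *
        (M₃ * Real.exp (7 / 2 * Real.pi) * Real.exp (7 / 2 * Real.pi * t)) := by gcongr
    _ = _ := by
      rw [mul_pow, ← Real.exp_nat_mul, show 15 / 2 * Real.pi * t = (4 : ℕ) * (Real.pi * t) +
        7 / 2 * Real.pi * t by push_cast; ring, Real.exp_add]
      ring

theorem exists_wzPeriodic_eq_cos_mul (hx : -5 / 4 < x) (hx' : x < -3 / 4) (hx1 : x ≠ -1) :
    ∃ D : ℂ → ℂ, Differentiable ℂ D ∧ (∀ y, D (y + 1) = D y) ∧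
      ∀ y, wzPeriodic x y = cos (Real.pi * (x + y)) ^ 4 * D y := by
  have hpi : (Real.pi : ℂ) ≠ 0 := by exact_mod_cast Real.pi_ne_zero
  set g : ℂ → ℂ := fun y => (quarticSum (gammaQuot x) (y + 1 / 2) -
    gammaQuot x (y + 1 / 2) ^ 4 * (y + 1 / 2 - x) ^ 4 * wzSum x y) / Real.pi ^ 4 with hg
  have hmaps : Set.MapsTo (fun y : ℂ => y + 1 / 2) {y | 1 < y.re ∧ y.re < 1 + 2}
      {u | 3 / 2 < u.re} := fun y hy => by
    have := hy.1
    norm_num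
    linarith
  have hd : DifferentiableOn ℂ g {y | 1 < y.re ∧ y.re < 1 + 2} := by
    have h1 := (differentiableOn_quarticSum (gammaQuot_bound hx hx')
      (differentiableOn_gammaQuot hx)).comp (by fun_prop) hmaps
    have h2 := (differentiableOn_gammaQuot hx).comp (by fun_prop) hmaps
    have h3 := (differentiable_wzSum hx hx' hx1).differentiableOn
      (s := {y | 1 < y.re ∧ y.re < 1 + 2})
    exact (h1.sub (((h2.pow 4).mul (by fun_prop)).mul h3)).div_const _
  have hp : ∀ y : ℂ, 1 < y.re → y.re < 1 + 1 → g (y + 1) = 1 * g y := fun y hy _ => by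
    have h1 := quarticSum_eq_add (summable_quarticSum (gammaQuot_bound hx hx')
      (v := y + 1 / 2) (by norm_num; linarith))
    have h2 := congrArg (· ^ 4) (gammaQuot_add_one (x := x) (u := y + 1 / 2)
      (fun h => by
        have := congrArg re h
        norm_num at this
        linarith)
      (fun h => by
        have := congrArg re h
        norm_num at this
        linarith))
    have h3 := wzSum_add_one hx hx' hx1 y
    simp only [hg]
    rw [show y + 1 + 1 / 2 = y + 1 / 2 + 1 by ring, h1]
    rw [one_mul]
    congr 1
    linear_combination (-wzSum x (y + 1)) * h2 - gammaQuot x (y + 1 / 2) ^ 4 * h3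
  obtain ⟨D, hD, hDp, hDe⟩ := exists_entire_extension (by norm_num) hd hp
  simp only [one_mul] at hDp
  refine ⟨D, hD, hDp, fun y => ?_⟩
  have key : ∀ y : ℂ, 1 < y.re → y.re < 1 + 2 →
      wzPeriodic x y = cos (Real.pi * (x + y)) ^ 4 * D y := fun y h₁ h₂ => by
    have hr : ∀ k : ℕ, recipGammaPair x (y + 1 / 2 + k) ^ 4 =
        cos (Real.pi * (x + y)) ^ 4 / Real.pi ^ 4 * gammaQuot x (y + 1 / 2 + k) ^ 4 := fun k => by
      rw [recipGammaPair_eq_sin_mul (Gamma_add_ne_zero_of_re (by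
        norm_num
        linarith [k.cast_nonneg (α := ℝ)])), mul_pow, div_pow, cos_pi_mul_eq_sin,
        show (Real.pi : ℂ) * (x + (y + 1 / 2 + k)) = Real.pi * (x + y + 1 / 2) + k * Real.pi by ring,
        Complex.sin_antiperiodic.add_nat_mul_eq, mul_pow, ← pow_mul, mul_comm k 4, pow_mul]
      norm_num
    have hA : quarticSum (recipGammaPair x) (y + 1 / 2) =
        cos (Real.pi * (x + y)) ^ 4 / Real.pi ^ 4 * quarticSum (gammaQuot x) (y + 1 / 2) := by
      unfold quarticSum
      rw [← tsum_mul_left]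
      refine tsum_congr fun k => ?_
      rw [hr]
      ring
    have h0 := hr 0
    simp only [Nat.cast_zero, add_zero] at h0
    rw [hDe y h₁ h₂, wzPeriodic, hA, h0, hg]
    ring
  have hper : ∀ y, wzPeriodic x (y + 1) - cos (Real.pi * (x + (y + 1))) ^ 4 * D (y + 1) =
      wzPeriodic x y - cos (Real.pi * (x + y)) ^ 4 * D y := fun y => by
    rw [wzPeriodic_add_one hx hx' hx1, hDp, ← add_assoc, cos_pi_mul_add_one]
    ring
  have h := apply_add_intCast (g := fun y => wzPeriodic x y - cos (Real.pi * (x + y)) ^ 4 * D y)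
    hper y (2 - ⌊y.re⌋)
  rw [key _ (by simp; linarith [Int.floor_le y.re]) (by simp; linarith [Int.lt_floor_add_one y.re]),
    sub_self] at h
  exact sub_eq_zero.1 h.symm

end

theorem eq_zero_of_cos_pow_mul_eq {x : ℝ} (hs : sin (2 * Real.pi * x) ≠ 0) {V : ℂ → ℂ}
    (hd : Differentiable ℂ V) (hp : ∀ y, V (y + 1) = V y) (hg : SmallGrowth (4 * Real.pi) V)
    (he : ∀ y, cos (Real.pi * (x + y)) ^ 4 * V y = cos (Real.pi * (x - y)) ^ 4 * V (-y)) :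
    V 0 = 0 := by
  classical
  set U : ℂ → ℂ := fun y => if cos (Real.pi * (x - y)) ≠ 0 then V y / cos (Real.pi * (x - y)) ^ 4
    else V (-y) / cos (Real.pi * (x + y)) ^ 4 with hU
  have hU' : ∀ y, cos (Real.pi * (x + y)) ≠ 0 → U y = V (-y) / cos (Real.pi * (x + y)) ^ 4 := by
    intro y hy
    by_cases h : cos (Real.pi * (x - y)) = 0
    · simp [hU, h]
    · simp only [hU, ne_eq, h, not_false_eq_true, if_true]
      rw [div_eq_div_iff (pow_ne_zero 4 h) (pow_ne_zero 4 hy)]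
      linear_combination he y
  have hne : ∀ y, cos (Real.pi * (x - y)) = 0 → cos (Real.pi * (x + y)) ≠ 0 := by
    intro y h1 h2
    apply hs
    rw [show (2 : ℂ) * Real.pi * x = Real.pi * (x - y) + Real.pi * (x + y) by ring,
      Complex.sin_add, h1, h2]
    ring
  have hUd : Differentiable ℂ U := by
    intro y
    by_cases h : cos (Real.pi * (x - y)) = 0
    · have h2 := hne y h
      have hc : ContinuousAt (fun y : ℂ => cos (Real.pi * (x + y))) y := by fun_prop
      have hev : U =ᶠ[𝓝 y] fun y => V (-y) / cos (Real.pi * (x + y)) ^ 4 := by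
        filter_upwards [hc.eventually_ne h2] with z hz using hU' z hz
      refine DifferentiableAt.congr_of_eventuallyEq ?_ hev
      have h3 : DifferentiableAt ℂ (fun y => V (-y)) y := (hd.comp differentiable_neg) y
      exact h3.div (by fun_prop) (pow_ne_zero 4 h2)
    · have hc : ContinuousAt (fun y : ℂ => cos (Real.pi * (x - y))) y := by fun_prop
      have hev : U =ᶠ[𝓝 y] fun y => V y / cos (Real.pi * (x - y)) ^ 4 := by
        filter_upwards [hc.eventually_ne h] with z hz
        simp [hU, hz]
      refine DifferentiableAt.congr_of_eventuallyEq ?_ hev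
      exact (hd y).div (by fun_prop) (pow_ne_zero 4 h)
  have hUp : ∀ y, U (y + 1) = U y := by
    intro y
    have h1 : cos (Real.pi * (x - y)) = -cos (Real.pi * (x - (y + 1))) := by
      rw [← cos_pi_mul_add_one]; congr 2; ring
    have h2 : V (-(y + 1)) = V (-y) := by rw [← hp (-(y + 1))]; congr 1; ring
    have h3 : cos (Real.pi * (x + (y + 1))) = -cos (Real.pi * (x + y)) := by
      rw [← cos_pi_mul_add_one]; congr 2; ring
    simp only [hU, h1, h2, h3, hp, neg_ne_zero]
    simp only [Even.neg_pow (show Even 4 by decide)]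
  have him : ∀ y : ℂ, |((x : ℂ) - y).im| = |y.im| := fun y => by simp
  have hUs : SmallGrowth 0 U := by
    have h := hg.div_pow_four (f := fun y => cos (Real.pi * (x - y))) (fun y hy => by
      have := exp_div_four_le_norm_cos_pi_mul (y := x - y) (by rwa [him])
      rwa [him] at this)
    rw [sub_self] at h
    intro ε hε
    obtain ⟨T, hT⟩ := h ε hε
    refine ⟨max 1 T, fun y hy => ?_⟩
    have hy1 := (le_max_left _ _).trans hy
    have hc : cos (Real.pi * (x - y)) ≠ 0 := by
      have := exp_div_four_le_norm_cos_pi_mul (y := x - y) (by rwa [him])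
      exact norm_pos_iff.1 (lt_of_lt_of_le (by positivity) this)
    simpa [hU, hc] using hT y ((le_max_right _ _).trans hy)
  have hU0 := eq_zero_of_norm_periodic hUd (fun y => by rw [hUp]) hUs 0
  have hc : cos (Real.pi * x) ≠ 0 := fun h => by
    have := hne 0 (by rwa [sub_zero])
    rw [add_zero] at this
    exact this h
  simpa [hU, hc] using hU0

theorem cos_pow_four_mul_sub (c s c' s' k : ℂ) (h : c ^ 2 + s ^ 2 = 1) (h' : c' ^ 2 + s' ^ 2 = 1) :
    ((1 + (c * c' - s * s')) / 2) ^ 2 * (-k - k * c * (c ^ 2 - s ^ 2) * c' - 2 * c ^ 2 * s * k * s') -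
      ((1 + (c * c' + s * s')) / 2) ^ 2 *
        (-k - k * c * (c ^ 2 - s ^ 2) * c' + 2 * c ^ 2 * s * k * s') = k * s ^ 5 * s' := by
  linear_combination k * s * s' * (-c ^ 2 * s ^ 2 * h' - (c * c' + 1 + s ^ 2) * h)

section

variable {x : ℝ}

theorem wzPeriodic_zero (hx : -5 / 4 < x) (hx' : x < -3 / 4) (hx1 : x ≠ -1) :
    wzPeriodic x 0 * sin (2 * Real.pi * x) ^ 5 = -wzAmplitude x * cos (Real.pi * x) ^ 4 *
      (1 + cos (2 * Real.pi * x) * (cos (2 * Real.pi * x) ^ 2 - sin (2 * Real.pi * x) ^ 2)) := by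
  have hs := sin_two_pi_mul_ne_zero hx hx' hx1
  obtain ⟨D, hD, hDp, hDe⟩ := exists_wzPeriodic_eq_cos_mul hx hx' hx1
  set c := cos (2 * Real.pi * x) with hc
  set s := sin (2 * Real.pi * x) with hsd
  have hcs : c ^ 2 + s ^ 2 = 1 := by rw [add_comm]; exact Complex.sin_sq_add_cos_sq _
  set k := wzAmplitude x / s ^ 5 with hk
  have hks : k * s ^ 5 = wzAmplitude x := div_mul_cancel₀ _ (pow_ne_zero 5 hs)
  set E : ℂ → ℂ := fun y => -k - k * c * (c ^ 2 - s ^ 2) * cos (2 * Real.pi * y) -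
    2 * c ^ 2 * s * k * sin (2 * Real.pi * y) with hE
  have hcos : ∀ z : ℂ, cos (Real.pi * z) ^ 4 = ((1 + cos (2 * Real.pi * z)) / 2) ^ 2 := fun z => by
    rw [show (2 : ℂ) * Real.pi * z = 2 * (Real.pi * z) by ring, Complex.cos_two_mul]
    ring
  have hE2 : ∀ y, cos (Real.pi * (x + y)) ^ 4 * E y - cos (Real.pi * (x - y)) ^ 4 * E (-y) =
      wzAmplitude x * sin (2 * Real.pi * y) := fun y => by
    have := cos_pow_four_mul_sub c s (cos (2 * Real.pi * y)) (sin (2 * Real.pi * y)) k hcs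
      (by rw [add_comm]; exact Complex.sin_sq_add_cos_sq _)
    rw [hks] at this
    rw [← this, hcos, hcos, mul_add _ (x : ℂ), mul_sub _ (x : ℂ), Complex.cos_add, Complex.cos_sub]
    simp only [hE, mul_neg, Complex.cos_neg, Complex.sin_neg]
    ring
  have hEp : ∀ y, E (y + 1) = E y := fun y => by
    simp only [hE, mul_add, mul_one, Complex.cos_add_two_pi, Complex.sin_add_two_pi]
  have hEd : Differentiable ℂ E := by simp only [hE]; fun_prop
  have hEg : SmallGrowth (4 * Real.pi) E := by
    refine SmallGrowth.of_norm_le (d := 2 * Real.pi)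
      (C := ‖k‖ + ‖k * c * (c ^ 2 - s ^ 2)‖ + ‖2 * c ^ 2 * s * k‖)
      (by linarith [Real.pi_pos]) fun y => ?_
    have him : |((2 : ℂ) * Real.pi * y).im| = 2 * Real.pi * |y.im| := by
      rw [show (2 : ℂ) * Real.pi * y = ((2 * Real.pi : ℝ) : ℂ) * y by push_cast; ring,
        Complex.im_ofReal_mul, abs_mul, abs_of_pos Real.two_pi_pos]
    have h1 := norm_cos_le_exp (2 * Real.pi * y)
    have h2 := norm_sin_le_exp (2 * Real.pi * y)
    rw [him] at h1 h2
    have h0 : 1 ≤ Real.exp (2 * Real.pi * |y.im|) := Real.one_le_exp (by positivity)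
    simp only [hE]
    refine (norm_sub_le _ _).trans ?_
    rw [add_mul, add_mul, norm_mul _ (sin _)]
    refine add_le_add ((norm_sub_le _ _).trans ?_) (by gcongr)
    rw [norm_neg, norm_mul _ (cos _)]
    exact add_le_add (le_mul_of_one_le_right (norm_nonneg _) h0) (by gcongr)
  have hDg : SmallGrowth (4 * Real.pi) D := by
    have him : ∀ y : ℂ, |((x : ℂ) + y).im| = |y.im| := fun y => by simp
    have hlow : ∀ y : ℂ, 1 ≤ |y.im| →
        Real.exp (Real.pi * |y.im|) / 4 ≤ ‖cos (Real.pi * (x + y))‖ := fun y hy => by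
      have := exp_div_four_le_norm_cos_pi_mul (y := x + y) (by rwa [him])
      rwa [him] at this
    have h := (smallGrowth_wzPeriodic hx hx' hx1).div_pow_four hlow
    rw [show 8 * Real.pi - 4 * Real.pi = 4 * Real.pi by ring] at h
    intro ε hε
    obtain ⟨T, hT⟩ := h ε hε
    refine ⟨max 1 T, fun y hy => ?_⟩
    have hc : cos (Real.pi * (x + y)) ≠ 0 :=
      norm_pos_iff.1 (lt_of_lt_of_le (by positivity) (hlow y ((le_max_left _ _).trans hy)))
    have h1 := hT y ((le_max_right _ _).trans hy)
    beta_reduce at h1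
    rwa [hDe, mul_div_cancel_left₀ _ (pow_ne_zero 4 hc)] at h1
  have hV := eq_zero_of_cos_pow_mul_eq (V := fun y => D y - E y) hs (hD.sub hEd)
    (fun y => by rw [hDp, hEp]) (hDg.sub hEg) (fun y => by
      have h1 := hDe y
      have h2 := hDe (-y)
      rw [← sub_eq_add_neg] at h2
      have h3 := wzPeriodic_sub_neg_eq hx hx' hx1 y
      linear_combination h3 - hE2 y - h1 + h2)
  have h0 := hDe 0
  rw [add_zero, sub_eq_zero.1 hV] at h0
  rw [h0, ← hks]
  simp only [hE, mul_zero, Complex.cos_zero, Complex.sin_zero]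
  ring

end

theorem pochR_zero (a : ℝ) : pochR a 0 = 1 := by simp [pochR]

theorem pochR_succ (a : ℝ) (n : ℕ) : pochR a (n + 1) = pochR a n * (a + n) :=
  Finset.prod_range_succ _ _

theorem pochR_succ' (a : ℝ) (n : ℕ) : pochR a (n + 1) = a * pochR (a + 1) n := by
  simp only [pochR, Finset.prod_range_succ', Nat.cast_zero, add_zero]
  rw [mul_comm]
  congr 1
  exact Finset.prod_congr rfl fun j _ => by push_cast; ring

theorem pochR_pos {a : ℝ} (ha : 0 < a) (n : ℕ) : 0 < pochR a n :=
  Finset.prod_pos fun j _ => by positivity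

theorem tendsto_pochR_div_pochR (a b : ℝ) (ha : Real.Gamma a ≠ 0) :
    Tendsto (fun n : ℕ => pochR a (n + 1) / pochR b (n + 1) * (n : ℝ) ^ (b - a)) atTop
      (𝓝 (Real.Gamma b / Real.Gamma a)) := by
  refine ((Real.GammaSeq_tendsto_Gamma b).div (Real.GammaSeq_tendsto_Gamma a) ha).congr' ?_
  filter_upwards [eventually_gt_atTop 0] with n hn
  have hn' : (0 : ℝ) < n := by exact_mod_cast hn
  have h1 : ((n : ℝ) ^ a) ≠ 0 := (Real.rpow_pos_of_pos hn' a).ne'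
  have h2 : ((n.factorial : ℕ) : ℝ) ≠ 0 := by exact_mod_cast n.factorial_ne_zero
  rw [Pi.div_apply, Real.GammaSeq, Real.GammaSeq, Real.rpow_sub hn', ← pochR, ← pochR]
  rw [div_div_div_eq, mul_comm (_ ^ b), mul_comm (_ ^ a)]
  rw [mul_assoc, mul_comm (pochR b (n + 1)), mul_assoc, mul_div_mul_left _ _ h2]
  ring

/-- The quotients `(1/2 + x)_n / (3/2 - x)_n`. -/
noncomputable def pochQuot (x : ℝ) (n : ℕ) : ℝ := pochR (1 / 2 + x) n / pochR (3 / 2 - x) n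

section

variable {x : ℝ}

theorem pochQuot_zero (x : ℝ) : pochQuot x 0 = 1 := by simp [pochQuot, pochR_zero]

theorem pochQuot_succ (x : ℝ) (n : ℕ) :
    pochQuot x (n + 1) = pochQuot x n * ((1 / 2 + x + n) / (3 / 2 - x + n)) := by
  rw [pochQuot, pochR_succ, pochR_succ, mul_div_mul_comm, pochQuot]

theorem pochQuot_add_one (h₂ : 0 < 1 / 2 - x) (n : ℕ) :
    pochQuot (x + 1) n * ((1 / 2 + x) * (1 / 2 - x)) =
      pochQuot x n * ((1 / 2 + x + n) * (1 / 2 - x + n)) := by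
  have h3 : 0 < pochR (3 / 2 - x) n := pochR_pos (by linarith) n
  have h4 : 0 < pochR (1 / 2 - x) n := pochR_pos h₂ n
  have e1 := pochR_succ' (1 / 2 + x) n
  have e2 := pochR_succ' (1 / 2 - x) n
  rw [pochR_succ] at e1 e2
  rw [show 1 / 2 - x + 1 = 3 / 2 - x by ring] at e2
  rw [pochQuot, pochQuot, show 1 / 2 + (x + 1) = 1 / 2 + x + 1 by ring,
    show 3 / 2 - (x + 1) = 1 / 2 - x by ring]
  rw [div_mul_eq_mul_div, div_mul_eq_mul_div, div_eq_div_iff h4.ne' h3.ne']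
  linear_combination (-pochR (1 / 2 + x) n * (1 / 2 + x + n)) * e2 -
    (1 / 2 - x) * pochR (3 / 2 - x) n * e1

theorem tendsto_pochQuot (h : Real.Gamma (1 / 2 + x) ≠ 0) :
    Tendsto (fun n : ℕ => pochQuot x (n + 1) * (n : ℝ) ^ (1 - 2 * x)) atTop
      (𝓝 (Real.Gamma (3 / 2 - x) / Real.Gamma (1 / 2 + x))) := by
  have := tendsto_pochR_div_pochR (1 / 2 + x) (3 / 2 - x) h
  rwa [show 3 / 2 - x - (1 / 2 + x) = 1 - 2 * x by ring] at this

theorem summable_pochQuot (hx : x < 1 / 4) (h : Real.Gamma (1 / 2 + x) ≠ 0) :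
    Summable fun n : ℕ => (2 * (n : ℝ) + 1) * pochQuot x n ^ 4 := by
  rw [← summable_nat_add_iff 1]
  refine summable_of_isBigO_nat (Real.summable_nat_rpow.2 (by linarith : 8 * x - 3 < -1)) ?_
  have h1 := ((tendsto_pochQuot h).pow 4).isBigO_one ℝ
  have h2 : (fun n : ℕ => 2 * ((n + 1 : ℕ) : ℝ) + 1) =O[atTop] fun n : ℕ => (n : ℝ) := by
    refine Asymptotics.IsBigO.of_bound 5 ?_
    filter_upwards [eventually_ge_atTop 1] with n hn
    have hn' : (1 : ℝ) ≤ n := by exact_mod_cast hn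
    rw [Real.norm_of_nonneg (by positivity), Real.norm_of_nonneg (by positivity)]
    push_cast
    linarith
  have h3 := (h2.mul h1).mul (Asymptotics.isBigO_refl (fun n : ℕ => (n : ℝ) ^ (8 * x - 4)) atTop)
  refine h3.congr' ?_ ?_
  · filter_upwards [eventually_gt_atTop 0] with n hn
    have hn' : (0 : ℝ) < n := by exact_mod_cast hn
    rw [mul_pow, ← Real.rpow_mul_natCast hn'.le, mul_assoc, mul_assoc, ← Real.rpow_add hn']
    rw [show (1 - 2 * x) * (4 : ℕ) + (8 * x - 4) = 0 by push_cast; ring, Real.rpow_zero, mul_one]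
  · filter_upwards [eventually_gt_atTop 0] with n hn
    have hn' : (0 : ℝ) < n := by exact_mod_cast hn
    rw [mul_one, show 8 * x - 3 = 1 + (8 * x - 4) by ring, Real.rpow_add hn', Real.rpow_one]

theorem Gamma_half_add_ne_zero (hx : -5 / 4 < x) (hx' : x < -3 / 4) :
    Real.Gamma (1 / 2 + x) ≠ 0 := by
  refine Real.Gamma_ne_zero fun m h => ?_
  rcases m with _ | m
  · push_cast at h; linarith
  · push_cast at h; linarith [m.cast_nonneg (α := ℝ)]

theorem tendsto_wzCert_mul (hx : -5 / 4 < x) (hx' : x < -3 / 4) (hx1 : x ≠ -1) :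
    Tendsto (fun k : ℕ => wzCert x k * (pochQuot x k * (x - (k + 1 / 2)) : ℂ) ^ 4) atTop (𝓝 0) := by
  rw [← tendsto_add_atTop_iff_nat 1]
  obtain ⟨C, hC, h⟩ := exists_norm_wzCert_le hx hx' hx1
  have h0 : Tendsto (fun n : ℕ => (C * 3 ^ 6 * 5 ^ 4) * ((pochQuot x (n + 1) *
      (n : ℝ) ^ (1 - 2 * x)) ^ 4 * (n : ℝ) ^ (-(-(6 + 8 * x))))) atTop (𝓝 0) := by
    have := ((((tendsto_pochQuot (Gamma_half_add_ne_zero hx hx')).pow 4).mul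
      ((tendsto_rpow_neg_atTop (by linarith : 0 < -(6 + 8 * x))).comp
        tendsto_natCast_atTop_atTop)).const_mul (C * 3 ^ 6 * 5 ^ 4))
    rwa [mul_zero, mul_zero] at this
  refine squeeze_zero_norm' ?_ h0
  filter_upwards [eventually_ge_atTop 1] with n hn
  have hn' : (1 : ℝ) ≤ n := by exact_mod_cast hn
  have hn0 : (0 : ℝ) < n := by linarith
  have b1 := h 0 ((n + 1 : ℕ) : ℂ)
  rw [Complex.norm_natCast, Nat.cast_zero, add_zero] at b1
  have b2 : 1 + ((n + 1 : ℕ) : ℝ) ≤ 3 * n := by push_cast; linarith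
  have b3 : ‖(x : ℂ) - (((n + 1 : ℕ) : ℂ) + 1 / 2)‖ ≤ 5 * n := by
    rw [show (x : ℂ) - (((n + 1 : ℕ) : ℂ) + 1 / 2) = ((x - (n + 1 + 1 / 2) : ℝ) : ℂ) by
      push_cast; ring, Complex.norm_real, Real.norm_eq_abs, abs_le]
    constructor <;> linarith
  rw [norm_mul, norm_pow, norm_mul, Complex.norm_real, Real.norm_eq_abs]
  calc _ ≤ C * (3 * n) ^ 6 * (|pochQuot x (n + 1)| * (5 * n)) ^ 4 := by
        gcongr
        exact b1.trans (by gcongr)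
    _ = (C * 3 ^ 6 * 5 ^ 4) * (pochQuot x (n + 1) ^ 4 * (n : ℝ) ^ 10) := by
        rw [mul_pow |_|, Even.pow_abs (by decide)]
        ring
    _ = _ := by
        rw [mul_pow, ← Real.rpow_mul_natCast hn0.le, mul_assoc (pochQuot x (n + 1) ^ 4),
          ← Real.rpow_add hn0, ← Real.rpow_natCast (n : ℝ) 10]
        congr 4
        push_cast
        ring

/-- Summing the first row of the WZ pair relates the well-poised series at `x` and `x + 1`. -/
theorem tsum_pochQuot_sub (hx : -5 / 4 < x) (hx' : x < -3 / 4) (hx1 : x ≠ -1) :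
    ((∑' k : ℕ, (2 * (k : ℝ) + 1) * pochQuot x k ^ 4 : ℝ) : ℂ) - wzCert x 0 * (1 / 2 - x) ^ 4 =
      wzRatio x * ((1 / 2 + x) * (1 / 2 - x)) ^ 4 *
        ((∑' k : ℕ, (2 * (k : ℝ) + 1) * pochQuot (x + 1) k ^ 4 : ℝ) : ℂ) := by
  have hs1 := summable_pochQuot (by linarith) (Gamma_half_add_ne_zero hx hx')
  have hs2 := summable_pochQuot (x := x + 1) (by linarith)
    (Real.Gamma_pos_of_pos (by linarith)).ne'
  have H1 := Complex.hasSum_ofReal.2 hs1.hasSum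
  have H2 := (Complex.hasSum_ofReal.2 hs2.hasSum).mul_left
    (wzRatio x * ((1 / 2 + x) * (1 / 2 - x)) ^ 4 : ℂ)
  have H3 := (H2.sub H1).tendsto_sum_nat
  set c : ℕ → ℂ := fun k => wzCert x k * (pochQuot x k * (x - (k + 1 / 2)) : ℂ) ^ 4 with hc
  have hstep : ∀ k : ℕ, (wzRatio x * ((1 / 2 + x) * (1 / 2 - x)) ^ 4 : ℂ) *
      (((2 * (k : ℝ) + 1) * pochQuot (x + 1) k ^ 4 : ℝ) : ℂ) -
      (((2 * (k : ℝ) + 1) * pochQuot x k ^ 4 : ℝ) : ℂ) = c (k + 1) - c k := fun k => by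
    have h1 := wzCert_add_one (N := x) (by linarith) (by linarith) k
    have h2 : (pochQuot (x + 1) k * ((1 / 2 + x) * (1 / 2 - x)) : ℂ) =
        pochQuot x k * ((1 / 2 + x + k) * (1 / 2 - x + k)) := by
      have := congrArg Complex.ofReal (pochQuot_add_one (x := x) (by linarith) k)
      push_cast at this
      exact this
    have h3 : (pochQuot x (k + 1) * (3 / 2 - x + k) : ℂ) = pochQuot x k * (1 / 2 + x + k) := by
      have h0 : 3 / 2 - x + k ≠ 0 := by linarith [k.cast_nonneg (α := ℝ)]
      have h4 : pochQuot x (k + 1) * (3 / 2 - x + k) = pochQuot x k * (1 / 2 + x + k) := by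
        rw [pochQuot_succ, mul_assoc, div_mul_cancel₀ _ h0]
      have h5 := congrArg Complex.ofReal h4
      push_cast at h5
      exact h5
    have h2' := congrArg (· ^ 4) h2
    have h3' := congrArg (· ^ 4) h3
    simp only [hc]
    push_cast
    beta_reduce at h2' h3'
    linear_combination (2 * (k : ℂ) + 1) * wzRatio x * h2' - pochQuot x k ^ 4 * h1 -
      wzCert x (k + 1) * h3'
  have H4 : Tendsto (fun n => c n - c 0) atTop (𝓝 (0 - c 0)) :=
    (tendsto_wzCert_mul hx hx' hx1).sub_const _
  simp only [hstep, Finset.sum_range_sub] at H3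
  have := tendsto_nhds_unique H3 H4
  simp only [hc, pochQuot_zero] at this
  push_cast at this ⊢
  rw [zero_add, one_mul] at this
  linear_combination -this

end

/-- The summand `16^{-t} (1/2)_t³ (1/4)_t (3/4)_t / (1)_t⁵` at real index. -/
noncomputable def quinticTerm (t : ℝ) : ℝ :=
  (2 : ℝ) ^ (-(4 : ℝ) * t) *
    (pochG (1 / 2) t ^ 3 * pochG (1 / 4) t * pochG (3 / 4) t / pochG 1 t ^ 5)

theorem pochG_pos {a t : ℝ} (ha : 0 < a) (hat : 0 < a + t) : 0 < pochG a t :=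
  div_pos (Real.Gamma_pos_of_pos hat) (Real.Gamma_pos_of_pos ha)

theorem pochG_add_one {a t : ℝ} (h : a + t ≠ 0) : pochG a (t + 1) = (a + t) * pochG a t := by
  rw [pochG, ← add_assoc, Real.Gamma_add_one h, mul_div_assoc, pochG]

theorem quinticTerm_pos {t : ℝ} (ht : -1 / 4 < t) : 0 < quinticTerm t := by
  have h1 := pochG_pos (a := 1 / 2) (t := t) (by norm_num) (by linarith)
  have h2 := pochG_pos (a := 1 / 4) (t := t) (by norm_num) (by linarith)
  have h3 := pochG_pos (a := 3 / 4) (t := t) (by norm_num) (by linarith)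
  have h4 := pochG_pos (a := 1) (t := t) (by norm_num) (by linarith)
  have h5 : (0 : ℝ) < 2 ^ (-(4 : ℝ) * t) := Real.rpow_pos_of_pos two_pos _
  unfold quinticTerm
  positivity

theorem quinticTerm_add_one {t : ℝ} (ht : -1 / 4 < t) :
    quinticTerm (t + 1) * (16 * (t + 1) ^ 5) =
      quinticTerm t * ((t + 1 / 2) ^ 3 * (t + 1 / 4) * (t + 3 / 4)) := by
  have h4 := pochG_pos (a := 1) (t := t) (by norm_num) (by linarith)
  have h1 : (1 : ℝ) + t ≠ 0 := by linarith
  have h2 : (2 : ℝ) ^ (-(4 : ℝ) * (t + 1)) = 2 ^ (-(4 : ℝ) * t) / 16 := by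
    rw [mul_add, Real.rpow_add two_pos]
    norm_num [Real.rpow_neg]
    ring
  rw [quinticTerm, quinticTerm, h2, pochG_add_one (by linarith), pochG_add_one (by linarith),
    pochG_add_one (by linarith), pochG_add_one h1, add_comm t 1]
  generalize pochG 1 t = G at *
  generalize (2 : ℝ) ^ (-(4 : ℝ) * t) = E
  generalize 1 + t = s at *
  field_simp
  ring

section

variable {x : ℝ}

theorem wzWeight_mul_prod (hx : -5 / 4 < x) (hx' : x < -3 / 4) (hx1 : x ≠ -1) (n : ℕ) :
    wzWeight x (n + 1) * (∏ j ∈ Finset.range (n + 1), (1 / 2 + x + j) ^ 8) *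
      ((x + 1) ^ 5 * quinticTerm (x + 1)) =
      wzRatio x * (1 / 2 + x) ^ 8 * ((x + 1 + n) ^ 5 * quinticTerm (x + 1 + n)) := by
  induction n with
  | zero => simp [wzWeight]
  | succ n ih =>
    have hn := n.cast_nonneg (α := ℝ)
    have hN : x + 1 + n ≠ 0 := by
      have := add_natCast_ne_zero hx hx' hx1 (n + 1)
      push_cast at this
      intro h
      exact this (by linarith)
    have hN2 : x + 1 + n + 1 / 2 ≠ 0 := by linarith
    have hq := quinticTerm_add_one (t := x + 1 + n) (by linarith)
    have hr : wzRatio (x + (n + 1 : ℕ)) * (1 / 2 + x + (n + 1 : ℕ)) ^ 8 *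
        (16 * (x + 1 + n) ^ 5) =
        (x + 1 + n + 1 / 2) ^ 3 * (x + 1 + n + 1 / 4) * (x + 1 + n + 3 / 4) := by
      push_cast
      rw [wzRatio, show x + ((n : ℝ) + 1) = x + 1 + n by ring,
        show 1 / 2 + x + ((n : ℝ) + 1) = x + 1 + n + 1 / 2 by ring]
      generalize x + 1 + (n : ℝ) = N at *
      generalize hM : N + 1 / 2 = M at *
      field_simp
    rw [wzWeight, Finset.prod_range_succ, ← wzWeight, Finset.prod_range_succ _ (n + 1)]
    have h5 : 16 * (x + 1 + n) ^ 5 ≠ 0 := mul_ne_zero (by norm_num) (pow_ne_zero 5 hN)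
    apply mul_right_cancel₀ h5
    push_cast at hr ih ⊢
    rw [add_assoc (x + 1) (n : ℝ) 1] at hq
    generalize (x + 1 + n + 1 / 2) ^ 3 * (x + 1 + n + 1 / 4) * (x + 1 + n + 3 / 4) = M at hq hr
    generalize (1 / 2 + x + ((n : ℝ) + 1)) ^ 8 = A at hr ⊢
    generalize (1 / 2 + x) ^ 8 = B at ih ⊢
    generalize (x + 1 + ((n : ℝ) + 1)) ^ 5 = N' at hq ⊢
    generalize (x + 1 + n) ^ 5 = N at ih hr ⊢
    generalize (x + 1) ^ 5 = z at ih ⊢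
    linear_combination (16 * N) * wzRatio (x + (n + 1)) * A * ih +
      wzRatio x * B * (N * quinticTerm (x + 1 + n)) * hr - wzRatio x * B * N * hq

theorem wzTerm_succ_zero (hx : -5 / 4 < x) (hx' : x < -3 / 4) (hx1 : x ≠ -1) (n : ℕ) :
    wzTerm x (n + 1) 0 = ((-(wzRatio x * (1 / 2 + x) ^ 8 /
      (512 * (x + 1) ^ 5 * quinticTerm (x + 1))) * (quinticTerm (n + (x + 1)) *
      (120 * (n + (x + 1)) ^ 2 + 34 * (n + (x + 1)) + 3)) : ℝ) : ℂ) := by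
  have h := wzWeight_mul_prod hx hx' hx1 n
  have h1 : x + 1 ≠ 0 := fun h => hx1 (by linarith)
  have hq := (quinticTerm_pos (t := x + 1) (by linarith)).ne'
  have hN : n + (x + 1) ≠ 0 := by
    have := add_natCast_ne_zero hx hx' hx1 (n + 1)
    push_cast at this
    intro h
    exact this (by linarith)
  rw [show x + 1 + n = n + (x + 1) by ring] at h
  have e : wzTerm x (n + 1) 0 = ((wzWeight x (n + 1) *
      (∏ j ∈ Finset.range (n + 1), (1 / 2 + x + j) ^ 8) *
      (-(120 * (n + (x + 1)) ^ 2 + 34 * (n + (x + 1)) + 3) / (512 * (n + (x + 1)) ^ 5)) : ℝ) : ℂ) := by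
    rw [wzTerm, wzCert]
    push_cast
    have : ∀ j : ℕ, (((1 : ℂ) / 2 + x + j) ^ 2 - 0 ^ 2) ^ 4 = (1 / 2 + x + j) ^ 8 := fun j => by ring
    simp only [this]
    ring
  rw [e, eq_div_of_mul_eq (mul_ne_zero (pow_ne_zero 5 h1) hq) h]
  congr 1
  generalize quinticTerm (x + 1) = Q at *
  generalize quinticTerm (n + (x + 1)) = Q' at *
  generalize 1 / 2 + x = w at *
  generalize hz : (n : ℝ) + (x + 1) = N at *
  generalize x + 1 = z at *
  field_simp

theorem recipGammaPair_half_add (hx' : x < -3 / 4) (k : ℕ) :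
    recipGammaPair x (1 / 2 + k) = (-1) ^ k * recipGammaPair x (1 / 2) * pochQuot x k := by
  induction k with
  | zero => simp [pochQuot_zero]
  | succ k ih =>
    have hk := k.cast_nonneg (α := ℝ)
    have h0 : 3 / 2 - x + k ≠ 0 := by linarith
    have h0' : (3 : ℂ) / 2 - x + k ≠ 0 := by
      have : ((3 / 2 - x + k : ℝ) : ℂ) ≠ 0 := by exact_mod_cast h0
      push_cast at this
      exact this
    have h := recipGammaPair_add_one x (1 / 2 + k)
    rw [ih, show (1 : ℂ) - x + (1 / 2 + k) = 3 / 2 - x + k by ring] at h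
    push_cast
    rw [← add_assoc, eq_div_of_mul_eq h0' h, pochQuot_succ]
    push_cast
    ring

theorem recipGammaPair_half_mul (hx' : x < -3 / 4) :
    recipGammaPair x (1 / 2) * (1 / 2 - x) = (((Real.Gamma (1 / 2 - x) ^ 2)⁻¹ : ℝ) : ℂ) := by
  have h0 : 1 / 2 - x ≠ 0 := by linarith
  have hG := (Real.Gamma_pos_of_pos (show 0 < 1 / 2 - x by linarith)).ne'
  have e : recipGammaPair x (1 / 2) =
      (((Real.Gamma (1 / 2 - x))⁻¹ * (Real.Gamma (3 / 2 - x))⁻¹ : ℝ) : ℂ) := by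
    rw [recipGammaPair]
    push_cast
    rw [← Complex.Gamma_ofReal, ← Complex.Gamma_ofReal]
    push_cast
    congr 3 <;> ring
  rw [e, show 3 / 2 - x = 1 / 2 - x + 1 by ring, Real.Gamma_add_one h0,
    show (1 : ℂ) / 2 - x = ((1 / 2 - x : ℝ) : ℂ) by push_cast; ring, ← Complex.ofReal_mul]
  congr 1
  generalize Real.Gamma (1 / 2 - x) = G at *
  generalize 1 / 2 - x = w at *
  field_simp

theorem wzPeriodic_zero_eq (hx : -5 / 4 < x) (hx' : x < -3 / 4) (hx1 : x ≠ -1) :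
    wzPeriodic x 0 = (((Real.Gamma (1 / 2 - x) ^ 2)⁻¹ ^ 4 * (wzRatio x * (1 / 2 + x) ^ 4 *
      (∑' k : ℕ, (2 * (k : ℝ) + 1) * pochQuot (x + 1) k ^ 4) +
      wzRatio x * (1 / 2 + x) ^ 8 / (512 * (x + 1) ^ 5 * quinticTerm (x + 1)) *
      ∑' n : ℕ, quinticTerm (n + (x + 1)) *
        (120 * (n + (x + 1)) ^ 2 + 34 * (n + (x + 1)) + 3)) : ℝ) : ℂ) := by
  have hP := recipGammaPair_half_mul hx'
  have hA : quarticSum (recipGammaPair x) (0 + 1 / 2) = recipGammaPair x (1 / 2) ^ 4 *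
      ((∑' k : ℕ, (2 * (k : ℝ) + 1) * pochQuot x k ^ 4 : ℝ) : ℂ) := by
    rw [zero_add, quarticSum, Complex.ofReal_tsum, ← tsum_mul_left]
    refine tsum_congr fun k => ?_
    rw [recipGammaPair_half_add hx', mul_pow, mul_pow, ← pow_mul, mul_comm k 4, pow_mul]
    push_cast
    ring
  have hS : wzSum x 0 = wzCert x 0 + ((-(wzRatio x * (1 / 2 + x) ^ 8 /
      (512 * (x + 1) ^ 5 * quinticTerm (x + 1))) * ∑' n : ℕ, (quinticTerm (n + (x + 1)) *
      (120 * (n + (x + 1)) ^ 2 + 34 * (n + (x + 1)) + 3)) : ℝ) : ℂ) := by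
    rw [wzSum, (summable_wzTerm hx hx' hx1 0).tsum_eq_zero_add, ← tsum_mul_left,
      Complex.ofReal_tsum]
    congr 1
    · simp [wzTerm, wzWeight]
    · exact tsum_congr fun n => wzTerm_succ_zero hx hx' hx1 n
  have hT := tsum_pochQuot_sub hx hx' hx1
  rw [wzPeriodic, hA, hS, Complex.ofReal_mul (_ ^ 4), Complex.ofReal_pow, ← hP, zero_add]
  rw [sub_eq_iff_eq_add.1 hT]
  push_cast
  ring

end

theorem quinticTerm_mul (z : ℝ) (hz : -1 / 4 < z) :
    quinticTerm z * (((4 : ℝ) ^ z) ^ 3 * √Real.pi ^ 4 * Real.Gamma (1 + z) ^ 5) =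
      Real.Gamma (1 / 2 + z) ^ 3 * Real.Gamma (1 / 2 + 2 * z) := by
  have hq : √Real.pi ≠ 0 := (Real.sqrt_pos.2 Real.pi_pos).ne'
  have hd := Real.Gamma_mul_Gamma_add_half (1 / 4 + z)
  have hd0 := Real.Gamma_mul_Gamma_add_half (1 / 4)
  have h7 := (Real.Gamma_pos_of_pos (show 0 < 1 + z by linarith)).ne'
  have ha := (Real.Gamma_pos_of_pos (show (0 : ℝ) < 1 / 4 by norm_num)).ne'
  have hb := (Real.Gamma_pos_of_pos (show (0 : ℝ) < 3 / 4 by norm_num)).ne'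
  have he : (4 : ℝ) ^ z ≠ 0 := (Real.rpow_pos_of_pos (by norm_num) z).ne'
  have h4 : (4 : ℝ) ^ z = 2 ^ (2 * z) := by
    rw [Real.rpow_mul (by norm_num)]; norm_num
  have hE : (2 : ℝ) ^ (-(4 : ℝ) * z) * ((4 : ℝ) ^ z) ^ 2 = 1 := by
    rw [h4, ← Real.rpow_mul_natCast (by norm_num), ← Real.rpow_add (by norm_num)]
    rw [show -(4 : ℝ) * z + 2 * z * (2 : ℕ) = 0 by push_cast; ring, Real.rpow_zero]
  rw [show 1 / 4 + z + 1 / 2 = 3 / 4 + z by ring, show 2 * (1 / 4 + z) = 1 / 2 + 2 * z by ring,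
    show 1 - (1 / 2 + 2 * z) = 1 / 2 - 2 * z by ring] at hd
  rw [show (1 : ℝ) / 4 + 1 / 2 = 3 / 4 by norm_num, show (2 : ℝ) * (1 / 4) = 1 / 2 by norm_num,
    Real.Gamma_one_half_eq, show (1 : ℝ) - 1 / 2 = 1 / 2 by norm_num] at hd0
  have hpow : (2 : ℝ) ^ (1 / 2 - 2 * z) * (4 : ℝ) ^ z = 2 ^ (1 / 2 : ℝ) := by
    rw [h4, ← Real.rpow_add (by norm_num)]; congr 1; ring
  have key : Real.Gamma (1 / 4 + z) * Real.Gamma (3 / 4 + z) * (4 : ℝ) ^ z * √Real.pi =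
      Real.Gamma (1 / 2 + 2 * z) * (Real.Gamma (1 / 4) * Real.Gamma (3 / 4)) := by
    rw [hd, hd0, ← hpow]; ring
  simp only [quinticTerm, pochG, Real.Gamma_one, div_one, Real.Gamma_one_half_eq]
  generalize Real.Gamma (1 / 4 + z) = A at *
  generalize Real.Gamma (3 / 4 + z) = B at *
  generalize Real.Gamma (1 / 2 + 2 * z) = G at *
  generalize Real.Gamma (1 / 2 + z) = H at *
  generalize Real.Gamma (1 + z) = J at *
  generalize Real.Gamma (1 / 4) = A₀ at *
  generalize Real.Gamma (3 / 4) = B₀ at *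
  generalize (2 : ℝ) ^ (-(4 : ℝ) * z) = E at *
  generalize (4 : ℝ) ^ z = e at *
  generalize √Real.pi = q at *
  calc E * ((H / q) ^ 3 * (A / A₀) * (B / B₀) / J ^ 5) * (e ^ 3 * q ^ 4 * J ^ 5)
      = (E * e ^ 2) * H ^ 3 * (A * B * e * q) / (A₀ * B₀) := by field_simp
    _ = _ := by rw [hE, key]; field_simp

theorem quinticTerm_mul_Gamma {z : ℝ} (h₁ : -1 / 4 < z) (h₂ : z < 1 / 4) (hz : z ≠ 0) :
    32 * z ^ 5 * quinticTerm z * Real.Gamma (1 / 2 - z) ^ 8 * Real.Gamma (1 / 2 - 2 * z) *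
      Real.cos (Real.pi * z) ^ 8 * Real.cos (2 * (Real.pi * z)) * Real.pi ^ 2 =
    Real.sin (2 * (Real.pi * z)) ^ 5 * ((4 : ℝ) ^ z) ^ 2 * Real.Gamma (1 - 2 * z) ^ 5 *
      (Real.pi * √Real.pi) := by
  have hpi := Real.pi_pos
  have hq : √Real.pi ≠ 0 := (Real.sqrt_pos.2 Real.pi_pos).ne'
  have hq2 : √Real.pi ^ 2 = Real.pi := Real.sq_sqrt hpi.le
  have hT := quinticTerm_mul z h₁
  have hC : Real.cos (Real.pi * z) ≠ 0 := (Real.cos_pos_of_mem_Ioo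
    ⟨by nlinarith, by nlinarith⟩).ne'
  have hc : Real.cos (2 * (Real.pi * z)) ≠ 0 := (Real.cos_pos_of_mem_Ioo
    ⟨by nlinarith, by nlinarith⟩).ne'
  have hS : Real.sin (Real.pi * z) ≠ 0 := by
    rcases lt_or_gt_of_ne hz with h | h
    · exact (Real.sin_neg_of_neg_of_neg_pi_lt (by nlinarith) (by nlinarith)).ne
    · exact (Real.sin_pos_of_pos_of_lt_pi (by nlinarith) (by nlinarith)).ne'
  have h12 : Real.Gamma (1 / 2 + z) * Real.Gamma (1 / 2 - z) * Real.cos (Real.pi * z) =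
      Real.pi := by
    have := Real.Gamma_mul_Gamma_one_sub (1 / 2 + z)
    rw [show 1 - (1 / 2 + z) = 1 / 2 - z by ring, mul_add, add_comm (Real.pi * (1 / 2)),
      mul_one_div, Real.sin_add_pi_div_two] at this
    rw [this, div_mul_cancel₀ _ hC]
  have h34 : Real.Gamma (1 / 2 + 2 * z) * Real.Gamma (1 / 2 - 2 * z) *
      Real.cos (2 * (Real.pi * z)) = Real.pi := by
    have := Real.Gamma_mul_Gamma_one_sub (1 / 2 + 2 * z)
    rw [show 1 - (1 / 2 + 2 * z) = 1 / 2 - 2 * z by ring, mul_add, add_comm (Real.pi * (1 / 2)),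
      mul_one_div, Real.sin_add_pi_div_two, show Real.pi * (2 * z) = 2 * (Real.pi * z) by ring] at this
    rw [this, div_mul_cancel₀ _ hc]
  have h67 : Real.Gamma (1 + z) * Real.Gamma (1 - z) * Real.sin (Real.pi * z) = Real.pi * z := by
    have := Real.Gamma_mul_Gamma_one_sub z
    rw [add_comm, Real.Gamma_add_one hz, mul_assoc z, this, mul_assoc, div_mul_cancel₀ _ hS, mul_comm]
  have h26 : Real.Gamma (1 / 2 - z) * Real.Gamma (1 - z) =
      Real.Gamma (1 - 2 * z) * (4 : ℝ) ^ z * √Real.pi := by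
    have := Real.Gamma_mul_Gamma_add_half (1 / 2 - z)
    rw [show 1 / 2 - z + 1 / 2 = 1 - z by ring, show 2 * (1 / 2 - z) = 1 - 2 * z by ring,
      show 1 - (1 - 2 * z) = 2 * z by ring, Real.rpow_mul (by norm_num)] at this
    rw [this]
    norm_num
  have h7 := (Real.Gamma_pos_of_pos (show 0 < 1 + z by linarith)).ne'
  have he : (4 : ℝ) ^ z ≠ 0 := (Real.rpow_pos_of_pos (by norm_num) z).ne'
  rw [Real.sin_two_mul]
  generalize Real.cos (2 * (Real.pi * z)) = c at *
  generalize Real.cos (Real.pi * z) = C at *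
  generalize Real.sin (Real.pi * z) = S at *
  generalize quinticTerm z = T at *
  generalize Real.Gamma (1 / 2 + z) = G₁ at *
  generalize Real.Gamma (1 / 2 - z) = G₂ at *
  generalize Real.Gamma (1 / 2 + 2 * z) = G₃ at *
  generalize Real.Gamma (1 / 2 - 2 * z) = G₄ at *
  generalize Real.Gamma (1 - 2 * z) = G₅ at *
  generalize Real.Gamma (1 - z) = G₆ at *
  generalize Real.Gamma (1 + z) = G₇ at *
  generalize (4 : ℝ) ^ z = e at *
  generalize √Real.pi = q at *
  generalize Real.pi = p at *
  apply mul_right_cancel₀ (b := e ^ 3 * q ^ 4 * G₇ ^ 5) (by positivity)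
  calc _ = 32 * z ^ 5 * (T * (e ^ 3 * q ^ 4 * G₇ ^ 5)) * G₂ ^ 8 * G₄ * C ^ 8 * c * p ^ 2 := by ring
    _ = 32 * z ^ 5 * (G₁ * G₂ * C) ^ 3 * (G₃ * G₄ * c) * G₂ ^ 5 * C ^ 5 * p ^ 2 := by rw [hT]; ring
    _ = 32 * C ^ 5 * p * G₂ ^ 5 * (p * z) ^ 5 := by rw [h12, h34]; ring
    _ = 32 * C ^ 5 * S ^ 5 * p * (G₂ * G₆) ^ 5 * G₇ ^ 5 := by rw [← h67]; ring
    _ = _ := by rw [h26]; ring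

theorem wzAmplitude_eq (x : ℝ) : wzAmplitude x = ((-Real.Gamma (1 / 2 - 2 * x) /
    (((4 : ℝ) ^ x) ^ 2 * Real.Gamma (1 - 2 * x) ^ 5 * (Real.pi * √Real.pi)) : ℝ) : ℂ) := by
  have h1 : (((4 : ℝ) ^ x) ^ 2 : ℝ) = (4 : ℝ) ^ (2 * x) := by
    rw [← Real.rpow_mul_natCast (by norm_num)]; congr 1; push_cast; ring
  rw [h1, ← Real.Gamma_one_half_eq, wzAmplitude]
  push_cast
  rw [← Complex.Gamma_ofReal, ← Complex.Gamma_ofReal, ← Complex.Gamma_ofReal,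
    Complex.ofReal_cpow (by norm_num)]
  push_cast
  rfl

theorem amplitude_mul_Gamma {z : ℝ} (h₂ : z < 1 / 4) :
    Real.Gamma (1 / 2 - 2 * (z - 1)) /
      (((4 : ℝ) ^ (z - 1)) ^ 2 * Real.Gamma (1 - 2 * (z - 1)) ^ 5 * (Real.pi * √Real.pi)) *
      Real.Gamma (1 / 2 - (z - 1)) ^ 8 = wzRatio (z - 1) * (1 / 2 + (z - 1)) ^ 8 *
      (Real.Gamma (1 / 2 - 2 * z) * Real.Gamma (1 / 2 - z) ^ 8 /
        (((4 : ℝ) ^ z) ^ 2 * Real.Gamma (1 - 2 * z) ^ 5 * (Real.pi * √Real.pi))) := by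
  have hq : √Real.pi ≠ 0 := (Real.sqrt_pos.2 Real.pi_pos).ne'
  have hpi := Real.pi_ne_zero
  have he : (4 : ℝ) ^ z ≠ 0 := (Real.rpow_pos_of_pos (by norm_num) z).ne'
  have h5 := (Real.Gamma_pos_of_pos (show 0 < 1 - 2 * z by linarith)).ne'
  have e1 : Real.Gamma (1 / 2 - (z - 1)) = (1 / 2 - z) * Real.Gamma (1 / 2 - z) := by
    rw [← Real.Gamma_add_one (by linarith)]; congr 1; ring
  have e2 : Real.Gamma (1 / 2 - 2 * (z - 1)) =
      (3 / 2 - 2 * z) * ((1 / 2 - 2 * z) * Real.Gamma (1 / 2 - 2 * z)) := by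
    rw [← Real.Gamma_add_one (by linarith), show 1 / 2 - 2 * z + 1 = 3 / 2 - 2 * z by ring,
      ← Real.Gamma_add_one (by linarith)]
    congr 1; ring
  have e3 : Real.Gamma (1 - 2 * (z - 1)) =
      (2 - 2 * z) * ((1 - 2 * z) * Real.Gamma (1 - 2 * z)) := by
    rw [← Real.Gamma_add_one (by linarith), show 1 - 2 * z + 1 = 2 - 2 * z by ring,
      ← Real.Gamma_add_one (by linarith)]
    congr 1; ring
  have e4 : (4 : ℝ) ^ (z - 1) = (4 : ℝ) ^ z / 4 := by
    rw [Real.rpow_sub (by norm_num), Real.rpow_one]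
  rw [e1, e2, e3, e4, wzRatio]
  generalize Real.Gamma (1 / 2 - z) = G₂ at *
  generalize Real.Gamma (1 / 2 - 2 * z) = G₄ at *
  generalize Real.Gamma (1 - 2 * z) = G₅ at *
  generalize (4 : ℝ) ^ z = e at *
  generalize √Real.pi = q at *
  generalize Real.pi = p at *
  obtain ⟨w, hw⟩ : ∃ w, w = 1 / 2 - z := ⟨_, rfl⟩
  obtain ⟨v, hv⟩ : ∃ v, v = 1 - z := ⟨_, rfl⟩
  have hw0 : w ≠ 0 := by linarith
  have hv0 : v ≠ 0 := by linarith
  rw [show 1 / 2 + (z - 1) = -w by linarith, show z - 1 + 1 / 2 = -w by linarith,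
    show z - 1 + 1 / 4 = -(3 / 2 - 2 * z) / 2 by ring,
    show z - 1 + 3 / 4 = -(1 / 2 - 2 * z) / 2 by ring,
    show z - 1 = -v by linarith, show 2 - 2 * z = 2 * v by linarith,
    show 1 - 2 * z = 2 * w by linarith, ← hw]
  generalize 3 / 2 - 2 * z = a
  generalize 1 / 2 - 2 * z = b
  field_simp
  ring

theorem quinticSeries_eq_of_ne_zero {z : ℝ} (h₁ : -1 / 4 < z) (h₂ : z < 1 / 4) (hz : z ≠ 0) :
    1 / 32 * (∑' n : ℕ, quinticTerm (n + z) * (120 * (n + z) ^ 2 + 34 * (n + z) + 3)) =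
      1 / Real.pi ^ 2 * ((8 * Real.cos (Real.pi * z) ^ 4 - 12 * Real.cos (Real.pi * z) ^ 2 + 5) /
        (2 * Real.cos (Real.pi * z) ^ 4 - Real.cos (Real.pi * z) ^ 2)) -
      quinticTerm z * (256 * z ^ 5 / (1 - 2 * z) ^ 4) *
        ∑' n : ℕ, (2 * (n : ℝ) + 1) * pochQuot z n ^ 4 := by
  have hpi := Real.pi_pos
  have hx : -5 / 4 < z - 1 := by linarith
  have hx' : z - 1 < -3 / 4 := by linarith
  have hx1 : z - 1 ≠ -1 := fun h => hz (by linarith)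
  have hC : Real.cos (Real.pi * z) ≠ 0 := (Real.cos_pos_of_mem_Ioo
    ⟨by nlinarith, by nlinarith⟩).ne'
  have hc : Real.cos (2 * (Real.pi * z)) ≠ 0 := (Real.cos_pos_of_mem_Ioo
    ⟨by nlinarith, by nlinarith⟩).ne'
  have hs : Real.sin (2 * (Real.pi * z)) ≠ 0 := by
    rcases lt_or_gt_of_ne hz with h | h
    · exact (Real.sin_neg_of_neg_of_neg_pi_lt (by nlinarith) (by nlinarith)).ne
    · exact (Real.sin_pos_of_pos_of_lt_pi (by nlinarith) (by nlinarith)).ne'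
  have hP := wzPeriodic_zero hx hx' hx1
  rw [wzPeriodic_zero_eq hx hx' hx1, wzAmplitude_eq] at hP
  norm_cast at hP
  have e1 : Real.cos (Real.pi * (z - 1)) ^ 4 = Real.cos (Real.pi * z) ^ 4 := by
    rw [mul_sub, mul_one, Real.cos_sub_pi, Even.neg_pow (by decide)]
  rw [e1, show 2 * Real.pi * (z - 1) = 2 * (Real.pi * z) - 2 * Real.pi by ring,
    Real.cos_sub_two_pi, Real.sin_sub_two_pi, sub_add_cancel] at hP
  have hA := amplitude_mul_Gamma h₂
  have hT := quinticTerm_mul_Gamma h₁ h₂ hz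
  have hT0 := (quinticTerm_pos h₁).ne'
  have hg := (Real.Gamma_pos_of_pos (show 0 < 1 / 2 - (z - 1) by linarith)).ne'
  have hD : ((4 : ℝ) ^ z) ^ 2 * Real.Gamma (1 - 2 * z) ^ 5 * (Real.pi * √Real.pi) ≠ 0 := by
    have := Real.Gamma_pos_of_pos (show 0 < 1 - 2 * z by linarith)
    positivity
  have hr : wzRatio (z - 1) ≠ 0 := by
    rw [wzRatio]
    exact div_ne_zero (mul_ne_zero (by linarith) (by linarith)) (mul_ne_zero
      (mul_ne_zero (by norm_num) (pow_ne_zero 5 (by linarith))) (pow_ne_zero 5 (by linarith)))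
  have hc2 := Real.cos_two_mul (Real.pi * z)
  have hcs := Real.sin_sq_add_cos_sq (2 * (Real.pi * z))
  have hw : 1 / 2 + (z - 1) ≠ 0 := by linarith
  have hw2 : 1 - 2 * z = -(2 * (1 / 2 + (z - 1))) := by ring
  rw [neg_div, neg_neg] at hP
  simp only [Nat.cast_add, Nat.cast_mul, Nat.cast_ofNat, Nat.cast_one] at hP
  rw [mul_assoc (_ ^ 5) _ (_ ^ 5), mul_assoc (_ ^ 5) _ (Real.pi * _)] at hT
  rw [hw2]
  generalize (∑' n : ℕ, quinticTerm (n + z) * (120 * (n + z) ^ 2 + 34 * (n + z) + 3)) = U at *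
  generalize (∑' n : ℕ, (2 * (n : ℝ) + 1) * pochQuot z n ^ 4) = V at *
  generalize Real.cos (2 * (Real.pi * z)) = c at *
  generalize Real.sin (2 * (Real.pi * z)) = s at *
  generalize Real.cos (Real.pi * z) = C at *
  generalize quinticTerm z = T at *
  generalize wzRatio (z - 1) = r at *
  generalize 1 / 2 + (z - 1) = w at *
  generalize Real.Gamma (1 / 2 - (z - 1)) = g at *
  generalize Real.Gamma (1 / 2 - 2 * z) = G₄ at *
  generalize Real.Gamma (1 / 2 - z) = G₂ at *
  generalize ((4 : ℝ) ^ z) ^ 2 * Real.Gamma (1 - 2 * z) ^ 5 * (Real.pi * √Real.pi) = D at *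
  generalize Real.Gamma (1 / 2 - 2 * (z - 1)) / (((4 : ℝ) ^ (z - 1)) ^ 2 *
    Real.Gamma (1 - 2 * (z - 1)) ^ 5 * (Real.pi * √Real.pi)) = A at *
  generalize Real.pi = p at *
  have hB : 32 * z ^ 5 * T * (G₄ * G₂ ^ 8 / D) * C ^ 8 * c * p ^ 2 = s ^ 5 := by
    field_simp
    linear_combination hT
  generalize G₄ * G₂ ^ 8 / D = B at *
  have hQ : 1 + c * (c ^ 2 - s ^ 2) = 2 * C ^ 2 * (8 * C ^ 4 - 12 * C ^ 2 + 5) := by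
    rw [show s ^ 2 = 1 - c ^ 2 by linarith, hc2]
    ring
  have hK : (V + w ^ 4 / (512 * z ^ 5 * T) * U) * s ^ 5 =
      w ^ 4 * B * C ^ 4 * (1 + c * (c ^ 2 - s ^ 2)) := by
    apply mul_left_cancel₀ (a := r * w ^ 4) (by positivity)
    calc _ = g ^ 8 * ((g ^ 2)⁻¹ ^ 4 * (r * w ^ 4 * V + r * w ^ 8 / (512 * z ^ 5 * T) * U) *
          s ^ 5) := by field_simp
      _ = (A * g ^ 8) * C ^ 4 * (1 + c * (c ^ 2 - s ^ 2)) := by rw [hP]; ring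
      _ = _ := by rw [hA]; ring
  rw [hQ] at hK
  have hM : (512 * z ^ 5 * T * V + w ^ 4 * U) * (C ^ 2 * c * p ^ 2) =
      32 * w ^ 4 * (8 * C ^ 4 - 12 * C ^ 2 + 5) := by
    apply mul_left_cancel₀ (a := s ^ 5 * C ^ 2) (by positivity)
    calc _ = 512 * z ^ 5 * T * ((V + w ^ 4 / (512 * z ^ 5 * T) * U) * s ^ 5) *
          (C ^ 4 * c * p ^ 2) := by field_simp
      _ = 16 * w ^ 4 * (2 * C ^ 2 * (8 * C ^ 4 - 12 * C ^ 2 + 5)) *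
          (32 * z ^ 5 * T * B * C ^ 8 * c * p ^ 2) := by rw [hK]; ring
      _ = _ := by rw [hB]; ring
  rw [show 2 * C ^ 4 - C ^ 2 = C ^ 2 * c by rw [hc2]; ring,
    show (-(2 * w)) ^ 4 = 16 * w ^ 4 by ring]
  field_simp
  linear_combination 16 * hM

theorem quinticTerm_natCast_add_le {z : ℝ} (h₁ : -1 / 4 < z) (n : ℕ) :
    quinticTerm (n + z) ≤ quinticTerm z * (1 / 16) ^ n := by
  induction n with
  | zero => simp
  | succ n ih =>
    have ht : -1 / 4 < (n : ℝ) + z := by linarith [n.cast_nonneg (α := ℝ)]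
    have h := quinticTerm_add_one ht
    have h0 := quinticTerm_pos ht
    rw [show ((n + 1 : ℕ) : ℝ) + z = n + z + 1 by push_cast; ring, pow_succ]
    generalize (n : ℝ) + z = t at *
    have hb : (t + 1 / 2) ^ 3 * (t + 1 / 4) * (t + 3 / 4) ≤ (t + 1) ^ 5 := by
      have : 0 < t + 1 / 4 := by linarith
      have : 0 < t + 1 := by linarith
      calc _ ≤ (t + 1) ^ 3 * (t + 1) * (t + 1) := by gcongr <;> first | positivity | linarith
        _ = _ := by ring
    have h5 : 0 < (t + 1) ^ 5 := by
      have : 0 < t + 1 := by linarith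
      positivity
    have : quinticTerm (t + 1) * 16 ≤ quinticTerm t := by
      refine le_of_mul_le_mul_right ?_ h5
      nlinarith [mul_le_mul_of_nonneg_left hb h0.le]
    linarith

theorem abs_quinticSeries_term_le {z : ℝ} (h₁ : -1 / 4 < z) (h₂ : z < 1 / 4) (n : ℕ) :
    |quinticTerm (n + z) * (120 * (n + z) ^ 2 + 34 * (n + z) + 3)| ≤
      quinticTerm z * (157 * (((n : ℝ) + 1) ^ 2 * (1 / 16) ^ n)) := by
  have hn := n.cast_nonneg (α := ℝ)
  have h0 := quinticTerm_pos (show -1 / 4 < (n : ℝ) + z by linarith)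
  rw [abs_mul, abs_of_pos h0]
  have hp : |120 * ((n : ℝ) + z) ^ 2 + 34 * (n + z) + 3| ≤ 157 * ((n : ℝ) + 1) ^ 2 := by
    rw [abs_le]
    constructor <;> nlinarith [sq_nonneg ((n : ℝ) + z)]
  calc _ ≤ quinticTerm z * (1 / 16) ^ n * (157 * ((n : ℝ) + 1) ^ 2) :=
        mul_le_mul (quinticTerm_natCast_add_le h₁ n) hp (abs_nonneg _)
          (mul_nonneg (quinticTerm_pos h₁).le (by positivity))
    _ = _ := by ring

theorem summable_succ_sq_mul_geometric :
    Summable fun n : ℕ => 157 * (((n : ℝ) + 1) ^ 2 * (1 / 16 : ℝ) ^ n) := by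
  have h : ∀ k : ℕ, Summable fun n : ℕ => (n : ℝ) ^ k * (1 / 16 : ℝ) ^ n := fun k =>
    summable_pow_mul_geometric_of_norm_lt_one k (by norm_num)
  refine (((h 2).add ((h 1).mul_left 2)).add (h 0)).mul_left 157 |>.congr fun n => ?_
  ring

theorem summable_quinticSeries {z : ℝ} (h₁ : -1 / 4 < z) (h₂ : z < 1 / 4) :
    Summable fun n : ℕ => quinticTerm (n + z) * (120 * (n + z) ^ 2 + 34 * (n + z) + 3) :=
  Summable.of_norm_bounded (summable_succ_sq_mul_geometric.mul_left (quinticTerm z))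
    fun n => abs_quinticSeries_term_le h₁ h₂ n

theorem continuousAt_quinticTerm {t : ℝ} (ht : -1 / 4 < t) : ContinuousAt quinticTerm t := by
  have hG : ∀ a : ℝ, 1 / 4 ≤ a → ContinuousAt (pochG a) t := fun a ha => by
    have h1 : ContinuousAt Real.Gamma (a + t) := (Real.differentiableAt_Gamma fun m h => by
      linarith [m.cast_nonneg (α := ℝ)]).continuousAt
    have h2 : ContinuousAt (fun s : ℝ => Real.Gamma (a + s)) t :=
      ContinuousAt.comp (f := fun s : ℝ => a + s) h1 (by fun_prop)
    exact h2.div_const _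
  have hE : ContinuousAt (fun s : ℝ => (2 : ℝ) ^ (-(4 : ℝ) * s)) t :=
    ContinuousAt.rpow (by fun_prop) (by fun_prop) (Or.inl (by norm_num))
  exact hE.mul (((((hG _ (by norm_num)).pow 3).mul (hG _ (by norm_num))).mul
    (hG _ (by norm_num))).div ((hG 1 (by norm_num)).pow 5)
    (pow_ne_zero 5 (pochG_pos one_pos (by linarith)).ne'))

theorem tendsto_quinticSeries_zero :
    Tendsto (fun z : ℝ => ∑' n : ℕ, quinticTerm (n + z) * (120 * (n + z) ^ 2 + 34 * (n + z) + 3))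
      (𝓝 0) (𝓝 (∑' n : ℕ, quinticTerm (n + 0) * (120 * ((n : ℝ) + 0) ^ 2 + 34 * (n + 0) + 3))) := by
  refine tendsto_tsum_of_dominated_convergence
    (summable_succ_sq_mul_geometric.mul_left (quinticTerm 0 + 1)) (fun n => ?_) ?_
  · have h := continuousAt_quinticTerm (t := n + 0) (by linarith [n.cast_nonneg (α := ℝ)])
    have h2 : ContinuousAt (fun s : ℝ => quinticTerm (n + s)) 0 :=
      ContinuousAt.comp (f := fun s : ℝ => (n : ℝ) + s) h (by fun_prop)
    have h3 : ContinuousAt (fun s : ℝ => 120 * ((n : ℝ) + s) ^ 2 + 34 * (n + s) + 3) 0 := by fun_prop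
    exact h2.mul h3
  · filter_upwards [Ioo_mem_nhds (show (-1 / 4 : ℝ) < 0 by norm_num) (show (0 : ℝ) < 1 / 4 by norm_num),
      (continuousAt_quinticTerm (by norm_num)).eventually_lt_const (lt_add_one (quinticTerm 0))]
      with z hz hT n
    exact (abs_quinticSeries_term_le hz.1 hz.2 n).trans
      (mul_le_mul_of_nonneg_right hT.le (by positivity))

theorem pochQuot_nonneg {x : ℝ} (h₁ : -1 / 4 < x) (h₂ : x < 1 / 4) (n : ℕ) : 0 ≤ pochQuot x n :=
  div_nonneg (pochR_pos (by linarith) n).le (pochR_pos (by linarith) n).le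

theorem pochQuot_mono {x y : ℝ} (h₁ : -1 / 4 < x) (hxy : x ≤ y) (h₂ : y < 1 / 4) (n : ℕ) :
    pochQuot x n ≤ pochQuot y n :=
  div_le_div₀ (pochR_pos (by linarith) n).le
    (Finset.prod_le_prod (fun j _ => by linarith [j.cast_nonneg (α := ℝ)]) fun j _ => by linarith)
    (pochR_pos (by linarith) n)
    (Finset.prod_le_prod (fun j _ => by linarith [j.cast_nonneg (α := ℝ)]) fun j _ => by linarith)

theorem summable_pochQuot_pow_four {x : ℝ} (h₁ : -1 / 4 < x) (h₂ : x < 1 / 4) :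
    Summable fun n : ℕ => (2 * (n : ℝ) + 1) * pochQuot x n ^ 4 :=
  summable_pochQuot h₂ (Real.Gamma_pos_of_pos (by linarith)).ne'

theorem tendsto_pow_mul_wellPoised_zero :
    Tendsto (fun z : ℝ => quinticTerm z * (256 * z ^ 5 / (1 - 2 * z) ^ 4) *
      ∑' n : ℕ, (2 * (n : ℝ) + 1) * pochQuot z n ^ 4) (𝓝 0) (𝓝 0) := by
  have h1 : Tendsto (fun z : ℝ => quinticTerm z * (256 * z ^ 5 / (1 - 2 * z) ^ 4)) (𝓝 0) (𝓝 0) := by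
    have h : ContinuousAt (fun z : ℝ => quinticTerm z * (256 * z ^ 5 / (1 - 2 * z) ^ 4)) 0 :=
      (continuousAt_quinticTerm (by norm_num)).mul
        (ContinuousAt.div (by fun_prop) (by fun_prop) (by norm_num))
    simpa [ContinuousAt] using h
  refine h1.zero_mul_isBoundedUnder_le ⟨∑' n : ℕ, (2 * (n : ℝ) + 1) * pochQuot (1 / 8) n ^ 4, ?_⟩
  rw [eventually_map]
  filter_upwards [Ioo_mem_nhds (show (-1 / 4 : ℝ) < 0 by norm_num)
    (show (0 : ℝ) < 1 / 8 by norm_num)] with z hz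
  have hn := pochQuot_nonneg hz.1 (by linarith [hz.2])
  have hm := pochQuot_mono hz.1 hz.2.le (by norm_num)
  rw [Function.comp_apply, Real.norm_of_nonneg (tsum_nonneg fun n => by have := hn n; positivity)]
  refine Summable.tsum_le_tsum (fun n => ?_) (summable_pochQuot_pow_four hz.1 (by linarith [hz.2]))
    (summable_pochQuot_pow_four (by norm_num) (by norm_num))
  have := hn n
  have := hm n
  gcongr

theorem quinticSeries_eq {z : ℝ} (h₁ : -1 / 4 < z) (h₂ : z < 1 / 4) :
    1 / 32 * (∑' n : ℕ, quinticTerm (n + z) * (120 * (n + z) ^ 2 + 34 * (n + z) + 3)) =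
      1 / Real.pi ^ 2 * ((8 * Real.cos (Real.pi * z) ^ 4 - 12 * Real.cos (Real.pi * z) ^ 2 + 5) /
        (2 * Real.cos (Real.pi * z) ^ 4 - Real.cos (Real.pi * z) ^ 2)) -
      quinticTerm z * (256 * z ^ 5 / (1 - 2 * z) ^ 4) *
        ∑' n : ℕ, (2 * (n : ℝ) + 1) * pochQuot z n ^ 4 := by
  rcases ne_or_eq z 0 with hz | rfl
  · exact quinticSeries_eq_of_ne_zero h₁ h₂ hz
  have hcos : ContinuousAt (fun z : ℝ => 1 / Real.pi ^ 2 *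
      ((8 * Real.cos (Real.pi * z) ^ 4 - 12 * Real.cos (Real.pi * z) ^ 2 + 5) /
        (2 * Real.cos (Real.pi * z) ^ 4 - Real.cos (Real.pi * z) ^ 2))) 0 :=
    continuousAt_const.mul (ContinuousAt.div (by fun_prop) (by fun_prop) (by norm_num))
  have hR := (hcos.tendsto.sub tendsto_pow_mul_wellPoised_zero).mono_left
    (nhdsWithin_le_nhds (s := {0}ᶜ))
  have hL := (tendsto_quinticSeries_zero.const_mul (1 / 32)).mono_left
    (nhdsWithin_le_nhds (s := {0}ᶜ))
  have := tendsto_nhds_unique (hL.congr' ?_) hR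
  · rw [this]; norm_num
  filter_upwards [self_mem_nhdsWithin, nhdsWithin_le_nhds (Ioo_mem_nhds h₁ h₂)] with z hz hz'
  exact quinticSeries_eq_of_ne_zero hz'.1 hz'.2 hz

end

/-- For `-1/4 < x < 1/4`,
`(1/32) ∑_{n≥0} 2^{-4(n+x)} (1/2)_{n+x}³(1/4)_{n+x}(3/4)_{n+x}/(1)_{n+x}⁵ (120(n+x)²+34(n+x)+3)
 = (1/π²)(8cos⁴πx - 12cos²πx + 5)/(2cos⁴πx - cos²πx)
   - 16^{-x} (1/2)_x³(1/4)_x(3/4)_x/(1)_x⁵ · 256x⁵/(1-2x)⁴ ·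
     ∑_{n≥0} (2n+1) ((1/2+x)_n/(3/2-x)_n)⁴`. -/
theorem identity_pi2_1 (x : ℝ) (hx1 : -1/4 < x) (hx2 : x < 1/4) :
    Summable (fun n : ℕ =>
      (2 : ℝ) ^ (-(4 : ℝ) * ((n : ℝ) + x)) *
        (pochG (1/2) ((n : ℝ) + x) ^ 3 * pochG (1/4) ((n : ℝ) + x) *
          pochG (3/4) ((n : ℝ) + x) / pochG 1 ((n : ℝ) + x) ^ 5) *
        (120 * ((n : ℝ) + x) ^ 2 + 34 * ((n : ℝ) + x) + 3)) ∧
    Summable (fun n : ℕ =>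
      (2 * (n : ℝ) + 1) * (pochR (1/2 + x) n / pochR (3/2 - x) n) ^ 4) ∧
    (1/32 : ℝ) * (∑' n : ℕ,
        (2 : ℝ) ^ (-(4 : ℝ) * ((n : ℝ) + x)) *
          (pochG (1/2) ((n : ℝ) + x) ^ 3 * pochG (1/4) ((n : ℝ) + x) *
            pochG (3/4) ((n : ℝ) + x) / pochG 1 ((n : ℝ) + x) ^ 5) *
          (120 * ((n : ℝ) + x) ^ 2 + 34 * ((n : ℝ) + x) + 3))
      = (1 / Real.pi ^ 2) *
          ((8 * Real.cos (Real.pi * x) ^ 4 - 12 * Real.cos (Real.pi * x) ^ 2 + 5) /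
            (2 * Real.cos (Real.pi * x) ^ 4 - Real.cos (Real.pi * x) ^ 2)) -
        (16 : ℝ) ^ (-x) *
          (pochG (1/2) x ^ 3 * pochG (1/4) x * pochG (3/4) x / pochG 1 x ^ 5) *
          (256 * x ^ 5 / (1 - 2 * x) ^ 4) *
          ∑' n : ℕ,
            (2 * (n : ℝ) + 1) * (pochR (1/2 + x) n / pochR (3/2 - x) n) ^ 4 := by
  have hq : (16 : ℝ) ^ (-x) *
      (pochG (1/2) x ^ 3 * pochG (1/4) x * pochG (3/4) x / pochG 1 x ^ 5) = quinticTerm x := by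
    rw [quinticTerm, neg_mul_comm, Real.rpow_mul (by norm_num)]
    norm_num
  rw [hq]
  exact ⟨summable_quinticSeries hx1 hx2, summable_pochQuot_pow_four hx1 hx2,
    quinticSeries_eq hx1 hx2⟩
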